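/- arXiv:2410.07098 — 4 statements merged into one kernel-verified Lean document; each statement's English description precedes it below -/
import Mathlib

section
/- Let k ≥ 1 and let N be a positive integer with the following Ramsey property: for every red-blue coloring of all pairs of a linearly ordered N-element set there exist k elements such that the coloring induced on those k elements (with the inherited order) is admissible. Then for every η > 0 there exists c > 0 such that for all sufficiently large n the following holds: if G is an ordered graph on n vertices containing no induced monotone path P_{2k}, and the complement Ḡ contains at least η·n^N copies of K_N, then Ḡ contains K_2[t] with t = ⌈c·n/log n⌉. -/
/-- The number of `r`-element vertex subsets of `G` inducing a complete subgraph
(copies of `K_r`). -/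
noncomputable def cliqueCount {V : Type*} [Fintype V] (G : SimpleGraph V) (r : ℕ) : ℕ :=
  Set.ncard {s : Finset V | s.card = r ∧ G.IsClique (s : Set V)}

/-- `G` contains `K_r[t]`: `r` pairwise disjoint vertex sets of size `t` with all
pairs of vertices from distinct sets adjacent. -/
def ContainsBlowup {V : Type*} (G : SimpleGraph V) (r t : ℕ) : Prop :=
  ∃ A : Fin r → Finset V,
    (∀ i, (A i).card = t) ∧
    (∀ i j, i ≠ j → Disjoint (A i) (A j)) ∧
    (∀ i j, i ≠ j → ∀ x ∈ A i, ∀ y ∈ A j, G.Adj x y)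

/-- The ordered graph `G` on `Fin n` contains an induced monotone path with `m`
vertices: `v 0 < v 1 < ⋯ < v (m-1)` with adjacency exactly between consecutive
vertices. -/
def HasIndMonPath {n : ℕ} (G : SimpleGraph (Fin n)) (m : ℕ) : Prop :=
  ∃ v : Fin m → Fin n, StrictMono v ∧
    ∀ i j : Fin m, G.Adj (v i) (v j) ↔ ((i : ℕ) + 1 = (j : ℕ) ∨ (j : ℕ) + 1 = (i : ℕ))

/-- The color of the pair `{x, y}` under `χ`, where `χ i j` is only meaningful
for `i < j` (`true` = red, `false` = blue). -/
def colorOf {k : ℕ} (χ : Fin k → Fin k → Bool) (x y : Fin k) : Bool :=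
  if x < y then χ x y else χ y x

/-- `(a, b)` is a directed edge of the dependency digraph `D(χ)`: there are
consecutive vertices `i, i+1` with `b ∈ {i, i+1}`, `a ∉ {i, i+1}`,
`χ(i, i+1)` red, and both pairs `{i, a}`, `{i+1, a}` blue. -/
def DepEdge {k : ℕ} (χ : Fin k → Fin k → Bool) (a b : Fin k) : Prop :=
  ∃ i i' : Fin k, (i : ℕ) + 1 = (i' : ℕ) ∧ (b = i ∨ b = i') ∧ a ≠ i ∧ a ≠ i' ∧
    χ i i' = true ∧ colorOf χ i a = false ∧ colorOf χ i' a = false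

/-- `χ` is admissible: its dependency digraph has no directed cycle. -/
def Admissible {k : ℕ} (χ : Fin k → Fin k → Bool) : Prop :=
  ∀ a : Fin k, ¬ Relation.TransGen (DepEdge χ) a a

section Sparse

open Finset
open scoped Classical

variable {V : Type*} [LinearOrder V]

/-- Any two disjoint vertex sets of size at least `t` span an edge between them. -/
def NoHole (G : SimpleGraph V) (t : ℕ) : Prop :=
  ∀ A B : Finset V, Disjoint A B → t ≤ #A → t ≤ #B → ∃ a ∈ A, ∃ b ∈ B, G.Adj a b

/-- The first `m` values of `v` form an induced monotone path. -/
def IsIndPath (G : SimpleGraph V) (m : ℕ) (v : ℕ → V) : Prop :=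
  ∀ i j, i < j → j < m → v i < v j ∧ (G.Adj (v i) (v j) ↔ j = i + 1)

lemma IsIndPath.mono {G : SimpleGraph V} {m m' : ℕ} {v : ℕ → V} (h : IsIndPath G m v)
    (hm : m' ≤ m) : IsIndPath G m' v :=
  fun i j hij hj => h i j hij (hj.trans_le hm)

lemma exists_initial_segment (D : Finset V) (a : ℕ) (h : a ≤ #D) :
    ∃ D₁ ⊆ D, #D₁ = a ∧ ∀ x ∈ D₁, ∀ y ∈ D \ D₁, x < y := by
  induction a with
  | zero => exact ⟨∅, by simp, by simp, by simp⟩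
  | succ a ih =>
    obtain ⟨D₁, hD, hc, hlt⟩ := ih (by omega)
    have hne : (D \ D₁).Nonempty := by
      rw [← card_pos, card_sdiff_of_subset hD]; omega
    have hmem := min'_mem _ hne
    refine ⟨insert ((D \ D₁).min' hne) D₁, ?_, ?_, ?_⟩
    · exact insert_subset (mem_sdiff.1 hmem).1 hD
    · rw [card_insert_of_notMem (mem_sdiff.1 hmem).2, hc]
    · intro x hx y hy
      have hy' : y ∈ D \ D₁ := by
        simp only [mem_sdiff, mem_insert, not_or] at hy ⊢
        exact ⟨hy.1, hy.2.2⟩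
      rcases mem_insert.1 hx with rfl | hx
      · refine lt_of_le_of_ne (min'_le _ _ hy') ?_
        rintro rfl
        simp at hy
      · exact hlt x hx y hy'

/-- Vertices reachable from `T` by a monotone path with fewer than `r` edges whose vertices
after the first one lie in `D`. -/
noncomputable def ball (G : SimpleGraph V) (T D : Finset V) : ℕ → Finset V
  | 0 => ∅
  | r + 1 => (T ∪ ball G T D r) ∪ D.filter fun y => ∃ u ∈ ball G T D r, u < y ∧ G.Adj u y

lemma mem_ball_succ {G : SimpleGraph V} {T D : Finset V} {r : ℕ} {y : V} :
    y ∈ ball G T D (r + 1) ↔ y ∈ T ∨ y ∈ ball G T D r ∨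
      y ∈ D ∧ ∃ u ∈ ball G T D r, u < y ∧ G.Adj u y := by
  simp [ball]

lemma ball_subset_succ (G : SimpleGraph V) (T D : Finset V) (r : ℕ) :
    ball G T D r ⊆ ball G T D (r + 1) :=
  fun _ hy => mem_ball_succ.2 (Or.inr (Or.inl hy))

lemma ball_mono_right (G : SimpleGraph V) (T : Finset V) {D D' : Finset V} (h : D ⊆ D') (r : ℕ) :
    ball G T D r ⊆ ball G T D' r := by
  induction r with
  | zero => simp [ball]
  | succ r ih =>
    intro y hy
    rw [mem_ball_succ] at hy ⊢
    rcases hy with hy | hy | ⟨hy, u, hu, hh⟩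
    · exact Or.inl hy
    · exact Or.inr (Or.inl (ih hy))
    · exact Or.inr (Or.inr ⟨h hy, u, ih hu, hh⟩)

lemma ball_subset (G : SimpleGraph V) (T D : Finset V) (r : ℕ) : ball G T D r ⊆ T ∪ D := by
  induction r with
  | zero => simp [ball]
  | succ r ih =>
    intro y hy
    rw [mem_ball_succ] at hy
    rcases hy with hy | hy | hy
    · exact mem_union_left _ hy
    · exact ih hy
    · exact mem_union_right _ hy.1

lemma ball_union (G : SimpleGraph V) (T T' D : Finset V) (r : ℕ) :
    ball G (T ∪ T') D r = ball G T D r ∪ ball G T' D r := by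
  induction r with
  | zero => simp [ball]
  | succ r ih =>
    ext y
    simp only [mem_ball_succ, ih, mem_union]
    constructor
    · rintro ((h | h) | (h | h) | ⟨h, u, hu | hu, hh⟩)
      · exact Or.inl (Or.inl h)
      · exact Or.inr (Or.inl h)
      · exact Or.inl (Or.inr (Or.inl h))
      · exact Or.inr (Or.inr (Or.inl h))
      · exact Or.inl (Or.inr (Or.inr ⟨h, u, hu, hh⟩))
      · exact Or.inr (Or.inr (Or.inr ⟨h, u, hu, hh⟩))
    · rintro ((h | h | ⟨h, u, hu, hh⟩) | (h | h | ⟨h, u, hu, hh⟩))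
      · exact Or.inl (Or.inl h)
      · exact Or.inr (Or.inl (Or.inl h))
      · exact Or.inr (Or.inr ⟨h, u, Or.inl hu, hh⟩)
      · exact Or.inl (Or.inr h)
      · exact Or.inr (Or.inl (Or.inr h))
      · exact Or.inr (Or.inr ⟨h, u, Or.inr hu, hh⟩)

lemma ball_subset_ball_of_adj {G : SimpleGraph V} {D : Finset V} {p x : V} (hx : x ∈ D)
    (hpx : p < x) (h : G.Adj p x) (r : ℕ) : ball G {x} D r ⊆ ball G {p} D (r + 1) := by
  induction r with
  | zero => simp [ball]
  | succ r ih =>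
    intro y hy
    rcases mem_ball_succ.1 hy with hy | hy | ⟨hy, u, hu, hh⟩
    · rw [mem_singleton] at hy
      subst hy
      exact mem_ball_succ.2 (Or.inr (Or.inr
        ⟨hx, p, mem_ball_succ.2 (Or.inl (mem_singleton_self p)), hpx, h⟩))
    · exact ball_subset_succ _ _ _ _ (ih hy)
    · exact mem_ball_succ.2 (Or.inr (Or.inr ⟨hy, u, ih hu, hh⟩))

lemma NoHole.card_lt {G : SimpleGraph V} {t : ℕ} (hG : NoHole G t) {A B : Finset V}
    (hd : Disjoint A B) (hA : t ≤ #A) : #(B.filter fun b => ∀ a ∈ A, ¬ G.Adj a b) < t := by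
  by_contra! h
  obtain ⟨a, ha, b, hb, hab⟩ := hG A _ (hd.mono_right (filter_subset _ _)) hA h
  exact (mem_filter.1 hb).2 a ha hab

/-- Halving: a set of `2 ^ (L - i)` vertices reaching at least `2 ^ L` vertices. -/
lemma NoHole.exists_expanding_set {G : SimpleGraph V} {L : ℕ} (hG : NoHole G (2 ^ L)) (i : ℕ)
    (hi : i ≤ L) (D : Finset V) (hD : 2 ^ L * (3 * i + 1) ≤ #D) :
    ∃ T ⊆ D, #T = 2 ^ (L - i) ∧ ∃ r, 2 ^ L ≤ #(ball G T D r) := by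
  induction i generalizing D with
  | zero =>
    obtain ⟨T, hT, hc⟩ := exists_subset_card_eq (s := D) (n := 2 ^ L) (by omega)
    refine ⟨T, hT, by simpa using hc, 1, ?_⟩
    rw [← hc]
    exact card_le_card fun y hy => mem_ball_succ.2 (Or.inl hy)
  | succ i ih =>
    obtain ⟨D₁, hD₁, hc₁, hlt⟩ := exists_initial_segment D (2 ^ L * (3 * i + 1)) (by nlinarith)
    obtain ⟨T, hT, hcT, r, hr⟩ := ih (by omega) D₁ hc₁.ge
    have hsub : ball G T D₁ r ⊆ D₁ := (ball_subset G T D₁ r).trans (union_subset hT subset_rfl)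
    have hcE : 3 * 2 ^ L ≤ #(D \ D₁) := by
      rw [card_sdiff_of_subset hD₁, hc₁]
      have : 2 ^ L * (3 * (i + 1) + 1) = 2 ^ L * (3 * i + 1) + 3 * 2 ^ L := by ring
      omega
    have hsmall := hG.card_lt (B := D \ D₁) (disjoint_sdiff.mono_left hsub) hr
    have hbig : 2 * 2 ^ L ≤ #((D \ D₁).filter fun b => ¬ ∀ a ∈ ball G T D₁ r, ¬ G.Adj a b) := by
      have := card_filter_add_card_filter_not (s := D \ D₁)
        (fun b => ∀ a ∈ ball G T D₁ r, ¬ G.Adj a b)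
      omega
    have hpow : 2 ^ (L - i) = 2 ^ (L - (i + 1)) + 2 ^ (L - (i + 1)) := by
      rw [show L - i = (L - (i + 1)) + 1 by omega, pow_succ]; ring
    obtain ⟨T₁, hT₁, hcT₁⟩ := exists_subset_card_eq (s := T) (n := 2 ^ (L - (i + 1))) (by omega)
    have hcT₂ : #(T \ T₁) = 2 ^ (L - (i + 1)) := by
      rw [card_sdiff_of_subset hT₁]; omega
    have hcov : ((D \ D₁).filter fun b => ¬ ∀ a ∈ ball G T D₁ r, ¬ G.Adj a b) ⊆
        ball G T₁ D (r + 1) ∪ ball G (T \ T₁) D (r + 1) := by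
      intro b hb
      rw [← ball_union, union_sdiff_of_subset hT₁]
      simp only [mem_filter, not_forall, not_not] at hb
      obtain ⟨hb, a, ha, hab⟩ := hb
      exact mem_ball_succ.2 (Or.inr (Or.inr ⟨(mem_sdiff.1 hb).1, a,
        ball_mono_right G T hD₁ r ha, hlt a (hsub ha) b hb, hab⟩))
    have hcard := (card_le_card hcov).trans (card_union_le _ _)
    rcases le_or_gt (2 ^ L) #(ball G T₁ D (r + 1)) with h | h
    · exact ⟨T₁, hT₁.trans (hT.trans hD₁), hcT₁, r + 1, h⟩
    · exact ⟨T \ T₁, sdiff_subset.trans (hT.trans hD₁), hcT₂, r + 1, by omega⟩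

lemma NoHole.exists_expanding_vertex {G : SimpleGraph V} {L : ℕ} (hG : NoHole G (2 ^ L))
    (D : Finset V) (hD : 2 ^ L * (3 * L + 1) ≤ #D) :
    ∃ x ∈ D, ∃ r, 2 ^ L ≤ #(ball G {x} D r) := by
  obtain ⟨T, hT, hc, r, hr⟩ := hG.exists_expanding_set L le_rfl D hD
  rw [Nat.sub_self, pow_zero, card_eq_one] at hc
  obtain ⟨x, rfl⟩ := hc
  exact ⟨x, singleton_subset_iff.1 hT, r, hr⟩

lemma IsIndPath.exists_extend {G : SimpleGraph V} {m : ℕ} {v : ℕ → V} {D : Finset V}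
    (hv : IsIndPath G (m + 1) v) (hD : ∀ i < m, ∀ y ∈ D, ¬ G.Adj (v i) y) (r : ℕ) :
    ∀ y ∈ ball G {v m} D (r + 1), y ∉ ball G {v m} D r →
      ∃ w : ℕ → V, IsIndPath G (m + r + 1) w ∧ w (m + r) = y ∧
        (∀ i < m + r, (∃ j < m, w i = v j) ∨ w i ∈ ball G {v m} D r) := by
  induction r with
  | zero =>
    intro y hy _
    have hy' : y = v m := by simpa [ball] using hy
    exact ⟨v, hv, hy'.symm, fun i hi => Or.inl ⟨i, hi, rfl⟩⟩
  | succ r ih =>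
    intro y hy hy'
    rcases mem_ball_succ.1 hy with h | h | ⟨hyD, u, hu, huy, hadj⟩
    · exact absurd (mem_ball_succ.2 (Or.inl h)) hy'
    · exact absurd h hy'
    have hu' : u ∉ ball G {v m} D r := fun h =>
      hy' (mem_ball_succ.2 (Or.inr (Or.inr ⟨hyD, u, h, huy, hadj⟩)))
    obtain ⟨w, hw, hwu, hwi⟩ := ih u hu hu'
    have hlt : ∀ i < m + r + 1, w i < y := by
      intro i hi
      rcases Nat.lt_or_ge i (m + r) with h | h
      · exact ((hw i (m + r) h (by omega)).1.trans_eq hwu).trans huy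
      · obtain rfl : i = m + r := by omega
        rwa [hwu]
    refine ⟨Function.update w (m + r + 1) y, ?_, ?_, ?_⟩
    · intro i j hij hj
      rcases Nat.lt_or_ge j (m + r + 1) with h | h
      · rw [Function.update_of_ne (by omega), Function.update_of_ne (by omega)]
        exact hw i j hij h
      · obtain rfl : j = m + r + 1 := by omega
        rw [Function.update_of_ne (by omega), Function.update_self]
        refine ⟨hlt i hij, ⟨fun h => ?_, fun h => ?_⟩⟩
        · by_contra hne
          rcases hwi i (by omega) with ⟨j, hj, hij'⟩ | hb
          · exact hD j hj y hyD (hij' ▸ h)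
          · exact hy' (mem_ball_succ.2 (Or.inr (Or.inr ⟨hyD, w i, hb, hlt i hij, h⟩)))
        · obtain rfl : i = m + r := by omega
          rwa [hwu]
    · exact Function.update_self _ _ _
    · intro i hi
      rw [Function.update_of_ne (by omega)]
      rcases Nat.lt_or_ge i (m + r) with h | h
      · exact (hwi i h).imp id fun h => ball_subset_succ _ _ _ _ h
      · obtain rfl : i = m + r := by omega
        rw [hwu]
        exact Or.inr hu

/-- There is an induced monotone path on `m + 1` vertices whose last vertex reaches `t` vertices
of `U`, all smaller than the elements of a set `E ⊆ U` of size at least `X`, such that no other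
vertex of the path has a neighbour in the part of `U` still in use. -/
def Extendable (G : SimpleGraph V) (U : Finset V) (t m X : ℕ) : Prop :=
  ∃ (v : ℕ → V) (D E : Finset V) (r : ℕ), IsIndPath G (m + 1) v ∧
    (∀ i < m, ∀ y ∈ D ∪ E, ¬ G.Adj (v i) y) ∧
    (∀ u ∈ insert (v m) D, ∀ e ∈ E, u < e) ∧
    t ≤ #(ball G {v m} D r) ∧ X ≤ #E ∧ D ∪ E ⊆ U ∧ v m ∈ U

lemma Extendable.step {G : SimpleGraph V} {U : Finset V} {L m X Δ h : ℕ}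
    (hG : NoHole G (2 ^ L)) (hΔ : ∀ u ∈ U, #(U.filter (G.Adj u)) ≤ Δ)
    (hh : 1 ≤ h) (hpath : ∀ v, ¬ IsIndPath G h v) (hXΔ : Δ ≤ X)
    (hXL : 2 ^ L * (3 * L + 1) ≤ X) (hS : Extendable G U (2 ^ L) m (4 * h * X)) :
    ∃ m', m < m' ∧ Extendable G U (2 ^ L) m' X := by
  obtain ⟨v, D, E, r, hv, hanti, hlt, hr, hE, hU, hvU⟩ := hS
  set B := ball G {v m} D with hB
  have hantiD : ∀ i < m, ∀ y ∈ D, ¬ G.Adj (v i) y :=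
    fun i hi y hy => hanti i hi y (mem_union_left _ hy)
  have hBsub : ∀ r, B r ⊆ insert (v m) D := fun r => by
    rw [insert_eq]; exact ball_subset _ _ _ _
  have hstab : ∀ r, B r ⊆ B h := by
    intro r
    induction r with
    | zero => simp [hB, ball]
    | succ r ih =>
      rcases Nat.lt_or_ge r h with hrh | hrh
      · have : ∀ a b, a ≤ b → B a ⊆ B b := fun a b hab =>
          Nat.le_induction subset_rfl (fun n _ h => h.trans (ball_subset_succ _ _ _ _)) b hab
        exact this _ _ hrh
      · intro y hy
        by_cases hy' : y ∈ B r
        · exact ih hy'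
        · obtain ⟨w, hw, -⟩ := hv.exists_extend hantiD r y hy hy'
          exact absurd (hw.mono (by omega)) (hpath w)
  set F : ℕ → Finset V := fun j => E.filter fun e => ∃ u ∈ B j, G.Adj u e with hF
  have hF1 : #(F 1) ≤ Δ := by
    refine (card_le_card ?_).trans (hΔ _ hvU)
    intro e he
    obtain ⟨he, u, hu, hue⟩ := mem_filter.1 he
    have : u = v m := by simpa [hB, ball] using hu
    exact mem_filter.2 ⟨hU (mem_union_right _ he), this ▸ hue⟩
  have hdisj : Disjoint (B h) E := by
    rw [disjoint_left]
    exact fun x hx hxE => lt_irrefl x (hlt x (hBsub _ hx) x hxE)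
  have hFh : #E < #(F h) + 2 ^ L := by
    have h1 := hG.card_lt hdisj (hr.trans (card_le_card (hstab r)))
    have h2 := card_filter_add_card_filter_not (s := E) (fun e => ∃ u ∈ B h, G.Adj u e)
    simp only [not_exists, not_and] at h2
    simp only [hF]
    omega
  have h2L : 2 ^ L ≤ X := le_trans (Nat.le_mul_of_pos_right _ (by omega)) hXL
  obtain ⟨j, hj1, hj⟩ : ∃ j, 1 ≤ j ∧ 2 * X ≤ #(F (j + 1) \ F j) := by
    by_contra! hcon
    have : ∀ j, #(F (j + 1)) ≤ Δ + j * (2 * X) := by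
      intro j
      induction j with
      | zero => simpa using hF1
      | succ j ih =>
        have h1 := hcon (j + 1) (by omega)
        have h2 : #(F (j + 1 + 1)) ≤ #(F (j + 1 + 1) \ F (j + 1)) + #(F (j + 1)) := by
          rw [← card_sdiff_add_card_inter (F (j + 1 + 1)) (F (j + 1))]
          exact Nat.add_le_add_left (card_le_card inter_subset_right) _
        nlinarith
    have h3 := this (h - 1)
    rw [Nat.sub_add_cancel hh] at h3
    have h4 : (h - 1) * (2 * X) = 2 * (h * X) - 2 * X := by
      rw [Nat.sub_mul]; ring_nf
    have h5 : X ≤ h * X := Nat.le_mul_of_pos_left _ hh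
    have h6 : 4 * h * X = 4 * (h * X) := by ring
    omega
  obtain ⟨D₁, hD₁, hc₁, hlt₁⟩ := exists_initial_segment (F (j + 1) \ F j) X (by omega)
  obtain ⟨x, hx, r', hr'⟩ := hG.exists_expanding_vertex D₁ (hXL.trans hc₁.ge)
  obtain ⟨hxF, hxF'⟩ := mem_sdiff.1 (hD₁ hx)
  obtain ⟨hxE, u, hu, hux⟩ := mem_filter.1 hxF
  have hu' : u ∉ B j := fun h => hxF' (mem_filter.2 ⟨hxE, u, h, hux⟩)
  obtain ⟨w, hw, hwu, hwi⟩ := hv.exists_extend hantiD j u hu hu'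
  have hsubE : F (j + 1) \ F j ⊆ E := sdiff_subset.trans (filter_subset _ _)
  have hDU : D₁ ∪ (F (j + 1) \ F j) \ D₁ ⊆ E :=
    union_subset (hD₁.trans hsubE) (sdiff_subset.trans hsubE)
  refine ⟨m + j, by omega, w, D₁, (F (j + 1) \ F j) \ D₁, r' + 1, hw, ?_, ?_, ?_, ?_,
    hDU.trans (subset_union_right.trans hU), ?_⟩
  · intro i hi y hy hadj
    rcases hwi i hi with ⟨l, hl, hil⟩ | hb
    · exact hanti l hl y (mem_union_right _ (hDU hy)) (hil ▸ hadj)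
    · rw [union_sdiff_of_subset hD₁] at hy
      exact (mem_sdiff.1 hy).2 (mem_filter.2 ⟨hsubE hy, _, hb, hadj⟩)
  · intro z hz e he
    rcases mem_insert.1 hz with rfl | hz
    · rw [hwu]
      exact hlt u (hBsub _ hu) e (hDU (mem_union_right _ he))
    · exact hlt₁ z hz e he
  · rw [hwu]
    exact hr'.trans (card_le_card
      (ball_subset_ball_of_adj hx (hlt u (hBsub _ hu) x hxE) hux r'))
  · rw [card_sdiff_of_subset hD₁, hc₁]
    omega
  · rw [hwu]
    rcases mem_insert.1 (hBsub _ hu) with h | h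
    · rw [h]; exact hvU
    · exact hU (mem_union_left _ h)

/-- Sparse graphs without large holes contain long induced monotone paths. -/
lemma NoHole.exists_indPath {G : SimpleGraph V} {U : Finset V} {L W h : ℕ}
    (hG : NoHole G (2 ^ L)) (hΔ : ∀ u ∈ U, #(U.filter (G.Adj u)) ≤ W)
    (hh : 1 ≤ h) (hL : 2 ^ L * (3 * L + 1) ≤ W) (hU : ((4 * h) ^ h + 1) * W ≤ #U) :
    ∃ v, IsIndPath G h v := by
  by_contra! hpath
  have key : ∀ i ≤ h, ∃ m, i ≤ m ∧ Extendable G U (2 ^ L) m ((4 * h) ^ (h - i) * W) := by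
    intro i
    induction i with
    | zero =>
      intro _
      obtain ⟨D, hD, hc, hlt⟩ := exists_initial_segment U W
        ((Nat.le_mul_of_pos_left W (Nat.succ_pos ((4 * h) ^ h))).trans hU)
      obtain ⟨x, hx, r, hr⟩ := hG.exists_expanding_vertex D (hL.trans hc.ge)
      refine ⟨0, le_rfl, fun _ => x, D, U \ D, r, ?_, ?_, ?_, hr, ?_, ?_, hD hx⟩
      · intro i j hij hj; omega
      · intro i hi; omega
      · intro u hu e he
        rw [insert_eq_of_mem hx] at hu
        exact hlt u hu e he
      · rw [card_sdiff_of_subset hD, hc, Nat.sub_zero]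
        have : ((4 * h) ^ h + 1) * W = (4 * h) ^ h * W + W := by ring
        omega
      · rw [union_sdiff_of_subset hD]
    | succ i ih =>
      intro hi
      obtain ⟨m, hm, hS⟩ := ih (by omega)
      have hp : 1 ≤ (4 * h) ^ (h - (i + 1)) := Nat.one_le_pow _ _ (by omega)
      have hX : W ≤ (4 * h) ^ (h - (i + 1)) * W := Nat.le_mul_of_pos_left _ hp
      have heq : (4 * h) ^ (h - i) * W = 4 * h * ((4 * h) ^ (h - (i + 1)) * W) := by
        rw [show h - i = (h - (i + 1)) + 1 by omega, pow_succ]; ring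
      rw [heq] at hS
      obtain ⟨m', hm', hS'⟩ := hS.step hG hΔ hh hpath hX (hL.trans hX)
      exact ⟨m', by omega, hS'⟩
  obtain ⟨m, hm, v, D, E, r, hv, -⟩ := key h le_rfl
  exact hpath v (hv.mono (by omega))

end Sparse

section Regularity

open Finset SzemerediRegularity
open scoped Classical

lemma SimpleGraph.card_interedges_map {V W : Type*} (H : SimpleGraph W) (f : V ↪ W)
    (A B : Finset V) :
    #(H.interedges (A.map f) (B.map f)) = #((H.comap f).interedges A B) := by
  rw [← card_map (f.prodMap f)]
  congr 1
  ext ⟨x, y⟩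
  simp only [SimpleGraph.mem_interedges_iff, mem_map, Function.Embedding.coe_prodMap, Prod.exists,
    SimpleGraph.comap_adj, Prod.map_apply, Prod.mk.injEq]
  constructor
  · rintro ⟨⟨a, ha, rfl⟩, ⟨b, hb, rfl⟩, h⟩
    exact ⟨a, b, ⟨ha, hb, h⟩, rfl, rfl⟩
  · rintro ⟨a, b, ⟨ha, hb, h⟩, rfl, rfl⟩
    exact ⟨⟨a, ha, rfl⟩, ⟨b, hb, rfl⟩, h⟩

/-- All pairs of large subsets of `A` and `B` have density within `ρ` of `d` in `H`. -/
def RegularPair {V : Type*} (H : SimpleGraph V) (ρ d : ℝ) (A B : Finset V) : Prop :=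
  ∀ A' ⊆ A, ∀ B' ⊆ B, ρ * #A ≤ #A' → ρ * #B ≤ #B' →
    |(#(H.interedges A' B') : ℝ) - d * (#A' * #B')| ≤ ρ * (#A' * #B')

lemma SimpleGraph.IsUniform.regularPair {V : Type*} {H : SimpleGraph V} {ρ ρ' : ℝ}
    {A B : Finset V} (h : H.IsUniform ρ' A B) (hρ : ρ' ≤ ρ) :
    RegularPair H ρ (H.edgeDensity A B) A B := by
  intro A' hA' B' hB' hcA hcB
  have h1 := h hA' hB' ((mul_comm (#A : ℝ) ρ' ▸ mul_le_mul_of_nonneg_right hρ (by positivity)).trans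
    hcA) ((mul_comm (#B : ℝ) ρ' ▸ mul_le_mul_of_nonneg_right hρ (by positivity)).trans hcB)
  rcases Nat.eq_zero_or_pos (#A' * #B') with h0 | h0
  · have h2 : #(H.interedges A' B') ≤ #A' * #B' := H.card_interedges_le_mul A' B'
    have h3 : #(H.interedges A' B') = 0 := by omega
    have h4 : (#A' : ℝ) * #B' = 0 := by exact_mod_cast h0
    rw [h3, h4]; simp
  · have h0' : (0 : ℝ) < #A' * #B' := by exact_mod_cast h0
    have h2 : (#(H.interedges A' B') : ℝ) = H.edgeDensity A' B' * (#A' * #B') := by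
      rw [SimpleGraph.edgeDensity_def]
      push_cast
      rw [div_mul_cancel₀ _ h0'.ne']
    rw [h2, ← sub_mul, abs_mul, abs_of_pos h0']
    exact mul_le_mul_of_nonneg_right (h1.le.trans hρ) h0'.le

lemma exists_regular_parts (ε ρ : ℝ) (hε : 0 < ε) (hρ : 0 < ρ) :
    ∃ M : ℕ, 0 < M ∧ ∀ {V : Type} [Fintype V] (H : SimpleGraph V), M ≤ Fintype.card V →
      ∃ (bad : Finset (V × V)) (π : V → Finset V),
        (#bad : ℝ) ≤ 2 * ε * (Fintype.card V : ℝ) ^ 2 ∧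
        (∀ x, Fintype.card V ≤ M * #(π x)) ∧
        ∀ x y, H.Adj x y → (x, y) ∉ bad → Disjoint (π x) (π y) ∧
          ∃ d, ε / 4 ≤ d ∧ RegularPair H ρ d (π x) (π y) := by
  set ρ' := min ρ (ε / 8) with hρ'
  have hρ'0 : 0 < ρ' := lt_min hρ (by positivity)
  set l := ⌈4 / ε⌉₊ with hl
  refine ⟨2 * (l + bound ρ' l), ?_, ?_⟩
  · have : 0 < bound ρ' l := bound_pos _ _
    omega
  intro V _ H hV
  obtain ⟨P, hP₁, hP₂, hP₃, hP₄⟩ := szemeredi_regularity H hρ'0 (l := l) (by omega)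
  have hb : 0 < bound ρ' l := bound_pos _ _
  have hne : Nonempty V := Fintype.card_pos_iff.1 (by omega)
  have hPl : 4 / ε ≤ (#P.parts : ℝ) := (Nat.le_ceil _).trans (by exact_mod_cast hP₂)
  let A := (P.nonUniforms H ρ').biUnion fun q => q.1 ×ˢ q.2
  let B := P.parts.biUnion offDiag
  let C := (P.sparsePairs H (ε / 4)).biUnion fun q => H.interedges q.1 q.2
  refine ⟨A ∪ B ∪ C, P.part, ?_, ?_, ?_⟩
  · have h1 : (#A : ℝ) < 4 * ρ' * #(univ : Finset V) ^ 2 :=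
      hP₁.sum_nonUniforms_lt univ_nonempty hρ'0 hP₄
    have h2 : (#B : ℝ) ≤ ε / 2 * #(univ : Finset V) ^ 2 := hP₁.card_biUnion_offDiag_le hε hPl
    have h3 : (#C : ℝ) ≤ 4 * (ε / 4) * #(univ : Finset V) ^ 2 :=
      hP₁.card_interedges_sparsePairs_le (by positivity)
    have h4 : (#(A ∪ B ∪ C) : ℝ) ≤ #A + #B + #C := by
      exact_mod_cast (card_union_le _ _).trans (Nat.add_le_add_right (card_union_le _ _) _)
    have h5 : ρ' ≤ ε / 8 := min_le_right _ _
    rw [card_univ] at h1 h2 h3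
    have : (0 : ℝ) ≤ (Fintype.card V : ℝ) ^ 2 := by positivity
    nlinarith
  · intro x
    have h1 := hP₁.average_le_card_part (P.part_mem.2 (mem_univ x))
    rw [card_univ] at h1
    set q := #P.parts
    have hq : 0 < q := (P.parts_nonempty univ_nonempty.ne_empty).card_pos
    have h2 : Fintype.card V < q * (Fintype.card V / q + 1) := by
      exact Nat.lt_mul_div_succ _ hq
    have h3 : 1 ≤ Fintype.card V / q := by
      rw [Nat.one_le_div_iff hq]; omega
    calc Fintype.card V ≤ q * (Fintype.card V / q + 1) := h2.le
      _ ≤ q * (2 * (Fintype.card V / q)) := by gcongr; omega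
      _ = 2 * q * (Fintype.card V / q) := by ring
      _ ≤ 2 * (l + bound ρ' l) * #(P.part x) := by gcongr; omega
  · intro x y hxy hbad
    have hx := P.part_mem.2 (mem_univ x)
    have hy := P.part_mem.2 (mem_univ y)
    have hxx : x ∈ P.part x := P.mem_part (mem_univ x)
    have hyy : y ∈ P.part y := P.mem_part (mem_univ y)
    simp only [mem_union, not_or] at hbad
    obtain ⟨⟨hA, hB⟩, hC⟩ := hbad
    have hne : P.part x ≠ P.part y := fun h =>
      hB (mem_biUnion.2 ⟨_, hx, mem_offDiag.2 ⟨hxx, h ▸ hyy, hxy.ne⟩⟩)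
    refine ⟨P.disjoint hx hy hne, H.edgeDensity (P.part x) (P.part y), ?_, ?_⟩
    · by_contra! hlt
      exact hC (mem_biUnion.2 ⟨(_, _), (P.mk_mem_sparsePairs _ _ _ _).2 ⟨hx, hy, hne, hlt⟩,
        H.mem_interedges_iff.2 ⟨hxx, hyy, hxy⟩⟩)
    · refine SimpleGraph.IsUniform.regularPair (ρ' := ρ') ?_ (min_le_left _ _)
      by_contra hu
      exact hA (mem_biUnion.2 ⟨(_, _), (P.mk_mem_nonUniforms _).2 ⟨hx, hy, hne, hu⟩,
        mem_product.2 ⟨hxx, hyy⟩⟩)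

/-- Regularity lemma inside a vertex set, given through the parts containing the end points of a
typical edge. -/
lemma exists_regular_parts_within (ε ρ : ℝ) (hε : 0 < ε) (hρ : 0 < ρ) :
    ∃ M : ℕ, 0 < M ∧ ∀ {V : Type} [Fintype V] (H : SimpleGraph V) (U : Finset V), M ≤ #U →
      ∃ bad : Finset (V × V), (#bad : ℝ) ≤ 2 * ε * (#U : ℝ) ^ 2 ∧
        ∀ x ∈ U, ∀ y ∈ U, H.Adj x y → (x, y) ∉ bad → ∃ A ⊆ U, ∃ B ⊆ U, #U ≤ M * #A ∧
          #U ≤ M * #B ∧ Disjoint A B ∧ ∃ d, ε / 4 ≤ d ∧ RegularPair H ρ d A B := by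
  obtain ⟨M, hM, h⟩ := exists_regular_parts ε ρ hε hρ
  refine ⟨M, hM, fun {V} _ H U hU => ?_⟩
  let f : U ↪ V := Function.Embedding.subtype _
  obtain ⟨bad, π, hbad, hπ, hreg⟩ := h (H.comap f) (by simpa using hU)
  rw [Fintype.card_coe] at hbad hπ
  have hsub : ∀ A : Finset U, A.map f ⊆ U := by
    intro A x hx
    obtain ⟨a, -, rfl⟩ := mem_map.1 hx
    exact a.2
  refine ⟨bad.map (f.prodMap f), by simpa using hbad, fun x hx y hy hxy hb => ?_⟩
  obtain ⟨hd, d, hdε, hr⟩ := hreg ⟨x, hx⟩ ⟨y, hy⟩ hxy fun hmem =>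
    hb (mem_map.2 ⟨_, hmem, rfl⟩)
  refine ⟨(π ⟨x, hx⟩).map f, hsub _, (π ⟨y, hy⟩).map f, hsub _, by simpa using hπ _,
    by simpa using hπ _, (disjoint_map f).2 hd, d, hdε, ?_⟩
  intro A hA B hB hcA hcB
  obtain ⟨A, hA', rfl⟩ := subset_map_iff.1 hA
  obtain ⟨B, hB', rfl⟩ := subset_map_iff.1 hB
  rw [H.card_interedges_map]
  simp only [card_map] at hcA hcB ⊢
  exact hr A hA' B hB' hcA hcB

end Regularity

section Ordering

open Finset
open scoped Classical

/-- Every element of `A` is smaller than every element of `B`. -/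
def AllLT {V : Type*} [LinearOrder V] (A B : Finset V) : Prop := ∀ a ∈ A, ∀ b ∈ B, a < b

lemma exists_separated {ι V : Type*} [LinearOrder V] (q : ι → ℕ) (hq : ∀ i, 0 < q i) (n : ℕ)
    (s : Finset ι) (hs : #s = n) (X : ι → Finset V) (hX : ∀ i ∈ s, n * q i ≤ #(X i)) :
    ∃ Y : ι → Finset V, (∀ i ∈ s, Y i ⊆ X i ∧ q i ≤ #(Y i)) ∧
      ∀ i ∈ s, ∀ j ∈ s, i ≠ j → AllLT (Y i) (Y j) ∨ AllLT (Y j) (Y i) := by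
  induction n generalizing s X with
  | zero =>
    rw [card_eq_zero] at hs
    subst hs
    exact ⟨X, by simp, by simp⟩
  | succ n ih =>
    have hD : ∀ i, ∃ (D : Finset V) (m : V), i ∈ s →
        D ⊆ X i ∧ #D = q i ∧ AllLT D (X i \ D) ∧ m ∈ D ∧ ∀ x ∈ D, x ≤ m := by
      intro i
      by_cases hi : i ∈ s
      · obtain ⟨D, h1, h2, h3⟩ := exists_initial_segment (X i) (q i)
          ((Nat.le_mul_of_pos_left _ n.succ_pos).trans (hX i hi))
        have hne : D.Nonempty := card_pos.1 (h2 ▸ hq i)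
        exact ⟨D, D.max' hne, fun _ => ⟨h1, h2, h3, max'_mem _ _, fun x hx => le_max' _ _ hx⟩⟩
      · have : s.Nonempty := card_pos.1 (by omega)
        obtain ⟨i₀, hi₀⟩ := this
        have : (X i₀).Nonempty := card_pos.1
          (lt_of_lt_of_le (Nat.mul_pos n.succ_pos (hq i₀)) (hX i₀ hi₀))
        exact ⟨∅, this.choose, fun h => absurd h hi⟩
    choose D m hDm using hD
    obtain ⟨i, hi, hmin⟩ := exists_min_image s m (card_pos.1 (by omega))
    obtain ⟨Y, hY, hsep⟩ := ih (s.erase i) (by rw [card_erase_of_mem hi]; omega)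
      (fun j => X j \ D j) (by
        intro j hj
        have hj' := mem_of_mem_erase hj
        rw [card_sdiff_of_subset (hDm j hj').1, (hDm j hj').2.1]
        have := hX j hj'
        have h2 : (n + 1) * q j = n * q j + q j := by ring
        omega)
    have hlt : ∀ j ∈ s, j ≠ i → AllLT (D i) (Y j) := by
      intro j hj hji x hx y hy
      have hy' := (hY j (mem_erase.2 ⟨hji, hj⟩)).1 hy
      exact ((hDm i hi).2.2.2.2 x hx).trans_lt ((hmin j hj).trans_lt
        ((hDm j hj).2.2.1 _ (hDm j hj).2.2.2.1 y hy'))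
    refine ⟨Function.update Y i (D i), ?_, ?_⟩
    · intro j hj
      rcases eq_or_ne j i with rfl | hji
      · rw [Function.update_self]
        exact ⟨(hDm j hj).1, (hDm j hj).2.1.ge⟩
      · rw [Function.update_of_ne hji]
        have := hY j (mem_erase.2 ⟨hji, hj⟩)
        exact ⟨this.1.trans sdiff_subset, this.2⟩
    · intro j hj l hl hjl
      rcases eq_or_ne j i with rfl | hji
      · rw [Function.update_self, Function.update_of_ne hjl.symm]
        exact Or.inl (hlt l hl hjl.symm)
      · rcases eq_or_ne l i with rfl | hli
        · rw [Function.update_self, Function.update_of_ne hji]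
          exact Or.inr (hlt j hj hji)
        · rw [Function.update_of_ne hji, Function.update_of_ne hli]
          exact hsep j (mem_erase.2 ⟨hji, hj⟩) l (mem_erase.2 ⟨hli, hl⟩) hjl

lemma exists_sorted {N : ℕ} {V : Type*} [LinearOrder V] (q : Fin N → ℕ) (hq : ∀ i, 0 < q i)
    (X : Fin N → Finset V) (hX : ∀ i, N * q i ≤ #(X i)) :
    ∃ (σ : Equiv.Perm (Fin N)) (Y : Fin N → Finset V),
      (∀ i, Y i ⊆ X (σ i) ∧ q (σ i) ≤ #(Y i)) ∧ ∀ i j, i < j → AllLT (Y i) (Y j) := by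
  obtain ⟨Y, hY, hsep⟩ := exists_separated q hq N univ (by simp) X fun i _ => hX i
  have hne : ∀ i, (Y i).Nonempty := fun i => card_pos.1 ((hq i).trans_le (hY i (mem_univ i)).2)
  let f : Fin N → V := fun i => (Y i).min' (hne i)
  refine ⟨Tuple.sort f, fun i => Y (Tuple.sort f i), fun i => hY _ (mem_univ _), ?_⟩
  intro i j hij
  refine (hsep _ (mem_univ _) _ (mem_univ _) ((Tuple.sort f).injective.ne hij.ne)).resolve_right ?_
  intro h
  exact absurd (Tuple.monotone_sort f hij.le)
    (not_le.2 (h _ (min'_mem _ (hne _)) _ (min'_mem _ (hne _))))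

end Ordering

section Internal

open Finset
open scoped Classical

lemma NoHole.card_interedges_self {V : Type*} [LinearOrder V] {G : SimpleGraph V} {L h : ℕ}
    (hG : NoHole G (2 ^ L)) (hh : 1 ≤ h) (hpath : ∀ v, ¬ IsIndPath G h v) {U : Finset V}
    (hU : 2 * ((4 * h) ^ h + 1) * (2 ^ L * (3 * L + 1)) ≤ #U) :
    #U ^ 2 ≤ 4 * ((4 * h) ^ h + 1) * #(G.interedges U U) := by
  set C := (4 * h) ^ h + 1 with hC
  have hC0 : 0 < C := Nat.succ_pos _
  set deg : V → ℕ := fun u => #(U.filter (G.Adj u)) with hdeg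
  have hlow : 2 * #(U.filter fun u => 2 * C * deg u ≤ #U) ≤ #U := by
    by_contra! hcon
    set T := U.filter fun u => 2 * C * deg u ≤ #U with hT
    refine Exists.elim (hG.exists_indPath (U := T) (W := #T / C) (h := h) ?_ hh ?_ ?_) hpath
    · intro u hu
      rw [Nat.le_div_iff_mul_le hC0]
      have h1 : #(T.filter (G.Adj u)) ≤ deg u :=
        card_le_card (filter_subset_filter _ (filter_subset _ _))
      have h2 := (mem_filter.1 hu).2
      nlinarith
    · rw [Nat.le_div_iff_mul_le hC0]
      nlinarith
    · exact Nat.mul_div_le _ _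
  have hsum : #(G.interedges U U) = ∑ u ∈ U, deg u := by
    rw [SimpleGraph.interedges, Rel.interedges, card_filter, sum_product]
    refine sum_congr rfl fun u _ => ?_
    simp only [hdeg, card_filter]
  have hsplit := card_filter_add_card_filter_not (s := U) (fun u => 2 * C * deg u ≤ #U)
  have hhigh : #(U.filter fun u => ¬ 2 * C * deg u ≤ #U) * #U ≤ 2 * C * ∑ u ∈ U, deg u := by
    rw [mul_sum, ← smul_eq_mul, ← sum_const]
    refine (sum_le_sum fun u hu => ?_).trans (sum_le_sum_of_subset (filter_subset _ _))
    exact (not_le.1 (mem_filter.1 hu).2).le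
  rw [hsum]
  nlinarith

/-- Inside a large set, a graph without large holes and without long induced monotone paths
has an ordered pair of linear-sized sets with hereditarily positive density. -/
lemma exists_internal_pair (h : ℕ) (hh : 1 ≤ h) (ρ : ℝ) (hρ : 0 < ρ) :
    ∃ M : ℕ, 0 < M ∧ ∀ {V : Type} [Fintype V] [LinearOrder V] (G : SimpleGraph V) (L : ℕ)
      (U : Finset V), NoHole G (2 ^ L) → (∀ v, ¬ IsIndPath G h v) → M ≤ #U →
      2 * ((4 * h) ^ h + 1) * (2 ^ L * (3 * L + 1)) ≤ #U →
      ∃ A ⊆ U, ∃ B ⊆ U, #U ≤ M * #A ∧ #U ≤ M * #B ∧ AllLT A B ∧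
        ∀ A' ⊆ A, ∀ B' ⊆ B, ρ * #A ≤ #A' → ρ * #B ≤ #B' →
          (1 / (64 * ((4 * h) ^ h + 1) : ℝ) - ρ) * (#A' * #B') ≤ #(G.interedges A' B') := by
  set C : ℝ := (4 * h) ^ h + 1 with hC
  have hC0 : 0 < C := by positivity
  obtain ⟨M, hM, hreg⟩ := exists_regular_parts_within (1 / (16 * C)) (min ρ (1 / 4) / 4)
    (by positivity) (by positivity)
  refine ⟨4 * M, by omega, fun {V} _ _ G L U hG hpath hMU hU => ?_⟩
  obtain ⟨bad, hbad, hreg⟩ := hreg G U (by omega)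
  have hU0 : (0 : ℝ) < #U := by exact_mod_cast (by omega : 0 < #U)
  have he : (#U : ℝ) ^ 2 ≤ 4 * C * #(G.interedges U U) := by
    rw [hC]
    exact_mod_cast hG.card_interedges_self hh hpath hU
  have hlt : #bad < #(G.interedges U U) := by
    have h1 : (#bad : ℝ) * (8 * C) ≤ (#U : ℝ) ^ 2 := by
      calc _ ≤ 2 * (1 / (16 * C)) * (#U : ℝ) ^ 2 * (8 * C) := by gcongr
        _ = _ := by field_simp; norm_num
    have h2 : (0 : ℝ) < (#U : ℝ) ^ 2 := by positivity
    have h3 : C * #bad < C * #(G.interedges U U) := by linarith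
    exact_mod_cast lt_of_mul_lt_mul_left h3 hC0.le
  obtain ⟨⟨x, y⟩, hxy, hxyb⟩ := exists_mem_notMem_of_card_lt_card hlt
  obtain ⟨hx, hy, hadj⟩ := G.mem_interedges_iff.1 hxy
  obtain ⟨A, hA, B, hB, hcA, hcB, hd, d, hdε, hr⟩ := hreg x hx y hy hadj hxyb
  have hhalf : ∀ m : ℕ, #U ≤ M * m → 0 < (m + 3) / 4 ∧ 2 * ((m + 3) / 4) ≤ m ∧
      m ≤ 4 * ((m + 3) / 4) := by
    intro m hm
    have : 4 ≤ m := by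
      by_contra! h
      have h2 : M * m ≤ M * 3 := Nat.mul_le_mul_left _ (by omega)
      omega
    omega
  have hqA := hhalf _ hcA
  have hqB := hhalf _ hcB
  obtain ⟨Y, hY, hsep⟩ := exists_separated (fun b : Bool => cond b ((#A + 3) / 4) ((#B + 3) / 4))
    (by rintro (_ | _); exacts [hqB.1, hqA.1]) 2 univ (by simp) (fun b => cond b A B)
    (by rintro (_ | _) -; exacts [hqB.2.1, hqA.2.1])
  obtain ⟨hYA, hYA'⟩ := hY true (mem_univ _)
  obtain ⟨hYB, hYB'⟩ := hY false (mem_univ _)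
  simp only [cond_true, cond_false] at hYA hYA' hYB hYB'
  have hA4 : #A ≤ 4 * #(Y true) := by omega
  have hB4 : #B ≤ 4 * #(Y false) := by omega
  have key : ∀ A' ⊆ Y true, ∀ B' ⊆ Y false, ρ * #(Y true) ≤ #A' → ρ * #(Y false) ≤ #B' →
      (1 / (64 * C) - ρ) * (#A' * #B') ≤ #(G.interedges A' B') := by
    intro A' hA' B' hB' h1 h2
    have hA4' : (#A : ℝ) ≤ 4 * #(Y true) := by exact_mod_cast hA4
    have hB4' : (#B : ℝ) ≤ 4 * #(Y false) := by exact_mod_cast hB4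
    have hm : min ρ (1 / 4) ≤ ρ := min_le_left _ _
    have hm0 : 0 < min ρ (1 / 4) := by positivity
    have h3 := hr A' (hA'.trans hYA) B' (hB'.trans hYB)
      (by refine le_trans ?_ h1; nlinarith [Nat.cast_nonneg (α := ℝ) #(Y true)])
      (by refine le_trans ?_ h2; nlinarith [Nat.cast_nonneg (α := ℝ) #(Y false)])
    have h4 := (abs_le.1 h3).1
    have h5 : (0 : ℝ) ≤ #A' * #B' := by positivity
    have h6 : 1 / (64 * C) ≤ d := by
      refine le_trans (le_of_eq ?_) hdε
      field_simp; norm_num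
    have h7 : (1 / (64 * C) - ρ) * ((#A' : ℝ) * #B') ≤ (d - min ρ (1 / 4) / 4) * (#A' * #B') :=
      mul_le_mul_of_nonneg_right (by linarith) h5
    linarith
  have hcYA : #U ≤ 4 * M * #(Y true) := by nlinarith
  have hcYB : #U ≤ 4 * M * #(Y false) := by nlinarith
  rcases hsep true (mem_univ _) false (mem_univ _) (by simp) with hlt | hlt
  · exact ⟨Y true, hYA.trans hA, Y false, hYB.trans hB, hcYA, hcYB, hlt, key⟩
  · refine ⟨Y false, hYB.trans hB, Y true, hYA.trans hA, hcYB, hcYA, hlt, ?_⟩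
    intro A' hA' B' hB' h1 h2
    have hsymm := G.symm
    have := key B' hB' A' hA' h2 h1
    rwa [mul_comm (#B' : ℝ), SimpleGraph.interedges, Rel.card_interedges_comm] at this

end Internal

section Embedding

open Finset
open scoped Classical

/-- Few vertices of `X` have fewer than `δ * #W` vertices in their `T`-neighbourhood in a large
subset `W` of `Y`; here the `T`-neighbourhood is the neighbourhood or its complement according to
the truth value of `T`. -/
def TypicalDense {V : Type*} (G : SimpleGraph V) (σ δ : ℝ) (X Y : Finset V) (T : Prop) : Prop :=
  ∀ W ⊆ Y, σ * #Y ≤ #W →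
    #(X.filter fun x => #(W.filter fun y => G.Adj x y ↔ T) < δ * #W) ≤ σ * #X

/-- Few vertices of `X` have more than `γ * #W` vertices outside their `T`-neighbourhood in a large
subset `W` of `Y`. -/
def TypicalFull {V : Type*} (G : SimpleGraph V) (σ γ : ℝ) (X Y : Finset V) (T : Prop) : Prop :=
  ∀ W ⊆ Y, σ * #Y ≤ #W →
    #(X.filter fun x => γ * #W < #(W.filter fun y => ¬ (G.Adj x y ↔ T))) ≤ σ * #X

/-- A schedule embedding the slots of `S` one by one, or two at a time along a target edge. -/
inductive Sched {ι : Type*} [DecidableEq ι] (D₁ D₂ F T : ι → ι → Prop) : Finset ι → Prop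
  | empty : Sched D₁ D₂ F T ∅
  | single (l : ι) (S : Finset ι) (hl : l ∉ S) (hD : ∀ l' ∈ S, D₂ l l')
      (hS : Sched D₁ D₂ F T S) : Sched D₁ D₂ F T (insert l S)
  | pair (l m : ι) (S : Finset ι) (hl : l ∉ S) (hm : m ∉ S) (hlm : l ≠ m) (hT : T l m)
      (hD : ∀ l' ∈ S, (D₁ l l' ∧ F m l') ∨ (F l l' ∧ D₁ m l'))
      (hS : Sched D₁ D₂ F T S) : Sched D₁ D₂ F T (insert l (insert m S))

lemma exists_large_typical {ι V : Type*} (S : Finset ι) (P : ι → V → Prop) {b : ℝ}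
    {W X : Finset V} (hWX : W ⊆ X) (hP : ∀ l ∈ S, (#(X.filter (P l)) : ℝ) ≤ b)
    (hW : (#S + 1) * b ≤ #W) : b ≤ #(W.filter fun x => ∀ l ∈ S, ¬ P l x) := by
  have h1 : W ⊆ (W.filter fun x => ∀ l ∈ S, ¬ P l x) ∪ S.biUnion fun l => X.filter (P l) := by
    intro x hx
    by_cases h : ∀ l ∈ S, ¬ P l x
    · exact mem_union_left _ (mem_filter.2 ⟨hx, h⟩)
    · push Not at h
      obtain ⟨l, hl, hlx⟩ := h
      exact mem_union_right _ (mem_biUnion.2 ⟨l, hl, mem_filter.2 ⟨hWX hx, hlx⟩⟩)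
  have h2 : (#W : ℝ) ≤ #(W.filter fun x => ∀ l ∈ S, ¬ P l x) +
      ∑ l ∈ S, (#(X.filter (P l)) : ℝ) := by
    exact_mod_cast (card_le_card h1).trans ((card_union_le _ _).trans
      (Nat.add_le_add_left card_biUnion_le _))
  have h3 : ∑ l ∈ S, (#(X.filter (P l)) : ℝ) ≤ #S * b := by
    rw [← nsmul_eq_mul]
    exact sum_le_card_nsmul _ _ _ hP
  linarith

lemma Sched.exists_embedding {ι V : Type*} [DecidableEq ι] {G : SimpleGraph V} {X : ι → Finset V}
    {D₁ D₂ F T : ι → ι → Prop} {σ δ₁ δ₂ γ : ℝ} {t K : ℕ}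
    (hdisj : ∀ l m, l ≠ m → Disjoint (X l) (X m)) (hT : ∀ l m, T l m ↔ T m l)
    (hG : NoHole G t) (ht : 0 < t) (hX : ∀ l, t ≤ σ * #(X l))
    (hσ : 0 ≤ σ) (hδ₂ : 0 < δ₂) (hδ₂1 : δ₂ ≤ 1) (hδ : δ₂ ≤ δ₁ - γ)
    (hD₁ : ∀ l m, D₁ l m → TypicalDense G σ δ₁ (X l) (X m) (T l m))
    (hD₂ : ∀ l m, D₂ l m → TypicalDense G σ δ₂ (X l) (X m) (T l m))
    (hF : ∀ l m, F l m → TypicalFull G σ γ (X l) (X m) (T l m))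
    {S : Finset ι} (hS : Sched D₁ D₂ F T S) (hSK : #S ≤ K) (W : ι → Finset V)
    (hW : ∀ l ∈ S, W l ⊆ X l) (hcW : ∀ l ∈ S, (K + 1) * (σ * #(X l)) ≤ #(W l) * δ₂ ^ #S) :
    ∃ x : ι → V, (∀ l ∈ S, x l ∈ W l) ∧
      ∀ l ∈ S, ∀ m ∈ S, l ≠ m → (G.Adj (x l) (x m) ↔ T l m) := by
  have ht' : (0 : ℝ) < t := by exact_mod_cast ht
  have hσX : ∀ l, 0 ≤ σ * #(X l) := fun l => by positivity
  have hbig : ∀ (W : ι → Finset V) (S : Finset ι),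
      (∀ l ∈ S, (K + 1) * (σ * #(X l)) ≤ #(W l) * δ₂ ^ #S) →
      ∀ l ∈ S, (K + 1) * (σ * #(X l)) ≤ #(W l) := by
    intro W S h l hl
    exact (h l hl).trans (mul_le_of_le_one_right (by positivity) (pow_le_one₀ hδ₂.le hδ₂1))
  have hbig' : ∀ (W : ι → Finset V) (S : Finset ι),
      (∀ l ∈ S, (K + 1) * (σ * #(X l)) ≤ #(W l) * δ₂ ^ #S) →
      ∀ l ∈ S, σ * #(X l) ≤ #(W l) := by
    intro W S h l hl
    exact (le_mul_of_one_le_left (hσX l) (by simp)).trans (hbig W S h l hl)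
  induction hS generalizing W with
  | empty =>
    have : ∀ l, (X l).Nonempty := by
      intro l
      by_contra h
      have := hX l
      rw [not_nonempty_iff_eq_empty.1 h] at this
      simp at this
      omega
    exact ⟨fun l => (this l).choose, by simp, by simp⟩
  | single l S hl hD _ ih =>
    have hcard : #(insert l S) = #S + 1 := card_insert_of_notMem hl
    have hmem : ∀ l' ∈ S, l' ∈ insert l S := fun _ h => mem_insert_of_mem h
    have htyp := exists_large_typical S
      (fun l' x => (#((W l').filter fun y => G.Adj x y ↔ T l l') : ℝ) < δ₂ * #(W l'))
      (b := σ * #(X l)) (hW l (mem_insert_self _ _))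
      (fun l' hl' => hD₂ l l' (hD l' hl') _ (hW l' (hmem l' hl'))
        (hbig' W _ hcW l' (hmem l' hl')))
      ((mul_le_mul_of_nonneg_right (by
        have : (#S : ℝ) ≤ K := by exact_mod_cast (by omega : #S ≤ K)
        linarith) (hσX l)).trans (hbig W _ hcW l (mem_insert_self _ _)))
    obtain ⟨a, ha⟩ : ((W l).filter fun x => ∀ l' ∈ S,
        ¬ (#((W l').filter fun y => G.Adj x y ↔ T l l') : ℝ) < δ₂ * #(W l')).Nonempty := by
      rw [← card_pos]
      exact_mod_cast ht'.trans_le ((hX l).trans htyp)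
    obtain ⟨haW, ha⟩ := mem_filter.1 ha
    obtain ⟨x, hx, hxT⟩ := ih (by omega) (fun l' => (W l').filter fun y => G.Adj a y ↔ T l l')
      (fun l' hl' => (filter_subset _ _).trans (hW l' (hmem l' hl')))
      (fun l' hl' => by
        refine (hcW l' (hmem l' hl')).trans ?_
        rw [hcard, pow_succ', ← mul_assoc, mul_comm (#(W l') : ℝ)]
        exact mul_le_mul_of_nonneg_right (not_lt.1 (ha l' hl')) (by positivity))
    have hne : ∀ l' ∈ S, l' ≠ l := fun l' hl' h => hl (h ▸ hl')
    refine ⟨Function.update x l a, ?_, ?_⟩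
    · intro l' hl'
      rcases mem_insert.1 hl' with rfl | hl'
      · rwa [Function.update_self]
      · rw [Function.update_of_ne (hne l' hl')]
        exact (mem_filter.1 (hx l' hl')).1
    · intro p hp q hq hpq
      rw [mem_insert] at hp hq
      rcases hp with rfl | hp <;> rcases hq with rfl | hq
      · exact absurd rfl hpq
      · rw [Function.update_self, Function.update_of_ne (hne q hq)]
        exact (mem_filter.1 (hx q hq)).2
      · rw [Function.update_self, Function.update_of_ne (hne p hp), G.adj_comm, hT]
        exact (mem_filter.1 (hx p hp)).2
      · rw [Function.update_of_ne (hne q hq), Function.update_of_ne (hne p hp)]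
        exact hxT p hp q hq hpq
  | pair l m S hl hm hlm hTlm hD _ ih =>
    have hcard : #(insert l (insert m S)) = #S + 2 := by
      rw [card_insert_of_notMem (by simp [hl, hlm]), card_insert_of_notMem hm]
    have hmem : ∀ l' ∈ S, l' ∈ insert l (insert m S) :=
      fun _ h => mem_insert_of_mem (mem_insert_of_mem h)
    have hmeml : l ∈ insert l (insert m S) := mem_insert_self _ _
    have hmemm : m ∈ insert l (insert m S) := mem_insert_of_mem (mem_insert_self _ _)
    have hSK' : (#S : ℝ) + 1 ≤ K + 1 := by
      have : (#S : ℝ) ≤ K := by exact_mod_cast (by omega : #S ≤ K)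
      linarith
    obtain ⟨P, hP⟩ : ∃ P : Prop → ι → ι → V → Prop, ∀ c p l' x, P c p l' x ↔
      c ∧ (#((W l').filter fun y => G.Adj x y ↔ T p l') : ℝ) < δ₁ * #(W l') ∨
        ¬ c ∧ γ * #(W l') < #((W l').filter fun y => ¬ (G.Adj x y ↔ T p l')) :=
      ⟨_, fun _ _ _ _ => Iff.rfl⟩
    have hPbad : ∀ (c : Prop) (p l' : ι), l' ∈ S → (c → D₁ p l') → (¬ c → F p l') →
        (#((X p).filter (P c p l')) : ℝ) ≤ σ * #(X p) := by
      intro c p l' hl' h1 h2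
      by_cases hc : c
      · simp only [hP, hc, true_and, not_true, false_and, or_false]
        exact hD₁ p l' (h1 hc) _ (hW l' (hmem l' hl')) (hbig' W _ hcW l' (hmem l' hl'))
      · simp only [hP, hc, true_and, not_false_eq_true, false_and, false_or]
        exact hF p l' (h2 hc) _ (hW l' (hmem l' hl')) (hbig' W _ hcW l' (hmem l' hl'))
    set c : ι → Prop := fun l' => D₁ l l' ∧ F m l' with hc
    have htl := exists_large_typical S (fun l' => P (c l') l l') (hW l hmeml)
      (fun l' hl' => hPbad (c l') l l' hl' (fun h => h.1) 
        fun h => ((hD l' hl').resolve_left h).1)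
      ((mul_le_mul_of_nonneg_right hSK' (hσX l)).trans (hbig W _ hcW l hmeml))
    have htm := exists_large_typical S (fun l' => P (¬ c l') m l') (hW m hmemm)
      (fun l' hl' => hPbad (¬ c l') m l' hl' (fun h => ((hD l' hl').resolve_left h).2)
          fun h => (not_not.1 h).2)
      ((mul_le_mul_of_nonneg_right hSK' (hσX m)).trans (hbig W _ hcW m hmemm))
    obtain ⟨a, ha, b, hb, hab⟩ := hG _ _
      ((hdisj l m hlm).mono ((filter_subset _ _).trans (hW l hmeml))
        ((filter_subset _ _).trans (hW m hmemm)))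
      (by exact_mod_cast (hX l).trans htl) (by exact_mod_cast (hX m).trans htm)
    obtain ⟨haW, ha⟩ := mem_filter.1 ha
    obtain ⟨hbW, hb⟩ := mem_filter.1 hb
    have hinter : ∀ (u v : V) (p q l' : ι),
        ¬ (#((W l').filter fun y => G.Adj u y ↔ T p l') : ℝ) < δ₁ * #(W l') →
        ¬ γ * #(W l') < (#((W l').filter fun y => ¬ (G.Adj v y ↔ T q l')) : ℝ) →
        δ₂ * #(W l') ≤ #((W l').filter fun y => (G.Adj u y ↔ T p l') ∧ (G.Adj v y ↔ T q l')) := by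
      intro u v p q l' h1 h2
      have h3 : ((W l').filter fun y => G.Adj u y ↔ T p l') ⊆
          ((W l').filter fun y => (G.Adj u y ↔ T p l') ∧ (G.Adj v y ↔ T q l')) ∪
            (W l').filter fun y => ¬ (G.Adj v y ↔ T q l') := by
        intro y hy
        by_cases h : G.Adj v y ↔ T q l'
        · exact mem_union_left _ (mem_filter.2
            ⟨(mem_filter.1 hy).1, (mem_filter.1 hy).2, h⟩)
        · exact mem_union_right _ (mem_filter.2 ⟨(mem_filter.1 hy).1, h⟩)
      have h4 : (#((W l').filter fun y => G.Adj u y ↔ T p l') : ℝ) ≤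
          #((W l').filter fun y => (G.Adj u y ↔ T p l') ∧ (G.Adj v y ↔ T q l')) +
          #((W l').filter fun y => ¬ (G.Adj v y ↔ T q l')) := by
        exact_mod_cast (card_le_card h3).trans (card_union_le _ _)
      have h5 := mul_le_mul_of_nonneg_right hδ (Nat.cast_nonneg (α := ℝ) #(W l'))
      rw [sub_mul] at h5
      linarith
    have hshrink : ∀ l' ∈ S, δ₂ * #(W l') ≤
        #((W l').filter fun y => (G.Adj a y ↔ T l l') ∧ (G.Adj b y ↔ T m l')) := by
      intro l' hl'
      have h1 := ha l' hl'
      have h2 := hb l' hl'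
      rw [hP] at h1 h2
      by_cases hcl : c l'
      · exact hinter a b l m l' (fun h => h1 (Or.inl ⟨hcl, h⟩))
          (fun h => h2 (Or.inr ⟨not_not.2 hcl, h⟩))
      · refine (hinter b a m l l' (fun h => h2 (Or.inl ⟨hcl, h⟩))
          (fun h => h1 (Or.inr ⟨hcl, h⟩))).trans ?_
        refine Nat.cast_le.2 (card_le_card fun y hy => ?_)
        rw [mem_filter] at hy ⊢
        exact ⟨hy.1, hy.2.2, hy.2.1⟩
    obtain ⟨x, hx, hxT⟩ := ih (by omega)
      (fun l' => (W l').filter fun y => (G.Adj a y ↔ T l l') ∧ (G.Adj b y ↔ T m l'))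
      (fun l' hl' => (filter_subset _ _).trans (hW l' (hmem l' hl')))
      (fun l' hl' => by
        refine (hcW l' (hmem l' hl')).trans ?_
        rw [hcard, pow_add]
        have h1 := hshrink l' hl'
        have h2 : 0 ≤ δ₂ ^ #S := by positivity
        have h3 : (#(W l') : ℝ) * δ₂ ^ 2 ≤ δ₂ * #(W l') := by
          have : 0 ≤ δ₂ * (#(W l') : ℝ) := by positivity
          rw [pow_two, ← mul_assoc, mul_comm (#(W l') : ℝ)]
          exact mul_le_of_le_one_right this hδ₂1
        calc (#(W l') : ℝ) * (δ₂ ^ #S * δ₂ ^ 2) = #(W l') * δ₂ ^ 2 * δ₂ ^ #S := by ring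
          _ ≤ _ := mul_le_mul_of_nonneg_right (h3.trans h1) h2)
    have hne : ∀ l' ∈ S, l' ≠ l := fun l' hl' h => hl (h ▸ hl')
    have hne' : ∀ l' ∈ S, l' ≠ m := fun l' hl' h => hm (h ▸ hl')
    have hxl : Function.update (Function.update x m b) l a l = a := Function.update_self _ _ _
    have hxm : Function.update (Function.update x m b) l a m = b := by
      rw [Function.update_of_ne hlm.symm, Function.update_self]
    have hxS : ∀ l' ∈ S, Function.update (Function.update x m b) l a l' = x l' := by
      intro l' hl'
      rw [Function.update_of_ne (hne l' hl'), Function.update_of_ne (hne' l' hl')]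
    refine ⟨Function.update (Function.update x m b) l a, ?_, ?_⟩
    · intro l' hl'
      rcases mem_insert.1 hl' with rfl | hl'
      · rwa [hxl]
      rcases mem_insert.1 hl' with rfl | hl'
      · rwa [hxm]
      · rw [hxS l' hl']
        exact (mem_filter.1 (hx l' hl')).1
    · have hal : ∀ q ∈ S, G.Adj a (x q) ↔ T l q := fun q hq => (mem_filter.1 (hx q hq)).2.1
      have hbm : ∀ q ∈ S, G.Adj b (x q) ↔ T m q := fun q hq => (mem_filter.1 (hx q hq)).2.2
      intro p hp q hq hpq
      simp only [mem_insert] at hp hq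
      rcases hp with rfl | rfl | hp <;> rcases hq with rfl | rfl | hq
      · exact absurd rfl hpq
      · rw [hxl, hxm]; exact iff_of_true hab hTlm
      · rw [hxl, hxS q hq]; exact hal q hq
      · rw [hxl, hxm]; exact iff_of_true hab.symm ((hT _ _).1 hTlm)
      · exact absurd rfl hpq
      · rw [hxm, hxS q hq]; exact hbm q hq
      · rw [hxl, hxS p hp, G.adj_comm, hT]; exact hal p hp
      · rw [hxm, hxS p hp, G.adj_comm, hT]; exact hbm p hp
      · rw [hxS p hp, hxS q hq]; exact hxT p hp q hq hpq

end Embedding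

section Scheduling

open Finset
open scoped Classical

/-- The position on the path of a slot; part `i` holds the positions `2 * i` and `2 * i + 1`. -/
def slotPos {k : ℕ} (p : Fin k × Bool) : ℕ := 2 * (p.1 : ℕ) + p.2.toNat

/-- Two slots are at consecutive positions. -/
def SlotAdj {k : ℕ} (p q : Fin k × Bool) : Prop :=
  slotPos p + 1 = slotPos q ∨ slotPos q + 1 = slotPos p

/-- The pairs of slots whose target relation is strongly dense for every colouring. -/
def StrongPair {k : ℕ} (p q : Fin k × Bool) : Prop := p ≠ q ∧ (p.1 = q.1 ∨ ¬ SlotAdj p q)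

/-- The pairs of slots whose target relation is dense. -/
def WeakPair {k : ℕ} (χ : Fin k → Fin k → Bool) (p q : Fin k × Bool) : Prop :=
  StrongPair p q ∨ p.1 ≠ q.1 ∧ SlotAdj p q ∧ colorOf χ p.1 q.1 = false

/-- The pairs of slots whose target relation is almost full. -/
def FullPair {k : ℕ} (χ : Fin k → Fin k → Bool) (p q : Fin k × Bool) : Prop :=
  p.1 ≠ q.1 ∧ ¬ SlotAdj p q ∧ colorOf χ p.1 q.1 = true

/-- `p` is the last slot of a part, `q` the first slot of the next one, and the colour is red. -/
def RedLink {k : ℕ} (χ : Fin k → Fin k → Bool) (p q : Fin k × Bool) : Prop :=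
  (p.1 : ℕ) + 1 = q.1 ∧ p.2 = true ∧ q.2 = false ∧ χ p.1 q.1 = true

variable {k : ℕ} {χ : Fin k → Fin k → Bool}

lemma colorOf_comm {x y : Fin k} : colorOf χ x y = colorOf χ y x := by
  unfold colorOf
  rcases lt_trichotomy x y with h | rfl | h
  · rw [if_pos h, if_neg h.asymm]
  · rfl
  · rw [if_neg h.asymm, if_pos h]

lemma slotPos_injective : Function.Injective (slotPos (k := k)) := by
  rintro ⟨i, a⟩ ⟨j, b⟩ h
  cases a <;> cases b <;> simp only [slotPos, Bool.toNat_true, Bool.toNat_false] at h <;>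
    first
    | (exfalso; omega)
    | (simp only [Prod.mk.injEq, and_true]; exact Fin.ext (by omega))

lemma SlotAdj.symm {p q : Fin k × Bool} (h : SlotAdj p q) : SlotAdj q p := Or.symm h

lemma SlotAdj.redLink {p q : Fin k × Bool} (h : SlotAdj p q) (hne : p.1 ≠ q.1)
    (hc : colorOf χ p.1 q.1 = true) : RedLink χ p q ∨ RedLink χ q p := by
  obtain ⟨i, a⟩ := p
  obtain ⟨j, b⟩ := q
  have hij : (i : ℕ) ≠ j := fun h => hne (Fin.ext h)
  simp only [colorOf, Fin.lt_def] at hc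
  cases a <;> cases b <;> simp only [SlotAdj, slotPos, Bool.toNat_true, Bool.toNat_false] at h
  · omega
  · refine Or.inr ⟨by simp; omega, rfl, rfl, ?_⟩
    rwa [if_neg (by omega)] at hc
  · refine Or.inl ⟨by simp; omega, rfl, rfl, ?_⟩
    rwa [if_pos (by omega)] at hc
  · omega

lemma exists_sched (hχ : Admissible χ) (n : ℕ) (S : Finset (Fin k × Bool)) (hn : #S = n)
    (hS : ∀ p q, RedLink χ p q → (p ∈ S ↔ q ∈ S)) :
    Sched StrongPair (WeakPair χ) (FullPair χ) SlotAdj S := by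
  induction n using Nat.strong_induction_on generalizing S with
  | _ n ih =>
    rcases S.eq_empty_or_nonempty with rfl | hne
    · exact Sched.empty
    by_cases hfree : ∃ l ∈ S, ∀ m, ¬ RedLink χ l m ∧ ¬ RedLink χ m l
    · obtain ⟨l, hl, hfree⟩ := hfree
      rw [← insert_erase hl]
      refine Sched.single l _ (notMem_erase _ _) ?_
        (ih _ (hn ▸ card_erase_lt_of_mem hl) _ rfl ?_)
      · intro m hm
        by_cases h : l.1 = m.1 ∨ ¬ SlotAdj l m
        · exact Or.inl ⟨(ne_of_mem_erase hm).symm, h⟩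
        · push Not at h
          refine Or.inr ⟨h.1, h.2, ?_⟩
          by_contra hc
          rw [Bool.not_eq_false] at hc
          exact (h.2.redLink h.1 hc).elim (hfree m).1 (hfree m).2
      · intro p q hpq
        have hp : p ≠ l := fun h => (hfree q).1 (h ▸ hpq)
        have hq : q ≠ l := fun h => (hfree p).2 (h ▸ hpq)
        simp [mem_erase, hp, hq, hS p q hpq]
    · push Not at hfree
      have : Std.Irrefl (Relation.TransGen (DepEdge χ)) := ⟨hχ⟩
      have hwf := Finite.wellFounded_of_trans_of_irrefl (Relation.TransGen (DepEdge χ))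
      obtain ⟨p₀, hp₀⟩ := hne
      obtain ⟨j, ⟨p, hp, rfl⟩, hmin⟩ := hwf.has_min {j | ∃ p ∈ S, p.1 = j} ⟨_, p₀, hp₀, rfl⟩
      obtain ⟨l, m, hlm, hl, hm, hpl⟩ : ∃ l m, RedLink χ l m ∧ l ∈ S ∧ m ∈ S ∧ (p = l ∨ p = m) := by
        obtain ⟨m, hm⟩ := hfree p hp
        by_cases h : RedLink χ p m
        · exact ⟨p, m, h, hp, (hS _ _ h).1 hp, Or.inl rfl⟩
        · exact ⟨m, p, hm h, (hS _ _ (hm h)).2 hp, hp, Or.inr rfl⟩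
      have hml : m ≠ l := by
        rintro rfl
        have := hlm.1
        omega
      rw [← insert_erase hl, ← insert_erase (mem_erase.2 ⟨hml, hm⟩)]
      have hcol : colorOf χ l.1 m.1 = true := by
        rw [colorOf, if_pos (by rw [Fin.lt_def, ← hlm.1]; omega)]
        exact hlm.2.2.2
      have hlm' : l.1 ≠ m.1 := by
        intro h
        have h1 := hlm.1
        rw [h] at h1
        omega
      have hposl : slotPos l = 2 * (l.1 : ℕ) + 1 := by rw [slotPos, hlm.2.1, Bool.toNat_true]
      have hposm : slotPos m = 2 * (l.1 : ℕ) + 2 := by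
        rw [slotPos, hlm.2.2.1, Bool.toNat_false, ← hlm.1]; ring
      refine Sched.pair l m _ (by simp) (notMem_erase _ _) hml.symm
        (Or.inl (by rw [hposl, hposm])) ?_ (ih _ ?_ _ rfl ?_)
      · intro q hq
        obtain ⟨hqm, hql, hq⟩ : q ≠ m ∧ q ≠ l ∧ q ∈ S := by simpa [mem_erase] using hq
        have hposq : slotPos q = 2 * (q.1 : ℕ) + q.2.toNat := rfl
        have hql' : slotPos q ≠ slotPos l := fun h => hql (slotPos_injective h)
        have hqm' : slotPos q ≠ slotPos m := fun h => hqm (slotPos_injective h)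
        have hb := Bool.toNat_le q.2
        have hl1 : StrongPair l q := by
          refine ⟨hql.symm, or_iff_not_imp_left.2 fun h hadj => ?_⟩
          have h' : (l.1 : ℕ) ≠ q.1 := fun h' => h (Fin.ext h')
          unfold SlotAdj at hadj
          omega
        have hm1 : StrongPair m q := by
          refine ⟨hqm.symm, or_iff_not_imp_left.2 fun h hadj => ?_⟩
          have h' : (m.1 : ℕ) ≠ q.1 := fun h' => h (Fin.ext h')
          have := hlm.1
          unfold SlotAdj at hadj
          omega
        by_cases hqi : q.1 = l.1
        · refine Or.inl ⟨hl1, by rw [hqi]; exact hlm'.symm, ?_, by rw [hqi, colorOf_comm, hcol]⟩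
          have h' : (q.1 : ℕ) = l.1 := by rw [hqi]
          unfold SlotAdj
          omega
        by_cases hqi' : q.1 = m.1
        · refine Or.inr ⟨⟨by rw [hqi']; exact hlm', ?_, by rw [hqi', hcol]⟩, hm1⟩
          have h' : (q.1 : ℕ) = m.1 := by rw [hqi']
          have := hlm.1
          unfold SlotAdj
          omega
        by_cases hc : colorOf χ l.1 q.1 = true
        · exact Or.inr ⟨⟨Ne.symm hqi, hl1.2.resolve_left (Ne.symm hqi), hc⟩, hm1⟩
        by_cases hc' : colorOf χ m.1 q.1 = true
        · exact Or.inl ⟨hl1, Ne.symm hqi', hm1.2.resolve_left (Ne.symm hqi'), hc'⟩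
        rw [Bool.not_eq_true] at hc hc'
        refine absurd (Relation.TransGen.single ?_) (hmin q.1 ⟨q, hq, rfl⟩)
        exact ⟨l.1, m.1, hlm.1, hpl.imp (congrArg _) (congrArg _), hqi, hqi', hlm.2.2.2, hc, hc'⟩
      · rw [← hn]
        exact (card_le_card (erase_subset _ _)).trans_lt (card_erase_lt_of_mem hl)
      · intro p q hpq
        have hpm : p ≠ m := by
          rintro rfl
          exact absurd (hpq.2.1.symm.trans hlm.2.2.1) (by simp)
        have hql : q ≠ l := by
          rintro rfl
          exact absurd (hpq.2.2.1.symm.trans hlm.2.1) (by simp)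
        have hiff : p = l ↔ q = m := by
          constructor
          · rintro rfl
            exact Prod.ext (Fin.ext (hpq.1.symm.trans hlm.1)) (hpq.2.2.1.trans hlm.2.2.1.symm)
          · rintro rfl
            exact Prod.ext (Fin.ext (by have := hpq.1; have := hlm.1; omega))
              (hpq.2.1.trans hlm.2.1.symm)
        simp only [mem_erase, ne_eq, hpm, hql, hiff, hS p q hpq, not_false_eq_true, true_and]

end Scheduling

section Preparation

open Finset
open scoped Classical

lemma sum_card_filter_eq_card_interedges {V : Type*} (H : SimpleGraph V) (A B : Finset V) :
    #(H.interedges A B) = ∑ x ∈ A, #(B.filter (H.Adj x)) := by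
  rw [SimpleGraph.interedges, Rel.interedges, card_filter, sum_product]
  simp only [card_filter]

lemma card_interedges_comm {V : Type*} (H : SimpleGraph V) (A B : Finset V) :
    #(H.interedges A B) = #(H.interedges B A) := by
  have hsymm := H.symm
  exact Rel.card_interedges_comm A B

lemma typicalDense_of_interedges {V : Type*} {G H : SimpleGraph V} {X Y : Finset V} {T : Prop}
    {σ δ : ℝ} (hσ : 0 ≤ σ) (hH : ∀ x ∈ X, ∀ y ∈ Y, H.Adj x y ↔ (G.Adj x y ↔ T))
    (h : ∀ A ⊆ X, ∀ B ⊆ Y, σ * #X ≤ #A → σ * #Y ≤ #B →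
      δ * (#A * #B) ≤ #(H.interedges A B)) : TypicalDense G σ δ X Y T := by
  intro W hW hcW
  by_contra hcon
  rw [not_le] at hcon
  set A := X.filter fun x => #(W.filter fun y => G.Adj x y ↔ T) < δ * #W with hA
  have h1 := h A (filter_subset _ _) W hW hcon.le hcW
  have hne : A.Nonempty := by
    rw [← card_pos]
    have : (0 : ℝ) < #A := lt_of_le_of_lt (by positivity) hcon
    exact_mod_cast this
  have h2 : ∑ x ∈ A, (#(W.filter (H.Adj x)) : ℝ) < ∑ x ∈ A, δ * #W := by
    refine sum_lt_sum_of_nonempty hne fun x hx => ?_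
    obtain ⟨hxX, hx⟩ := mem_filter.1 hx
    rwa [filter_congr fun y hy => hH x hxX y (hW hy)]
  rw [sum_const, nsmul_eq_mul] at h2
  rw [sum_card_filter_eq_card_interedges] at h1
  push_cast at h1
  linarith

lemma typicalFull_of_interedges {V : Type*} {G H : SimpleGraph V} {X Y : Finset V} {T : Prop}
    {σ γ : ℝ} (hσ : 0 ≤ σ) (hH : ∀ x ∈ X, ∀ y ∈ Y, H.Adj x y ↔ ¬ (G.Adj x y ↔ T))
    (h : ∀ A ⊆ X, ∀ B ⊆ Y, σ * #X ≤ #A → σ * #Y ≤ #B →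
      #(H.interedges A B) ≤ γ * (#A * #B)) : TypicalFull G σ γ X Y T := by
  intro W hW hcW
  by_contra hcon
  rw [not_le] at hcon
  set A := X.filter fun x => γ * #W < #(W.filter fun y => ¬ (G.Adj x y ↔ T)) with hA
  have h1 := h A (filter_subset _ _) W hW hcon.le hcW
  have hne : A.Nonempty := by
    rw [← card_pos]
    have : (0 : ℝ) < #A := lt_of_le_of_lt (by positivity) hcon
    exact_mod_cast this
  have h2 : ∑ x ∈ A, γ * #W < ∑ x ∈ A, (#(W.filter (H.Adj x)) : ℝ) := by
    refine sum_lt_sum_of_nonempty hne fun x hx => ?_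
    obtain ⟨hxX, hx⟩ := mem_filter.1 hx
    rwa [filter_congr fun y hy => hH x hxX y (hW hy)]
  rw [sum_const, nsmul_eq_mul] at h2
  rw [sum_card_filter_eq_card_interedges] at h1
  push_cast at h1
  linarith

/-- In a graph with more than `#bad * n ^ (N - 2)` copies of `K_N`, some copy avoids `bad`. -/
lemma exists_clique_avoiding {V : Type*} [Fintype V] {H : SimpleGraph V} {N : ℕ} (hN : 2 ≤ N)
    {bad : Finset (V × V)} (h : #bad * Fintype.card V ^ (N - 2) < cliqueCount H N) :
    ∃ x : Fin N → V, ∀ i j, i ≠ j → H.Adj (x i) (x j) ∧ (x i, x j) ∉ bad := by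
  by_contra! hcon
  refine absurd h (not_lt.2 ?_)
  have hsub : {s : Finset V | s.card = N ∧ H.IsClique (s : Set V)} ⊆
      ((bad ×ˢ powersetCard (N - 2) univ).image fun q => insert q.1.1 (insert q.1.2 q.2) :
        Finset (Finset V)) := by
    rintro s ⟨hs, hcl⟩
    let e := s.equivFinOfCardEq hs
    obtain ⟨i, j, hij, hbad⟩ := hcon fun i => (e.symm i : V)
    have hne : (e.symm i : V) ≠ e.symm j :=
      fun h => hij (e.symm.injective (Subtype.ext h))
    have hbad := hbad (hcl (e.symm i).2 (e.symm j).2 hne)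
    have hj : (e.symm j : V) ∈ s.erase (e.symm i) := mem_erase.2 ⟨hne.symm, (e.symm j).2⟩
    rw [mem_coe, mem_image]
    refine ⟨((e.symm i, e.symm j), (s.erase (e.symm i)).erase (e.symm j)), ?_, ?_⟩
    · rw [mem_product, mem_powersetCard]
      refine ⟨hbad, subset_univ _, ?_⟩
      rw [card_erase_of_mem hj, card_erase_of_mem (e.symm i).2, hs]
      omega
    · rw [insert_erase hj, insert_erase (e.symm i).2]
  calc cliqueCount H N ≤ #((bad ×ˢ powersetCard (N - 2) univ).image
        fun q : (V × V) × Finset V => insert q.1.1 (insert q.1.2 q.2)) := by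
        rw [← Set.ncard_coe_finset]
        exact Set.ncard_le_ncard hsub (finite_toSet _)
    _ ≤ #bad * (Fintype.card V).choose (N - 2) := by
        refine card_image_le.trans ?_
        rw [card_product, card_powersetCard, card_univ]
    _ ≤ _ := Nat.mul_le_mul_left _ (Nat.choose_le_pow _ _)

lemma noHole_of_not_containsBlowup {V : Type*} {G : SimpleGraph V} {t : ℕ}
    (h : ¬ ContainsBlowup Gᶜ 2 t) : NoHole G t := by
  intro A B hAB hA hB
  by_contra! hcon
  obtain ⟨A', hA', hcA⟩ := exists_subset_card_eq hA
  obtain ⟨B', hB', hcB⟩ := exists_subset_card_eq hB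
  have hd := hAB.mono hA' hB'
  have hadj : ∀ x ∈ A', ∀ y ∈ B', Gᶜ.Adj x y := fun x hx y hy =>
    (SimpleGraph.compl_adj G x y).2 ⟨fun h => disjoint_left.1 hd hx (h ▸ hy),
      hcon x (hA' hx) y (hB' hy)⟩
  refine h ⟨![A', B'], ?_, ?_, ?_⟩
  · simp [Fin.forall_fin_two, hcA, hcB]
  · simp [Fin.forall_fin_two, hd, hd.symm]
  · simp only [Fin.forall_fin_two]
    simp only [ne_eq, not_true, false_implies, Matrix.cons_val_zero, Matrix.cons_val_one, true_and,
      and_true]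
    exact ⟨fun _ => hadj, fun _ y hy x hx => (hadj x hx y hy).symm⟩

lemma exists_indMonPath_of_isIndPath {n m : ℕ} {G : SimpleGraph (Fin n)} {v : ℕ → Fin n}
    (h : IsIndPath G m v) : HasIndMonPath G m := by
  refine ⟨fun i => v i, fun i j hij => (h i j hij j.2).1, fun i j => ?_⟩
  rcases lt_trichotomy i j with hij | rfl | hij
  · rw [(h i j hij j.2).2]
    have : (i : ℕ) < j := hij
    omega
  · simp
  · rw [G.adj_comm, (h j i hij i.2).2]
    have : (j : ℕ) < i := hij
    omega

lemma exists_threshold {c : ℝ} (hc : 0 < c) (hc' : c ≤ 1 / 4) (m : ℕ) :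
    ∃ n₀ : ℕ, ∀ n : ℕ, n₀ ≤ n → m ≤ n ∧ 0 < ⌈c * (n : ℝ) / Real.log n⌉₊ ∧
      (⌈c * (n : ℝ) / Real.log n⌉₊ : ℝ) ≤ 2 * c * n ∧
      ∃ L : ℕ, ⌈c * (n : ℝ) / Real.log n⌉₊ ≤ 2 ^ L ∧
        (2 : ℝ) ^ L * (3 * L + 1) ≤ 28 * c * n := by
  have h1 : ∀ᶠ n : ℕ in Filter.atTop, Real.log n ≤ c * n := by
    have := (Real.isLittleO_log_id_atTop.bound hc).and (Filter.eventually_ge_atTop 1)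
    filter_upwards [tendsto_natCast_atTop_atTop.eventually this] with n hn
    have h0 : (0 : ℝ) ≤ n := by positivity
    have h2 := hn.1
    rw [Real.norm_of_nonneg (Real.log_nonneg hn.2), id, Real.norm_of_nonneg h0] at h2
    exact h2
  have h2 : ∀ᶠ n : ℕ in Filter.atTop, 1 ≤ Real.log n :=
    (Real.tendsto_log_atTop.comp tendsto_natCast_atTop_atTop).eventually_ge_atTop 1
  obtain ⟨n₀, hn₀⟩ := Filter.eventually_atTop.1 (h1.and h2)
  refine ⟨max n₀ (max m 1), fun n hn => ?_⟩
  obtain ⟨hlog, hlog1⟩ := hn₀ n (by omega)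
  have hn1 : (1 : ℝ) ≤ n := by exact_mod_cast (by omega : 1 ≤ n)
  have hlog0 : 0 < Real.log n := by linarith
  set y := c * (n : ℝ) / Real.log n with hy
  have hy1 : 1 ≤ y := (one_le_div hlog0).2 hlog
  have hycn : y ≤ c * n := div_le_self (by positivity) hlog1
  have hty : (⌈y⌉₊ : ℝ) ≤ 2 * y := by
    have := Nat.ceil_lt_add_one (by linarith : 0 ≤ y)
    linarith
  have ht : 0 < ⌈y⌉₊ := Nat.ceil_pos.2 (by linarith)
  refine ⟨by omega, ht, by linarith, Nat.clog 2 ⌈y⌉₊, Nat.le_pow_clog (by norm_num) _, ?_⟩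
  set L := Nat.clog 2 ⌈y⌉₊ with hL
  have hL2 : (2 : ℝ) ^ L ≤ 4 * y := by
    have : 2 ^ L ≤ 2 * ⌈y⌉₊ := by
      rcases Nat.lt_or_ge 1 ⌈y⌉₊ with h | h
      · have h3 := Nat.pow_pred_clog_lt_self (b := 2) (by norm_num) h
        have h4 : 0 < L := Nat.clog_pos (by norm_num) h
        rw [← hL] at h3
        have h5 : 2 ^ L = 2 * 2 ^ (L - 1) := by
          rw [← pow_succ', Nat.sub_add_cancel h4]
        rw [Nat.pred_eq_sub_one] at h3
        omega
      · have : ⌈y⌉₊ = 1 := by omega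
        rw [hL, this]; simp
    have h3 : (2 : ℝ) ^ L ≤ 2 * ⌈y⌉₊ := by exact_mod_cast this
    linarith
  have hLlog : (L : ℝ) ≤ 2 * Real.log n := by
    have h3 : (2 : ℝ) ^ L ≤ n := by nlinarith
    have h4 := Real.log_le_log (by positivity) h3
    rw [Real.log_pow] at h4
    have := Real.log_two_gt_d9
    have h5 : (0 : ℝ) ≤ L := by positivity
    nlinarith
  have hyl : y * Real.log n = c * n := by rw [hy]; field_simp
  calc (2 : ℝ) ^ L * (3 * L + 1) ≤ (4 * y) * (7 * Real.log n) := by gcongr; linarith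
    _ = 28 * (y * Real.log n) := by ring
    _ = 28 * c * n := by rw [hyl]; ring

/-- A pair regular in the complement is hereditarily sparse or hereditarily dense. -/
lemma RegularPair.sparse_or_dense {V : Type*} {G : SimpleGraph V} {ρ d γ : ℝ} {X Y : Finset V}
    (hXY : Disjoint X Y) (h : RegularPair Gᶜ ρ d X Y) (hρ : ρ ≤ γ / 4) :
    (∀ A ⊆ X, ∀ B ⊆ Y, ρ * #X ≤ #A → ρ * #Y ≤ #B → #(G.interedges A B) ≤ γ * (#A * #B)) ∨
    ∀ A ⊆ X, ∀ B ⊆ Y, ρ * #X ≤ #A → ρ * #Y ≤ #B → γ / 4 * (#A * #B) ≤ #(G.interedges A B) := by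
  obtain ⟨H, hH⟩ : ∃ H, H = Gᶜ := ⟨_, rfl⟩
  rw [← hH] at h
  have hcard : ∀ A ⊆ X, ∀ B ⊆ Y,
      (#(G.interedges A B) : ℝ) = #A * #B - #(H.interedges A B) := by
    intro A hA B hB
    subst hH
    have h1 := G.card_interedges_add_card_interedges_compl (hXY.mono hA hB)
    rw [eq_sub_iff_add_eq, ← Nat.cast_mul, ← h1, Nat.cast_add]
    congr!
  rcases le_or_gt (γ / 2) (1 - d) with hd | hd
  · right
    intro A hA B hB h1 h2
    have h3 := (abs_le.1 (h A hA B hB h1 h2)).2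
    have h4 : (0 : ℝ) ≤ #A * #B := by positivity
    have h5 := mul_le_mul_of_nonneg_right hd h4
    have h6 := mul_le_mul_of_nonneg_right hρ h4
    rw [hcard A hA B hB]
    linarith
  · left
    intro A hA B hB h1 h2
    have h3 := (abs_le.1 (h A hA B hB h1 h2)).1
    have h4 : (0 : ℝ) ≤ #A * #B := by positivity
    have h5 := (abs_nonneg _).trans (h A hA B hB h1 h2)
    have h6 := mul_le_mul_of_nonneg_right hd.le h4
    have h7 := mul_le_mul_of_nonneg_right hρ h4
    rw [hcard A hA B hB]
    linarith

end Preparation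

section Assembly

open Finset
open scoped Classical

lemma hasIndMonPath_of_slots {n k t : ℕ} {χ : Fin k → Fin k → Bool} (hχ : Admissible χ)
    {G : SimpleGraph (Fin n)} {X : Fin k × Bool → Finset (Fin n)} {σ δ₁ δ₂ γ : ℝ}
    (hlt : ∀ p q, slotPos p < slotPos q → AllLT (X p) (X q))
    (hG : NoHole G t) (ht : 0 < t) (hX : ∀ p, t ≤ σ * #(X p))
    (hσ : 0 ≤ σ) (hσ' : (2 * k + 1) * σ ≤ δ₂ ^ (2 * k)) (hδ₂ : 0 < δ₂) (hδ₂1 : δ₂ ≤ 1)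
    (hδ : δ₂ ≤ δ₁ - γ)
    (hD₁ : ∀ p q, StrongPair p q → TypicalDense G σ δ₁ (X p) (X q) (SlotAdj p q))
    (hD₂ : ∀ p q, WeakPair χ p q → TypicalDense G σ δ₂ (X p) (X q) (SlotAdj p q))
    (hF : ∀ p q, FullPair χ p q → TypicalFull G σ γ (X p) (X q) (SlotAdj p q)) :
    HasIndMonPath G (2 * k) := by
  have hdisj : ∀ p q, p ≠ q → Disjoint (X p) (X q) := by
    intro p q hpq
    rw [disjoint_left]
    intro x hp hq
    rcases lt_or_gt_of_ne (slotPos_injective.ne hpq) with h | h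
    · exact lt_irrefl _ (hlt _ _ h x hp x hq)
    · exact lt_irrefl _ (hlt _ _ h x hq x hp)
  have hcard : #(univ : Finset (Fin k × Bool)) = 2 * k := by
    simp [mul_comm]
  obtain ⟨x, hx, hadj⟩ := Sched.exists_embedding hdisj (fun p q => ⟨.symm, .symm⟩) hG ht hX hσ hδ₂
    hδ₂1 hδ hD₁ hD₂ hF (exists_sched hχ _ univ hcard fun p q _ => by simp) hcard.le X
    (fun p _ => Subset.rfl) (fun p _ => by
      rw [hcard]
      push_cast
      calc (2 * (k : ℝ) + 1) * (σ * #(X p)) = #(X p) * ((2 * k + 1) * σ) := by ring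
        _ ≤ _ := by gcongr)
  have hslot : ∀ j : Fin (2 * k), ∃ p : Fin k × Bool, slotPos p = j := by
    intro j
    refine ⟨(⟨j / 2, by omega⟩, decide (j.val % 2 = 1)), ?_⟩
    rcases Nat.mod_two_eq_zero_or_one j with h | h <;> simp [slotPos, h] <;> omega
  choose s hs using hslot
  refine ⟨fun j => x (s j), fun i j hij => ?_, fun i j => ?_⟩
  · refine hlt (s i) (s j) ?_ _ (hx _ (mem_univ _)) _ (hx _ (mem_univ _))
    rw [hs, hs]
    exact hij
  · by_cases hij : i = j
    · subst hij
      simp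
    · have hne : s i ≠ s j := fun h => hij (Fin.ext (by rw [← hs, ← hs, h]))
      rw [hadj _ (mem_univ _) _ (mem_univ _) hne, SlotAdj, hs, hs]

/-- Large subsets of `X` and `Y` span few edges. -/
def SparsePair {V : Type*} (G : SimpleGraph V) (ρ γ : ℝ) (X Y : Finset V) : Prop :=
  ∀ A ⊆ X, ∀ B ⊆ Y, ρ * #X ≤ #A → ρ * #Y ≤ #B → #(G.interedges A B) ≤ γ * (#A * #B)

/-- Large subsets of `X` and `Y` span many edges. -/
def DensePair {V : Type*} (G : SimpleGraph V) (ρ δ : ℝ) (X Y : Finset V) : Prop :=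
  ∀ A ⊆ X, ∀ B ⊆ Y, ρ * #X ≤ #A → ρ * #Y ≤ #B → δ * (#A * #B) ≤ #(G.interedges A B)

lemma SparsePair.symm {V : Type*} {G : SimpleGraph V} {ρ γ : ℝ} {X Y : Finset V}
    (h : SparsePair G ρ γ X Y) : SparsePair G ρ γ Y X := by
  intro A hA B hB hcA hcB
  rw [card_interedges_comm, mul_comm (#A : ℝ)]
  exact h B hB A hA hcB hcA

lemma DensePair.symm {V : Type*} {G : SimpleGraph V} {ρ δ : ℝ} {X Y : Finset V}
    (h : DensePair G ρ δ X Y) : DensePair G ρ δ Y X := by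
  intro A hA B hB hcA hcB
  rw [card_interedges_comm, mul_comm (#A : ℝ)]
  exact h B hB A hA hcB hcA

lemma SparsePair.restrict {V : Type*} {G : SimpleGraph V} {ρ σ γ : ℝ} {X Y X' Y' : Finset V}
    (h : SparsePair G ρ γ X Y) (hX : X' ⊆ X) (hY : Y' ⊆ Y) (hcX : ρ * #X ≤ σ * #X')
    (hcY : ρ * #Y ≤ σ * #Y') : SparsePair G σ γ X' Y' :=
  fun A hA B hB hcA hcB =>
    h A (hA.trans hX) B (hB.trans hY) (hcX.trans hcA) (hcY.trans hcB)

lemma DensePair.restrict {V : Type*} {G : SimpleGraph V} {ρ σ δ : ℝ} {X Y X' Y' : Finset V}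
    (h : DensePair G ρ δ X Y) (hX : X' ⊆ X) (hY : Y' ⊆ Y) (hcX : ρ * #X ≤ σ * #X')
    (hcY : ρ * #Y ≤ σ * #Y') : DensePair G σ δ X' Y' :=
  fun A hA B hB hcA hcB =>
    h A (hA.trans hX) B (hB.trans hY) (hcX.trans hcA) (hcY.trans hcB)

lemma DensePair.mono {V : Type*} {G : SimpleGraph V} {ρ δ δ' : ℝ} {X Y : Finset V}
    (h : DensePair G ρ δ X Y) (hδ : δ' ≤ δ) : DensePair G ρ δ' X Y :=
  fun A hA B hB hcA hcB =>
    (mul_le_mul_of_nonneg_right hδ (by positivity)).trans (h A hA B hB hcA hcB)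

lemma RegularPair.densePair {V : Type*} {H : SimpleGraph V} {ρ d δ : ℝ} {X Y : Finset V}
    (h : RegularPair H ρ d X Y) (hδ : δ ≤ d - ρ) : DensePair H ρ δ X Y := by
  intro A hA B hB hcA hcB
  have h1 := (abs_le.1 (h A hA B hB hcA hcB)).1
  have h2 : (0 : ℝ) ≤ #A * #B := by positivity
  have h3 := mul_le_mul_of_nonneg_right hδ h2
  linarith

lemma typical_of_parts {V : Type*} {k : ℕ} {χ : Fin k → Fin k → Bool} {G : SimpleGraph V}
    {U : Fin k → Finset V} {X : Fin k × Bool → Finset V} {ρ σ δ γ : ℝ} (hσ : 0 ≤ σ)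
    (hγδ : γ / 4 ≤ δ) (hXU : ∀ p, X p ⊆ U p.1) (hcard : ∀ p, ρ * #(U p.1) ≤ σ * #(X p))
    (hU : ∀ i j, i ≠ j → Disjoint (U i) (U j))
    (hcompl : ∀ i j, i ≠ j → DensePair Gᶜ ρ δ (U i) (U j))
    (hred : ∀ i j, i ≠ j → colorOf χ i j = true → SparsePair G ρ γ (U i) (U j))
    (hblue : ∀ i j, i ≠ j → colorOf χ i j = false → DensePair G ρ (γ / 4) (U i) (U j))
    (hpair : ∀ i, DensePair G σ δ (X (i, false)) (X (i, true))) :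
    (∀ p q, StrongPair p q → TypicalDense G σ δ (X p) (X q) (SlotAdj p q)) ∧
    (∀ p q, WeakPair χ p q → TypicalDense G σ (γ / 4) (X p) (X q) (SlotAdj p q)) ∧
    ∀ p q, FullPair χ p q → TypicalFull G σ γ (X p) (X q) (SlotAdj p q) := by
  have hstrong : ∀ p q, StrongPair p q → ∀ δ' ≤ δ,
      TypicalDense G σ δ' (X p) (X q) (SlotAdj p q) := by
    rintro ⟨i, a⟩ ⟨j, b⟩ ⟨hne, h⟩ δ' hδ'
    by_cases hij : i = j
    · subst hij
      have hT : SlotAdj (i, a) (i, b) := by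
        cases a <;> cases b <;> simp [SlotAdj, slotPos] at hne ⊢
      refine typicalDense_of_interedges hσ (H := G) (fun x _ y _ => by simp [hT]) ?_
      cases a <;> cases b <;> simp only [ne_eq, not_true] at hne
      · exact (hpair i).mono hδ'
      · exact (hpair i).symm.mono hδ'
    · have hT := h.resolve_left hij
      refine typicalDense_of_interedges hσ (H := Gᶜ) (fun x hx y hy => ?_)
        (((hcompl i j hij).mono hδ').restrict (hXU (i, a)) (hXU (j, b)) (hcard (i, a))
          (hcard (j, b)))
      have hxy : x ≠ y := fun h =>
        disjoint_left.1 (hU i j hij) (hXU (i, a) hx) (h ▸ hXU (j, b) hy)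
      simp [hT, hxy]
  refine ⟨fun p q h => hstrong p q h δ le_rfl, ?_, ?_⟩
  · rintro p q (h | ⟨hne, hT, hc⟩)
    · exact hstrong p q h _ hγδ
    · exact typicalDense_of_interedges hσ (H := G) (fun x _ y _ => by simp [hT])
        ((hblue _ _ hne hc).restrict (hXU p) (hXU q) (hcard p) (hcard q))
  · rintro p q ⟨hne, hT, hc⟩
    exact typicalFull_of_interedges hσ (H := G) (fun x _ y _ => by simp [hT])
      ((hred _ _ hne hc).restrict (hXU p) (hXU q) (hcard p) (hcard q))

/-- A positive density of copies of `K_N` yields `N` linear-sized sets, in order, inside parts that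
are pairwise regular with positive density. -/
lemma exists_ordered_parts (N : ℕ) (hN : 2 ≤ N) {η ρ : ℝ} (hη : 0 < η) (hρ : 0 < ρ) :
    ∃ M : ℕ, 0 < M ∧ ∀ n : ℕ, M ≤ n → ∀ H : SimpleGraph (Fin n),
      η * (n : ℝ) ^ N ≤ cliqueCount H N → ∃ U Y : Fin N → Finset (Fin n),
        (∀ i, Y i ⊆ U i ∧ n ≤ M * #(Y i) ∧ #(U i) ≤ 2 * N * #(Y i)) ∧
        (∀ i j, i < j → AllLT (Y i) (Y j)) ∧
        ∀ i j, i ≠ j → Disjoint (U i) (U j) ∧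
          ∃ d, η / 16 ≤ d ∧ RegularPair H ρ d (U i) (U j) := by
  obtain ⟨M, hM, h⟩ := exists_regular_parts (η / 4) ρ (by positivity) hρ
  refine ⟨2 * N * M, by positivity, fun n hn H hcl => ?_⟩
  have hNM : N * M ≤ n := le_trans (by nlinarith) hn
  have hn0 : 0 < n := lt_of_lt_of_le (by positivity) hn
  obtain ⟨bad, π, hbad, hπ, hreg⟩ := h H (by
    rw [Fintype.card_fin]
    exact le_trans (by nlinarith) hNM)
  rw [Fintype.card_fin] at hbad hπ
  obtain ⟨x, hx⟩ := exists_clique_avoiding (H := H) hN (bad := bad) (by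
    rw [Fintype.card_fin]
    have hn0' : (0 : ℝ) < n := by exact_mod_cast hn0
    have h1 : (n : ℝ) ^ N = n ^ 2 * n ^ (N - 2) := by
      rw [← pow_add, Nat.add_sub_cancel' hN]
    have h2 : (#bad : ℝ) * n ^ (N - 2) ≤ η / 2 * n ^ N := by
      rw [h1, ← mul_assoc]
      gcongr
      linarith
    have h3 : (#bad : ℝ) * n ^ (N - 2) < cliqueCount H N :=
      lt_of_lt_of_le (lt_of_le_of_lt h2 (by gcongr; linarith)) hcl
    exact_mod_cast h3)
  have hbig : ∀ i, N ≤ #(π (x i)) := fun i => by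
    have := hNM.trans (hπ (x i))
    rw [mul_comm] at this
    exact Nat.le_of_mul_le_mul_left this hM
  have hq : ∀ i, 0 < #(π (x i)) / N := fun i => Nat.div_pos (hbig i) (by omega)
  obtain ⟨τ, Y, hY, hlt⟩ := exists_sorted (fun i => #(π (x i)) / N) hq (fun i => π (x i))
    fun i => Nat.mul_div_le _ _
  have hUY : ∀ i, #(π (x (τ i))) ≤ 2 * N * #(Y i) := fun i => by
    have h1 := hq (τ i)
    have h2 := (hY i).2
    have h3 := Nat.div_add_mod (#(π (x (τ i)))) N
    have h4 := Nat.mod_lt (#(π (x (τ i)))) (by omega : 0 < N)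
    nlinarith
  refine ⟨fun i => π (x (τ i)), Y, fun i => ⟨(hY i).1, ?_, hUY i⟩, hlt, fun i j hij => ?_⟩
  · calc n ≤ M * #(π (x (τ i))) := hπ _
      _ ≤ M * (2 * N * #(Y i)) := Nat.mul_le_mul_left _ (hUY i)
      _ = _ := by ring
  · obtain ⟨h1, h2⟩ := hx (τ i) (τ j) (τ.injective.ne hij)
    obtain ⟨h3, d, hd, h4⟩ := hreg _ _ h1 h2
    exact ⟨h3, d, by linarith, h4⟩

lemma hasIndMonPath_of_ordered_parts {k N n t : ℕ}
    (hRamsey : ∀ χ : Fin N → Fin N → Bool,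
      ∃ g : Fin k → Fin N, StrictMono g ∧ Admissible (fun i j => χ (g i) (g j)))
    {G : SimpleGraph (Fin n)} {σ ρ δ γ : ℝ} {U Y A B : Fin N → Finset (Fin n)}
    (hσ : 0 ≤ σ) (hσ' : (2 * k + 1) * σ ≤ (γ / 4) ^ (2 * k)) (hγ : 0 < γ) (hγ1 : γ ≤ 1)
    (hγδ : γ / 4 ≤ δ - γ) (hG : NoHole G t) (ht : 0 < t)
    (hYU : ∀ i, Y i ⊆ U i) (hlt : ∀ i j, i < j → AllLT (Y i) (Y j))
    (hA : ∀ i, A i ⊆ Y i) (hB : ∀ i, B i ⊆ Y i) (hAB : ∀ i, AllLT (A i) (B i))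
    (hcA : ∀ i, ρ * #(U i) ≤ σ * #(A i)) (hcB : ∀ i, ρ * #(U i) ≤ σ * #(B i))
    (htA : ∀ i, t ≤ σ * #(A i)) (htB : ∀ i, t ≤ σ * #(B i))
    (hU : ∀ i j, i ≠ j → Disjoint (U i) (U j))
    (hcompl : ∀ i j, i ≠ j → DensePair Gᶜ ρ δ (U i) (U j))
    (halt : ∀ i j, i ≠ j → SparsePair G ρ γ (U i) (U j) ∨ DensePair G ρ (γ / 4) (U i) (U j))
    (hpair : ∀ i, DensePair G σ δ (A i) (B i)) : HasIndMonPath G (2 * k) := by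
  obtain ⟨g, hg, hχ⟩ := hRamsey fun i j => decide (SparsePair G ρ γ (U i) (U j))
  have hcolor : ∀ i j, colorOf (fun i j => decide (SparsePair G ρ γ (U (g i)) (U (g j)))) i j =
      decide (SparsePair G ρ γ (U (g i)) (U (g j))) := by
    intro i j
    unfold colorOf
    split_ifs
    · rfl
    · exact decide_eq_decide.2 ⟨.symm, .symm⟩
  let X : Fin k × Bool → Finset (Fin n) := fun p => bif p.2 then B (g p.1) else A (g p.1)
  have hXY : ∀ p, X p ⊆ Y (g p.1) := by
    rintro ⟨i, _ | _⟩
    exacts [hA _, hB _]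
  obtain ⟨h₁, h₂, h₃⟩ := typical_of_parts (X := X) (U := fun i => U (g i)) (δ := δ) hσ
    (by linarith) (fun p => (hXY p).trans (hYU _))
    (by rintro ⟨i, _ | _⟩; exacts [hcA _, hcB _])
    (fun i j hij => hU _ _ (hg.injective.ne hij))
    (fun i j hij => hcompl _ _ (hg.injective.ne hij))
    (fun i j _ hc => of_decide_eq_true ((hcolor i j).symm.trans hc))
    (fun i j hij hc => (halt _ _ (hg.injective.ne hij)).resolve_left
      (of_decide_eq_false ((hcolor i j).symm.trans hc)))
    (fun i => hpair (g i))
  refine hasIndMonPath_of_slots hχ ?_ hG ht ?_ hσ hσ' (by linarith) (by linarith) hγδ h₁ h₂ h₃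
  · intro p q hpq
    rcases lt_trichotomy p.1 q.1 with h | h | h
    · exact fun x hx y hy => hlt _ _ (hg h) x (hXY p hx) y (hXY q hy)
    · obtain ⟨i, a⟩ := p
      obtain ⟨j, b⟩ := q
      obtain rfl : i = j := h
      cases a <;> cases b <;> simp [slotPos] at hpq
      exact hAB _
    · exfalso
      have h' : (q.1 : ℕ) < p.1 := h
      have hb : q.2.toNat ≤ 1 := Bool.toNat_le _
      have ha : p.2.toNat ≤ 1 := Bool.toNat_le _
      unfold slotPos at hpq
      omega
  · rintro ⟨i, _ | _⟩
    exacts [htA _, htB _]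

end Assembly

theorem stmt_4 (k N : ℕ) (hk : 1 ≤ k) (hN : 0 < N)
    (hRamsey : ∀ χ : Fin N → Fin N → Bool,
      ∃ g : Fin k → Fin N, StrictMono g ∧ Admissible (fun i j => χ (g i) (g j))) :
    ∀ η : ℝ, 0 < η → ∃ c : ℝ, 0 < c ∧ ∃ n₀ : ℕ, ∀ n : ℕ, n₀ ≤ n →
      ∀ G : SimpleGraph (Fin n),
        ¬ HasIndMonPath G (2 * k) →
        η * (n : ℝ) ^ N ≤ (cliqueCount Gᶜ N : ℝ) →
        ContainsBlowup Gᶜ 2 ⌈c * (n : ℝ) / Real.log n⌉₊ := by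
  classical
  intro η hη
  rcases Nat.lt_or_ge k 2 with hk2 | hk2
  · obtain rfl : k = 1 := by omega
    obtain ⟨n₀, hn₀⟩ := exists_threshold (c := 1 / 4) (by norm_num) le_rfl 4
    refine ⟨1 / 4, by norm_num, n₀, fun n hn G hpath _ => ?_⟩
    obtain ⟨hn4, ht, htn, -⟩ := hn₀ n hn
    set t := ⌈1 / 4 * (n : ℝ) / Real.log n⌉₊
    by_contra hcon
    have h2t : 2 * t ≤ n := by
      have : 2 * (t : ℝ) ≤ n := by linarith
      exact_mod_cast this
    obtain ⟨A, -, hA⟩ := Finset.exists_subset_card_eq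
      (show t ≤ (Finset.univ : Finset (Fin n)).card by simp; omega)
    obtain ⟨a, -, b, -, hab⟩ := noHole_of_not_containsBlowup hcon A Aᶜ disjoint_compl_right hA.ge
      (by rw [Finset.card_compl, Fintype.card_fin]; omega)
    have key : ∀ a b : Fin n, G.Adj a b → a < b → False := fun a b hab hlt =>
      hpath ⟨![a, b], by
        intro i j hij
        fin_cases i <;> fin_cases j <;> simp at hij ⊢
        exact hlt, by
        intro i j
        fin_cases i <;> fin_cases j <;> simp [hab, hab.symm]⟩
    rcases lt_or_gt_of_ne hab.ne with h | h
    exacts [key a b hab h, key b a hab.symm h]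
  · have hN2 : 2 ≤ N := by
      obtain ⟨g, hg, -⟩ := hRamsey fun _ _ => true
      have := Fintype.card_le_of_injective g hg.injective
      simp only [Fintype.card_fin] at this
      omega
    obtain ⟨C, hC⟩ : ∃ C : ℕ, C = (4 * (2 * k)) ^ (2 * k) + 1 := ⟨_, rfl⟩
    have hC0 : (0 : ℝ) < C := by rw [hC]; positivity
    obtain ⟨δ, hδ⟩ : ∃ δ : ℝ, δ = min (η / 16) (1 / (64 * C)) / 2 := ⟨_, rfl⟩
    have hδ0 : 0 < δ := by rw [hδ]; positivity
    have hδ1 : 2 * δ ≤ η / 16 := by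
      rw [hδ, mul_div_cancel₀ _ (two_ne_zero)]; exact min_le_left _ _
    have hδ2 : 2 * δ ≤ 1 / (64 * C) := by
      rw [hδ, mul_div_cancel₀ _ (two_ne_zero)]; exact min_le_right _ _
    have hδ3 : δ ≤ 1 := by
      have hC1 : (1 : ℝ) ≤ C := by
        rw [hC]
        push_cast
        linarith [show (0 : ℝ) ≤ (4 * (2 * k)) ^ (2 * k) by positivity]
      have : 1 / (64 * (C : ℝ)) ≤ 1 := (div_le_one (by positivity)).2 (by linarith)
      linarith
    obtain ⟨σ, hσ⟩ : ∃ σ : ℝ, σ = (δ / 2 / 4) ^ (2 * k) / (2 * k + 1) := ⟨_, rfl⟩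
    have hσ0 : 0 < σ := by rw [hσ]; positivity
    obtain ⟨M₂, hM₂, hinner⟩ := exists_internal_pair (2 * k) (by omega) (min σ δ)
      (lt_min hσ0 hδ0)
    have hM₂0 : (0 : ℝ) < M₂ := by exact_mod_cast hM₂
    have hN0 : (0 : ℝ) < N := by exact_mod_cast hN
    obtain ⟨ρ, hρ⟩ : ∃ ρ : ℝ, ρ = min (σ / (2 * N * M₂)) (δ / 8) := ⟨_, rfl⟩
    have hρ0 : 0 < ρ := by rw [hρ]; positivity
    have hρσ : ρ * (2 * N * M₂) ≤ σ := by
      rw [← le_div_iff₀ (by positivity), hρ]; exact min_le_left _ _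
    have hρδ : ρ ≤ δ / 8 := by rw [hρ]; exact min_le_right _ _
    obtain ⟨M₁, hM₁, houter⟩ := exists_ordered_parts N hN2 hη hρ0
    have hM₁0 : (0 : ℝ) < M₁ := by exact_mod_cast hM₁
    obtain ⟨c, hc⟩ : ∃ c : ℝ, c = min (1 / 4) (min (1 / (56 * C * M₁ : ℝ)) (σ / (2 * M₁ * M₂))) :=
      ⟨_, rfl⟩
    have hc0 : 0 < c := by rw [hc]; positivity
    have hc1 : c ≤ 1 / 4 := by rw [hc]; exact min_le_left _ _
    have hc2 : c * (56 * C * M₁) ≤ 1 := by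
      rw [← le_div_iff₀ (by positivity), hc]; exact (min_le_right _ _).trans (min_le_left _ _)
    have hc3 : c * (2 * M₁ * M₂) ≤ σ := by
      rw [← le_div_iff₀ (by positivity), hc]; exact (min_le_right _ _).trans (min_le_right _ _)
    obtain ⟨n₀, hn₀⟩ := exists_threshold hc0 hc1 (M₁ * M₂)
    refine ⟨c, hc0, n₀, fun n hn G hpath hcl => ?_⟩
    obtain ⟨hnM, ht, htn, L, htL, hL⟩ := hn₀ n hn
    set t := ⌈c * (n : ℝ) / Real.log n⌉₊
    by_contra hcon
    have hG := noHole_of_not_containsBlowup hcon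
    have hGL : NoHole G (2 ^ L) := fun A B hAB hA hB => hG A B hAB (htL.trans hA) (htL.trans hB)
    obtain ⟨U, Y, hUY, hlt, hreg⟩ := houter n (le_trans (Nat.le_mul_of_pos_right _ hM₂) hnM) Gᶜ hcl
    have hnY : ∀ i, (n : ℝ) ≤ M₁ * (Y i).card := fun i => by exact_mod_cast (hUY i).2.1
    have hMY : ∀ i, M₂ ≤ (Y i).card := fun i =>
      Nat.le_of_mul_le_mul_left (hnM.trans (hUY i).2.1) hM₁
    have hLY : ∀ i, 2 * ((4 * (2 * k)) ^ (2 * k) + 1) * (2 ^ L * (3 * L + 1)) ≤ (Y i).card := by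
      intro i
      rw [← hC]
      have : (2 * C * (2 ^ L * (3 * L + 1)) : ℝ) ≤ (Y i).card := by
        calc (2 * C * (2 ^ L * (3 * L + 1)) : ℝ) ≤ 2 * C * (28 * c * n) := by gcongr
          _ ≤ 2 * C * (28 * c * (M₁ * (Y i).card)) := by gcongr; exact hnY i
          _ = c * (56 * C * M₁) * (Y i).card := by ring
          _ ≤ _ := mul_le_of_le_one_left (by positivity) hc2
      exact_mod_cast this
    choose A hA B hB hcA hcB hAB hpair using fun i => hinner G L (Y i) hGL
      (fun v hv => hpath (exists_indMonPath_of_isIndPath hv)) (hMY i) (hLY i)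
    have hρU : ∀ i (Z : Finset (Fin n)), (Y i).card ≤ M₂ * Z.card →
        ρ * (U i).card ≤ σ * Z.card := by
      intro i Z hZ
      have h1 : ((U i).card : ℝ) ≤ 2 * N * (Y i).card := by exact_mod_cast (hUY i).2.2
      have h2 : ((Y i).card : ℝ) ≤ M₂ * Z.card := by exact_mod_cast hZ
      calc ρ * (U i).card ≤ ρ * (2 * N * (M₂ * Z.card)) := by
            gcongr
            exact h1.trans (by gcongr)
        _ = ρ * (2 * N * M₂) * Z.card := by ring
        _ ≤ _ := by gcongr
    have htZ : ∀ i (Z : Finset (Fin n)), (Y i).card ≤ M₂ * Z.card → t ≤ σ * Z.card := by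
      intro i Z hZ
      have h2 : ((Y i).card : ℝ) ≤ M₂ * Z.card := by exact_mod_cast hZ
      calc (t : ℝ) ≤ 2 * c * n := htn
        _ ≤ 2 * c * (M₁ * (M₂ * Z.card)) := by
            gcongr
            exact (hnY i).trans (by gcongr)
        _ = c * (2 * M₁ * M₂) * Z.card := by ring
        _ ≤ _ := by gcongr
    have hCr : (C : ℝ) = (4 * ((2 * k : ℕ) : ℝ)) ^ (2 * k) + 1 := by rw [hC]; push_cast; ring
    refine hpath (hasIndMonPath_of_ordered_parts hRamsey (σ := σ) (ρ := ρ) (δ := δ) (γ := δ / 2)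
      hσ0.le ?_ (by linarith) (by linarith) (by linarith) hG ht (fun i => (hUY i).1) hlt hA hB hAB
      (fun i => hρU i _ (hcA i)) (fun i => hρU i _ (hcB i)) (fun i => htZ i _ (hcA i))
      (fun i => htZ i _ (hcB i)) (fun i j hij => (hreg i j hij).1) ?_ ?_ ?_)
    · rw [hσ, mul_div_cancel₀ _ (by positivity)]
    · intro i j hij
      obtain ⟨-, d, hd, h⟩ := hreg i j hij
      convert h.densePair (δ := δ) (by linarith)
    · intro i j hij
      obtain ⟨hdisj, d, hd, h⟩ := hreg i j hij
      exact h.sparse_or_dense hdisj (by linarith)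
    · intro i A' hA' B' hB' h1 h2
      refine le_trans (mul_le_mul_of_nonneg_right ?_ (by positivity))
        (hpair i A' hA' B' hB' (le_trans ?_ h1) (le_trans ?_ h2))
      · rw [← hCr]
        linarith [min_le_right σ δ]
      · gcongr; exact min_le_left _ _
      · gcongr; exact min_le_left _ _
end

section
/- Let 𝒢 be a class of finite simple graphs that is closed under isomorphism and under taking induced subgraphs. Suppose there exists a function f : (0,∞) → (0,∞) such that for every ε > 0 and every graph G ∈ 𝒢 on n vertices with at least ε·C(n,2) edges, G contains K_2[⌊f(ε)·n⌋]. Then for every integer k ≥ 2 there exists a function h : (0,∞) → (0,∞) such that for every ε > 0 and every graph G ∈ 𝒢 on n vertices containing at least ε·n^k copies of K_k, G contains K_k[⌊h(ε)·n⌋]. -/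
section LinearBlowups

open Finset Function
open scoped Classical

/-- The number of tuples of `S` lying in the box with sides `U i`. -/
noncomputable def boxCount {ι V : Type*} [Fintype ι] (S : Finset (ι → V))
    (U : ι → Finset V) : ℕ :=
  #{s ∈ S | ∀ i, s i ∈ U i}

/-- The number of ordered adjacent pairs with both ends in `X`. -/
noncomputable def adjPairs {V : Type*} (G : SimpleGraph V) (X : Finset V) : ℕ :=
  #{p ∈ X ×ˢ X | G.Adj p.1 p.2}

/-- Every vertex set `X` spanning at least `ε |X|²` ordered adjacent pairs contains a complete
pair of sets of size at least `g ε |X|`. -/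
def HasLinearBicliques {V : Type*} (G : SimpleGraph V) (g : ℝ → ℝ) : Prop :=
  ∀ ε : ℝ, 0 < ε → ∀ X : Finset V, X.Nonempty → ε * (#X : ℝ) ^ 2 ≤ adjPairs G X →
    ∃ A ⊆ X, ∃ B ⊆ X, g ε * #X ≤ #A ∧ g ε * #X ≤ #B ∧ ∀ a ∈ A, ∀ b ∈ B, G.Adj a b

section Boxes

lemma update_subset {ι V : Type*} {U : ι → Finset V} {a : ι} {Y : Finset V} (hY : Y ⊆ U a) (i : ι) :
    update U a Y i ⊆ U i := by
  by_cases hi : i = a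
  · subst hi; simpa
  · simp [hi]

variable {ι V : Type*} [Fintype ι]

lemma boxCount_le_prod (S : Finset (ι → V)) (U : ι → Finset V) :
    boxCount S U ≤ ∏ i, #(U i) := by
  rw [← Fintype.card_piFinset]
  refine card_le_card fun s hs => ?_
  simp only [mem_filter] at hs
  exact Fintype.mem_piFinset.2 hs.2

lemma boxCount_piFinset (U : ι → Finset V) {W : ι → Finset V} (h : ∀ i, W i ⊆ U i) :
    boxCount (Fintype.piFinset U) W = ∏ i, #(W i) := by
  rw [← Fintype.card_piFinset]
  refine congrArg card ?_
  ext s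
  simp only [mem_filter, Fintype.mem_piFinset]
  exact ⟨fun hs => hs.2, fun hs => ⟨fun i => h i (hs i), hs⟩⟩

lemma boxCount_eq_add (S : Finset (ι → V)) (U : ι → Finset V) (a : ι) {Y : Finset V}
    (hY : Y ⊆ U a) :
    boxCount S U = boxCount S (update U a Y) + boxCount S (update U a (U a \ Y)) := by
  unfold boxCount
  rw [← card_filter_add_card_filter_not (s := {s ∈ S | ∀ i, s i ∈ U i}) (fun s => s a ∈ Y),
    filter_filter, filter_filter]
  congr 2 <;>
  · ext s
    simp only [mem_filter]
    refine and_congr_right fun _ => ⟨fun h i => ?_, fun h => ⟨fun i => ?_, ?_⟩⟩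
    · by_cases hi : i = a
      · subst hi
        simp_all
      · simpa [hi] using h.1 i
    · by_cases hi : i = a
      · subst hi
        have := h i
        simp only [update_self, mem_sdiff] at this
        first | exact hY this | exact this.1
      · simpa [hi] using h i
    · have := h a
      simp only [update_self, mem_sdiff] at this
      first | exact this | exact this.2

lemma sum_boxCount_singleton (S : Finset (ι → V)) (U : ι → Finset V) (a : ι) :
    ∑ x ∈ U a, boxCount S (update U a {x}) = boxCount S U := by
  unfold boxCount
  rw [card_eq_sum_card_fiberwise (f := fun s : ι → V => s a) (t := U a)]
  · refine sum_congr rfl fun x hx => ?_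
    rw [filter_filter]
    congr 1
    ext s
    simp only [mem_filter]
    refine and_congr_right fun _ => ⟨fun h => ⟨fun i => ?_, ?_⟩, fun h i => ?_⟩
    · by_cases hi : i = a
      · subst hi
        have := h i
        simp only [update_self, mem_singleton] at this
        rwa [this]
      · simpa [hi] using h i
    · simpa using h a
    · by_cases hi : i = a
      · subst hi
        simp [h.2]
      · simpa [hi] using h.1 i
  · intro s hs
    simp only [coe_filter, Set.mem_ofPred_eq] at hs
    exact hs.2 a

lemma prod_card_update_mul (U : ι → Finset V) (a : ι) (Y : Finset V) :
    (∏ i, #(update U a Y i)) * #(U a) = #Y * ∏ i, #(U i) := by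
  have h : ∀ i, #(update U a Y i) = update (fun i => #(U i)) a #Y i := fun i => by
    by_cases hi : i = a
    · subst hi; simp
    · simp [hi]
  simp_rw [h]
  rw [prod_update_of_mem (mem_univ a), ← mul_prod_erase univ (fun i => #(U i)) (mem_univ a),
    sdiff_singleton_eq_erase]
  ring

/-- A box contains an equilateral sub-box that is at least as dense. -/
lemma exists_equilateral_box (S : Finset (ι → V)) {t : ℕ} (ht : 1 ≤ t) (U : ι → Finset V)
    (hU : ∀ i, t ≤ #(U i)) :
    ∃ W : ι → Finset V, (∀ i, W i ⊆ U i) ∧ (∀ i, #(W i) = t) ∧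
      boxCount S U * t ^ Fintype.card ι ≤ boxCount S W * ∏ i, #(U i) := by
  induction hN : ∑ i, #(U i) using Nat.strong_induction_on generalizing U with
  | _ N ih =>
  subst hN
  by_cases hall : ∀ i, #(U i) = t
  · exact ⟨U, fun i => Subset.rfl, hall, by simp [hall]⟩
  push Not at hall
  obtain ⟨a, ha⟩ := hall
  have hlt : t < #(U a) := lt_of_le_of_ne (hU a) (Ne.symm ha)
  obtain ⟨x, hx, hxle⟩ : ∃ x ∈ U a, #(U a) * boxCount S (update U a {x}) ≤ boxCount S U := by
    by_contra! hcon
    have hlt' := sum_lt_sum_of_nonempty (card_pos.1 (by omega)) hcon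
    rw [← mul_sum, sum_boxCount_singleton, sum_const, smul_eq_mul] at hlt'
    exact lt_irrefl _ hlt'
  have hadd := boxCount_eq_add S U a (singleton_subset_iff.2 hx)
  set U' := update U a (U a \ {x}) with hU'
  have hcard : #(U a \ {x}) = #(U a) - 1 := by
    rw [sdiff_singleton_eq_erase, card_erase_of_mem hx]
  have hprod := prod_card_update_mul U a (U a \ {x})
  rw [hcard] at hprod
  have hsub : ∀ i, U' i ⊆ U i := update_subset sdiff_subset
  have hsum : ∑ i, #(U' i) < ∑ i, #(U i) :=
    sum_lt_sum (fun i _ => card_le_card (hsub i)) ⟨a, mem_univ a, by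
      simp only [hU', update_self, hcard]; omega⟩
  obtain ⟨W, hWsub, hWcard, hW⟩ := ih _ hsum U' (fun i => by
    by_cases hi : i = a
    · subst hi; simp only [hU', update_self, hcard]; omega
    · simpa [hU', hi] using hU i) rfl
  refine ⟨W, fun i => (hWsub i).trans (hsub i), hWcard, ?_⟩
  obtain ⟨m, hm⟩ : ∃ m, #(U a) = m + 1 := ⟨#(U a) - 1, by omega⟩
  have hm0 : 0 < m := by omega
  rw [hm] at hprod hxle
  simp only [Nat.add_sub_cancel] at hprod
  refine Nat.le_of_mul_le_mul_left ?_ hm0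
  calc m * (boxCount S U * t ^ Fintype.card ι)
      = m * boxCount S U * t ^ Fintype.card ι := by ring
    _ ≤ (m + 1) * boxCount S U' * t ^ Fintype.card ι := by gcongr ?_ * _; nlinarith
    _ = (m + 1) * (boxCount S U' * t ^ Fintype.card ι) := by ring
    _ ≤ (m + 1) * (boxCount S W * ∏ i, #(U' i)) := by gcongr
    _ = boxCount S W * ((∏ i, #(U' i)) * (m + 1)) := by ring
    _ = m * (boxCount S W * ∏ i, #(U i)) := by rw [hprod]; ring

/-- Density increment: a dense equilateral box contains a large equilateral box none of whose
large sub-boxes is noticeably denser. -/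
lemma exists_upper_regular_box (S : Finset (ι → V)) {ν τ : ℝ} (hν : 0 < ν) (hν1 : ν ≤ 1)
    (hτ : 0 < τ) (J : ℕ) : ∀ (M : ℝ) (t : ℕ) (U : ι → Finset V), 0 < M →
      1 < M * (1 + τ) ^ J → 1 ≤ t → (∀ i, #(U i) = t) →
      M * (t : ℝ) ^ Fintype.card ι ≤ boxCount S U →
      ∃ (M' : ℝ) (t' : ℕ) (U' : ι → Finset V), M ≤ M' ∧ 1 ≤ t' ∧ ν ^ J * t ≤ t' ∧
        (∀ i, #(U' i) = t') ∧ M' * (t' : ℝ) ^ Fintype.card ι ≤ boxCount S U' ∧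
        ∀ W : ι → Finset V, (∀ i, W i ⊆ U' i) → (∀ i, ν * t' ≤ #(W i)) →
          (boxCount S W : ℝ) ≤ (1 + τ) * M' * ∏ i, (#(W i) : ℝ) := by
  induction J with
  | zero =>
    intro M t U hM hJ ht hU hden
    exfalso
    have h1 : (boxCount S U : ℝ) ≤ (t : ℝ) ^ Fintype.card ι := by
      have := boxCount_le_prod S U
      simp only [hU, prod_const, card_univ] at this
      exact_mod_cast this
    have h2 : (0 : ℝ) < (t : ℝ) ^ Fintype.card ι := by positivity
    simp only [pow_zero, mul_one] at hJ
    nlinarith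
  | succ J ih =>
    intro M t U hM hJ ht hU hden
    by_cases hreg : ∀ W : ι → Finset V, (∀ i, W i ⊆ U i) → (∀ i, ν * t ≤ #(W i)) →
        (boxCount S W : ℝ) ≤ (1 + τ) * M * ∏ i, (#(W i) : ℝ)
    · refine ⟨M, t, U, le_rfl, ht, ?_, hU, hden, hreg⟩
      exact mul_le_of_le_one_left (by positivity) (pow_le_one₀ hν.le hν1)
    push Not at hreg
    obtain ⟨W, hWsub, hWcard, hW⟩ := hreg
    have ht0 : (0 : ℝ) < t := by exact_mod_cast ht
    have hs1 : 1 ≤ ⌈ν * t⌉₊ := Nat.one_le_ceil_iff.2 (by positivity)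
    obtain ⟨W', -, hW'card, hW'⟩ :=
      exists_equilateral_box S hs1 W (fun i => Nat.ceil_le.2 (hWcard i))
    have hprod : (0 : ℝ) < ∏ i, (#(W i) : ℝ) :=
      prod_pos fun i _ => lt_of_lt_of_le (by positivity) (hWcard i)
    have hden' : M * (1 + τ) * ((⌈ν * t⌉₊ : ℕ) : ℝ) ^ Fintype.card ι ≤ boxCount S W' := by
      have hW'' : (boxCount S W : ℝ) * ((⌈ν * t⌉₊ : ℕ) : ℝ) ^ Fintype.card ι ≤
          boxCount S W' * ∏ i, (#(W i) : ℝ) := by exact_mod_cast hW'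
      refine le_of_mul_le_mul_right ?_ hprod
      refine le_trans ?_ hW''
      calc _ = (1 + τ) * M * (∏ i, (#(W i) : ℝ)) * ((⌈ν * t⌉₊ : ℕ) : ℝ) ^ Fintype.card ι := by
            ring
        _ ≤ _ := by gcongr
    obtain ⟨M', t', U', h1, h2, h3, h4, h5, h6⟩ := ih (M * (1 + τ)) ⌈ν * t⌉₊ W' (by positivity)
      (by rw [pow_succ'] at hJ; linarith) hs1 hW'card hden'
    refine ⟨M', t', U', by nlinarith, h2, ?_, h4, h5, h6⟩
    calc ν ^ (J + 1) * t = ν ^ J * (ν * t) := by ring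
      _ ≤ ν ^ J * (⌈ν * t⌉₊ : ℕ) := by gcongr; exact Nat.le_ceil _
      _ ≤ t' := h3

lemma prod_card_le_of_thin {ν : ℝ} {t : ℕ} {Q : ι → Finset V} (a : ι)
    (hQ : ∀ i, #(Q i) ≤ t) (ha : (#(Q a) : ℝ) ≤ ν * t) :
    ∏ i, (#(Q i) : ℝ) ≤ ν * (t : ℝ) ^ Fintype.card ι := by
  rw [← mul_prod_erase univ _ (mem_univ a)]
  have h3 : ∏ i ∈ univ.erase a, (#(Q i) : ℝ) ≤ (t : ℝ) ^ (Fintype.card ι - 1) := by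
    rw [← card_univ, ← card_erase_of_mem (mem_univ a), ← prod_const]
    exact prod_le_prod (fun i _ => by positivity) fun i _ => by exact_mod_cast hQ i
  have h4 : Fintype.card ι = Fintype.card ι - 1 + 1 := by
    have : 0 < Fintype.card ι := Fintype.card_pos_iff.2 ⟨a⟩
    omega
  calc _ ≤ (ν * t) * (t : ℝ) ^ (Fintype.card ι - 1) :=
        mul_le_mul ha h3 (prod_nonneg fun _ _ => Nat.cast_nonneg _)
          ((Nat.cast_nonneg _).trans ha)
    _ = ν * (t : ℝ) ^ (Fintype.card ι - 1 + 1) := by ring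
    _ = _ := by rw [← h4]

/-- If no large sub-box is noticeably denser than an equilateral box, the number of tuples lost
in passing to a sub-box is controlled by the lost volume. -/
lemma boxCount_sub_le_of_upper_regular (S : Finset (ι → V)) {ν K : ℝ} {t : ℕ}
    {U W : ι → Finset V} (hν1 : ν ≤ 1) (hK : 0 ≤ K) (hU : ∀ i, #(U i) = t)
    (hreg : ∀ W : ι → Finset V, (∀ i, W i ⊆ U i) → (∀ i, ν * t ≤ #(W i)) →
      (boxCount S W : ℝ) ≤ K * ∏ i, (#(W i) : ℝ))
    (hWsub : ∀ i, W i ⊆ U i) (hW : ∀ i, ν * t ≤ #(W i)) (hν : 0 ≤ ν) (I : Finset ι) :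
    (boxCount S U : ℝ) - boxCount S (I.piecewise W U) ≤
      K * ((∏ i, (#(U i) : ℝ)) - ∏ i, (#(I.piecewise W U i) : ℝ)) +
        #I * (ν * (t : ℝ) ^ Fintype.card ι) := by
  induction I using Finset.induction_on with
  | empty => simp
  | insert a I ha ih =>
    rw [piecewise_insert]
    set P := I.piecewise W U with hP
    have hPa : P a = U a := by simp [hP, ha]
    have hPsub : ∀ i, P i ⊆ U i := fun i => by
      by_cases hi : i ∈ I <;> simp [hP, hi, hWsub]
    have hPcard : ∀ i, ν * t ≤ #(P i) := fun i => by
      by_cases hi : i ∈ I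
      · simpa [hP, hi] using hW i
      · rw [hP, piecewise_eq_of_notMem _ _ _ hi, hU]
        exact mul_le_of_le_one_left (by positivity) hν1
    have hWP : W a ⊆ P a := hPa ▸ hWsub a
    have hadd := boxCount_eq_add S P a hWP
    have hvol := boxCount_eq_add (Fintype.piFinset U) P a hWP
    set Q := update P a (P a \ W a) with hQ
    have hQsub : ∀ i, Q i ⊆ U i := fun i => (update_subset sdiff_subset i).trans (hPsub i)
    rw [boxCount_piFinset U hPsub, boxCount_piFinset U hQsub,
      boxCount_piFinset U fun i => (update_subset hWP i).trans (hPsub i)] at hvol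
    have hadd' : (boxCount S P : ℝ) = boxCount S (update P a (W a)) + boxCount S Q := by
      exact_mod_cast hadd
    have hvol' : ∏ i, (#(P i) : ℝ) =
        ∏ i, (#(update P a (W a) i) : ℝ) + ∏ i, (#(Q i) : ℝ) := by
      exact_mod_cast hvol
    have hbound : (boxCount S Q : ℝ) ≤
        K * ∏ i, (#(Q i) : ℝ) + ν * (t : ℝ) ^ Fintype.card ι := by
      have hvol0 : 0 ≤ ν * (t : ℝ) ^ Fintype.card ι := by positivity
      have hprod0 : 0 ≤ K * ∏ i, (#(Q i) : ℝ) := 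
        mul_nonneg hK (prod_nonneg fun _ _ => Nat.cast_nonneg _)
      by_cases hbig : ν * t ≤ #(P a \ W a)
      · have := hreg Q hQsub (fun i => by
          by_cases hi : i = a
          · subst hi; simpa [hQ] using hbig
          · simpa [hQ, hi] using hPcard i)
        linarith
      · push Not at hbig
        have h1 : (boxCount S Q : ℝ) ≤ ∏ i, (#(Q i) : ℝ) := by
          exact_mod_cast boxCount_le_prod S Q
        have h2 : ∏ i, (#(Q i) : ℝ) ≤ ν * (t : ℝ) ^ Fintype.card ι :=
          prod_card_le_of_thin a (fun i => hU i ▸ card_le_card (hQsub i))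
            (by rw [hQ, update_self]; exact hbig.le)
        linarith
    rw [card_insert_of_notMem ha]
    rw [Nat.cast_succ]
    rw [hadd', hvol'] at ih
    linarith

/-- A dense set of tuples is dense in every large sub-box of some large equilateral box; the
density in these sub-boxes does not depend on the scale `μ`. -/
lemma exists_lower_regular_box (ι : Type*) [Fintype ι] {ε μ : ℝ} (hε : 0 < ε) (hμ : 0 < μ)
    (hμ1 : μ ≤ 1) :
    ∃ c : ℝ, 0 < c ∧ ∀ {V : Type} [Fintype V] [Nonempty V] (S : Finset (ι → V)),
      ε * (Fintype.card V : ℝ) ^ Fintype.card ι ≤ #S →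
      ∃ (t : ℕ) (U : ι → Finset V), 1 ≤ t ∧ c * Fintype.card V ≤ t ∧ (∀ i, #(U i) = t) ∧
        ∀ W : ι → Finset V, (∀ i, W i ⊆ U i) → (∀ i, μ * t ≤ #(W i)) →
          ε / 2 * ∏ i, (#(W i) : ℝ) ≤ boxCount S W := by
  set k := Fintype.card ι with hk
  have hτ : 0 < μ ^ k / 4 := by positivity
  obtain ⟨J, hJ⟩ := pow_unbounded_of_one_lt (1 / ε) (show 1 < 1 + μ ^ k / 4 by linarith)
  set ν : ℝ := min μ (ε * μ ^ k / (4 * (k + 1))) with hνdef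
  have hν : 0 < ν := lt_min hμ (by positivity)
  have hνμ : ν ≤ μ := min_le_left _ _
  have hkν : k * ν ≤ ε * μ ^ k / 4 := by
    have h1 : ν ≤ ε * μ ^ k / (4 * (k + 1)) := min_le_right _ _
    rw [le_div_iff₀ (by positivity)] at h1
    nlinarith
  refine ⟨ν ^ J, by positivity, fun {V} _ _ S hS => ?_⟩
  have hJ' : 1 < ε * (1 + μ ^ k / 4) ^ J := by
    rwa [div_lt_iff₀' hε] at hJ
  obtain ⟨M, t, U, hM, ht, htc, hU, hden, hreg⟩ :=
    exists_upper_regular_box S hν (hνμ.trans hμ1) hτ J ε (Fintype.card V) (fun _ => univ) hε hJ'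
      Fintype.card_pos (fun _ => card_univ) (by simpa [boxCount] using hS)
  refine ⟨t, U, ht, htc, hU, fun W hWU hW => ?_⟩
  have hM0 : 0 < M := hε.trans_le hM
  have hlost := boxCount_sub_le_of_upper_regular S (hνμ.trans hμ1)
    (show 0 ≤ (1 + μ ^ k / 4) * M by positivity) hU hreg hWU
    (fun i => le_trans (by gcongr) (hW i)) hν.le univ
  rw [piecewise_univ] at hlost
  simp only [hU, prod_const, card_univ, ← hk] at hlost
  have hvol : (μ * t) ^ k ≤ ∏ i, (#(W i) : ℝ) := by
    rw [hk, ← card_univ, ← prod_const]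
    exact prod_le_prod (fun i _ => by positivity) fun i _ => hW i
  rw [mul_pow] at hvol
  have hT : (0 : ℝ) ≤ (t : ℝ) ^ k := pow_nonneg (Nat.cast_nonneg _) _
  have hw : (0 : ℝ) ≤ ∏ i, (#(W i) : ℝ) := prod_nonneg fun _ _ => Nat.cast_nonneg _
  generalize (t : ℝ) ^ k = T at *
  generalize ∏ i, (#(W i) : ℝ) = w at *
  have h1 : (k : ℝ) * (ν * T) ≤ ε / 4 * w := by nlinarith
  have h2 : μ ^ k / 4 * M * T ≤ M / 4 * w := by nlinarith
  have h3 : 0 ≤ μ ^ k * M * w := mul_nonneg (by positivity) hw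
  nlinarith

end Boxes

section Graphs

variable {V : Type*} (G : SimpleGraph V)

lemma adjPairs_mono {X Y : Finset V} (h : X ⊆ Y) : adjPairs G X ≤ adjPairs G Y :=
  card_le_card (filter_subset_filter _ (product_subset_product h h))

lemma card_mul_card_le_adjPairs {X A B : Finset V} (hA : A ⊆ X) (hB : B ⊆ X)
    (h : ∀ a ∈ A, ∀ b ∈ B, G.Adj a b) : #A * #B ≤ adjPairs G X := by
  rw [← card_product]
  refine card_le_card fun p hp => ?_
  rw [mem_product] at hp
  exact mem_filter.2 ⟨mem_product.2 ⟨hA hp.1, hB hp.2⟩, h _ hp.1 _ hp.2⟩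

lemma adjPairs_eq_sum (X : Finset V) : adjPairs G X = ∑ x ∈ X, #{y ∈ X | G.Adj x y} := by
  unfold adjPairs
  rw [card_filter, sum_product]
  simp only [card_filter]

lemma adjPairs_le_erase_add (X : Finset V) {x : V} (hx : x ∈ X) :
    adjPairs G (X.erase x) + 2 * #{y ∈ X | G.Adj x y} ≤ adjPairs G X := by
  have h : ((X.erase x ×ˢ X.erase x).filter fun p => G.Adj p.1 p.2) ∪
      ((({y ∈ X | G.Adj x y}).image fun y => (x, y)) ∪
        (({y ∈ X | G.Adj x y}).image fun y => (y, x))) ⊆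
      (X ×ˢ X).filter fun p => G.Adj p.1 p.2 := by
    rintro ⟨a, b⟩ hab
    simp only [mem_union, mem_filter, mem_product, mem_erase, mem_image, Prod.mk.injEq] at hab ⊢
    rcases hab with h | ⟨y, hy, rfl, rfl⟩ | ⟨y, hy, rfl, rfl⟩
    · tauto
    · tauto
    · exact ⟨⟨hy.1, hx⟩, hy.2.symm⟩
  refine le_trans (le_of_eq ?_) (card_le_card h)
  rw [card_union_of_disjoint, card_union_of_disjoint, card_image_of_injective,
    card_image_of_injective, adjPairs]
  · ring
  · intro a b hab; simpa using hab
  · intro a b hab; simpa using hab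
  · rw [disjoint_left]
    rintro ⟨a, b⟩ h1 h2
    simp only [mem_filter, mem_image, Prod.mk.injEq] at h1 h2
    obtain ⟨y, hy, rfl, rfl⟩ := h1
    obtain ⟨z, hz, rfl, rfl⟩ := h2
    exact G.loopless.irrefl _ hy.2
  · rw [disjoint_left]
    rintro ⟨a, b⟩ h1 h2
    simp only [mem_union, mem_filter, mem_product, mem_erase, mem_image, Prod.mk.injEq] at h1 h2
    rcases h2 with ⟨y, hy, rfl, rfl⟩ | ⟨y, hy, rfl, rfl⟩ <;> simp at h1

/-- A sparse set contains sparse subsets of every smaller size. -/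
lemma exists_sparse_subset_card_eq {d : ℝ} (hd : 0 ≤ d) {r : ℕ} (Y : Finset V) (hr : r ≤ #Y)
    (hY : (adjPairs G Y : ℝ) ≤ d * (#Y : ℝ) ^ 2) :
    ∃ Z ⊆ Y, #Z = r ∧ (adjPairs G Z : ℝ) ≤ d * (r : ℝ) ^ 2 := by
  induction hN : #Y using Nat.strong_induction_on generalizing Y with
  | _ N ih =>
  subst hN
  rcases hr.eq_or_lt with h | h
  · exact ⟨Y, Subset.rfl, h.symm, h ▸ hY⟩
  have hne : Y.Nonempty := card_pos.1 (by omega)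
  obtain ⟨x, hx, hdeg⟩ : ∃ x ∈ Y, adjPairs G Y ≤ #Y * #{y ∈ Y | G.Adj x y} := by
    by_contra! hcon
    have hlt := sum_lt_sum_of_nonempty hne hcon
    rw [← mul_sum, ← adjPairs_eq_sum, sum_const, smul_eq_mul] at hlt
    exact lt_irrefl _ hlt
  have hcard := card_erase_of_mem hx
  have herase := adjPairs_le_erase_add G Y hx
  obtain ⟨m, hm⟩ : ∃ m, #Y = m + 1 := ⟨#Y - 1, by omega⟩
  rw [hm] at hcard hdeg hY
  simp only [Nat.add_sub_cancel] at hcard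
  obtain ⟨Z, hZ, hZr, hZd⟩ := ih _ (by omega) (Y.erase x) (by omega) (by
    rw [hcard]
    have h1 : (adjPairs G (Y.erase x) : ℝ) + 2 * (#{y ∈ Y | G.Adj x y} : ℝ) ≤ adjPairs G Y := by
      exact_mod_cast herase
    have h2 : (adjPairs G Y : ℝ) ≤ (m + 1) * (#{y ∈ Y | G.Adj x y} : ℝ) := by
      exact_mod_cast hdeg
    push_cast at hY
    have hm0 : (0 : ℝ) ≤ m := by positivity
    have h3 : ((m : ℝ) + 1) * adjPairs G (Y.erase x) ≤ (m - 1) * adjPairs G Y := by nlinarith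
    rcases Nat.eq_zero_or_pos m with rfl | hmpos
    · have : (0 : ℝ) ≤ adjPairs G Y := by positivity
      push_cast at h3 ⊢
      nlinarith
    have hm1 : (1 : ℝ) ≤ m := by exact_mod_cast hmpos
    have h4 : ((m : ℝ) + 1) * adjPairs G (Y.erase x) ≤ (m + 1) * (d * m ^ 2) := by
      refine h3.trans ((mul_le_mul_of_nonneg_left hY (by linarith)).trans ?_)
      nlinarith [mul_nonneg hd hm0]
    exact le_of_mul_le_mul_left h4 (by linarith)) rfl
  exact ⟨Z, hZ.trans (erase_subset _ _), hZr, hZd⟩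

/-- If all large subsets of `X` are dense, then `X` contains a large complete multipartite
graph. -/
lemma exists_blowup_of_dense {g : ℝ → ℝ} (hG : HasLinearBicliques G g) {d : ℝ} (hd : 0 < d)
    (hg : 0 < g d) (hg1 : g d ≤ 1) (k : ℕ) : ∀ X : Finset V, X.Nonempty →
      (∀ Y ⊆ X, g d ^ k * #X ≤ #Y → d * (#Y : ℝ) ^ 2 ≤ adjPairs G Y) →
      ∃ U : Fin k → Finset V, (∀ i, U i ⊆ X) ∧ (∀ i, g d ^ k * #X ≤ #(U i)) ∧
        ∀ i j, i ≠ j → ∀ x ∈ U i, ∀ y ∈ U j, G.Adj x y := by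
  induction k with
  | zero => exact fun X _ _ => ⟨fun _ => ∅, fun i => i.elim0, fun i => i.elim0, fun i => i.elim0⟩
  | succ k ih =>
    intro X hX hdense
    have hX0 : (0 : ℝ) < #X := by exact_mod_cast card_pos.2 hX
    obtain ⟨A, hA, B, hB, hAc, hBc, hAB⟩ := hG d hd X hX (hdense X Subset.rfl
      (mul_le_of_le_one_left (by positivity) (pow_le_one₀ hg.le hg1)))
    have hstep : g d ^ (k + 1) * #X ≤ g d ^ k * #A := by
      rw [pow_succ, mul_assoc]; gcongr
    obtain ⟨U, hU, hUc, hUadj⟩ := ih A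
      (card_pos.1 (by exact_mod_cast (lt_of_lt_of_le (by positivity) hAc : (0 : ℝ) < #A)))
      fun Y hY hYc => hdense Y (hY.trans hA) (hstep.trans hYc)
    refine ⟨Fin.cons B U, ?_, ?_, ?_⟩
    · refine Fin.cases hB fun i => ?_
      exact (hU i).trans hA
    · refine Fin.cases ?_ fun i => ?_
      · refine le_trans ?_ hBc
        rw [pow_succ]
        gcongr
        exact mul_le_of_le_one_left hg.le (pow_le_one₀ hg.le hg1)
      · exact hstep.trans (hUc i)
    · refine Fin.cases ?_ fun i => ?_ <;> refine Fin.cases ?_ fun j => ?_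
      · exact fun h => absurd rfl h
      · exact fun _ x hx y hy => (hAB y (hU j hy) x hx).symm
      · exact fun _ x hx y hy => hAB x (hU i hx) y hy
      · exact fun h x hx y hy => hUadj i j (fun e => h (e ▸ rfl)) x hx y hy

/-- The pairs of sides of a box with many complete transversals span many edges. -/
lemma boxCount_mul_le {ι : Type*} [Fintype ι] (S : Finset (ι → V))
    (hS : ∀ s ∈ S, ∀ i j, i ≠ j → G.Adj (s i) (s j)) (W : ι → Finset V) {i j : ι}
    (hij : i ≠ j) :
    boxCount S W * (#(W i) * #(W j)) ≤
      #{p ∈ W i ×ˢ W j | G.Adj p.1 p.2} * ∏ l, #(W l) := by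
  have hprod : ∀ x y, (∏ l, #(update (update W i {x}) j {y} l)) * (#(W i) * #(W j)) =
      ∏ l, #(W l) := fun x y => by
    have h1 := prod_card_update_mul W i {x}
    have h2 := prod_card_update_mul (update W i {x}) j {y}
    rw [card_singleton, one_mul] at h1 h2
    rw [update_of_ne hij.symm] at h2
    rw [mul_comm #(W i), ← mul_assoc, h2, h1]
  have hsum : boxCount S W =
      ∑ p ∈ W i ×ˢ W j, boxCount S (update (update W i {p.1}) j {p.2}) := by
    rw [sum_product, ← sum_boxCount_singleton S W i]
    refine sum_congr rfl fun x _ => ?_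
    rw [← sum_boxCount_singleton S (update W i {x}) j, update_of_ne hij.symm]
  rw [hsum, sum_mul, card_filter, sum_mul]
  refine sum_le_sum fun p _ => ?_
  split_ifs with hp
  · rw [one_mul, ← hprod p.1 p.2]
    exact Nat.mul_le_mul_right _ (boxCount_le_prod _ _)
  · have : boxCount S (update (update W i {p.1}) j {p.2}) = 0 := by
      rw [boxCount, card_eq_zero, filter_eq_empty_iff]
      intro s hs hmem
      have h1 := hmem i
      have h2 := hmem j
      rw [update_of_ne hij, update_self, mem_singleton] at h1
      rw [update_self, mem_singleton] at h2
      exact hp (h1 ▸ h2 ▸ hS s hs i j hij)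
    simp [this]

/-- Between two sparse sets joined by many edges there is a large complete pair. -/
lemma exists_biclique_between {g : ℝ → ℝ} (hG : HasLinearBicliques G g) {δ κ : ℝ} (hδ : 0 < δ)
    (hκ : 0 < κ) (hκg : κ ≤ g (δ / 4) / 2) {r : ℕ} (hr : 1 ≤ r) {X Y : Finset V}
    (hX : #X = r) (hY : #Y = r)
    (hXY : δ * (r : ℝ) ^ 2 ≤ #{p ∈ X ×ˢ Y | G.Adj p.1 p.2})
    (hXs : (adjPairs G X : ℝ) < (κ * r) ^ 2) (hYs : (adjPairs G Y : ℝ) < (κ * r) ^ 2) :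
    ∃ A ⊆ X, ∃ B ⊆ Y, κ * r ≤ #A ∧ κ * r ≤ #B ∧ ∀ a ∈ A, ∀ b ∈ B, G.Adj a b := by
  have hr0 : (0 : ℝ) < r := by exact_mod_cast hr
  have hrZ : (r : ℝ) ≤ #(X ∪ Y) := by
    rw [← hX]; exact_mod_cast card_le_card subset_union_left
  have hZr : (#(X ∪ Y) : ℝ) ≤ 2 * r := by
    have := card_union_le X Y
    rw [hX, hY] at this
    exact_mod_cast this.trans_eq (two_mul r).symm
  have hZ : δ / 4 * (#(X ∪ Y) : ℝ) ^ 2 ≤ adjPairs G (X ∪ Y) := by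
    have h1 : (#{p ∈ X ×ˢ Y | G.Adj p.1 p.2} : ℝ) ≤ adjPairs G (X ∪ Y) := by
      exact_mod_cast card_le_card (filter_subset_filter _
        (product_subset_product subset_union_left subset_union_right))
    have h2 : (#(X ∪ Y) : ℝ) ^ 2 ≤ (2 * r) ^ 2 := by gcongr
    nlinarith
  obtain ⟨A, hA, B, hB, hAc, hBc, hAB⟩ := hG (δ / 4) (by positivity) (X ∪ Y)
    (card_pos.1 (by exact_mod_cast hr0.trans_le hrZ)) hZ
  have hsplit : ∀ C ⊆ X ∪ Y, g (δ / 4) * #(X ∪ Y) ≤ #C →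
      κ * r ≤ #(C ∩ X) ∨ κ * r ≤ #(C ∩ Y) := by
    intro C hC hCc
    by_contra! hcon
    have h1 : #C ≤ #(C ∩ X) + #(C ∩ Y) := by
      refine le_trans (le_of_eq ?_) (card_union_le _ _)
      rw [← inter_union_distrib_left, inter_eq_left.2 hC]
    have h2 : (#C : ℝ) ≤ #(C ∩ X) + #(C ∩ Y) := by exact_mod_cast h1
    nlinarith [hcon.1, hcon.2]
  have hsparse : ∀ Z : Finset V, (adjPairs G Z : ℝ) < (κ * r) ^ 2 →
      ¬ (κ * r ≤ #(A ∩ Z) ∧ κ * r ≤ #(B ∩ Z)) := by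
    rintro Z hZ ⟨h1, h2⟩
    have h3 : (#(A ∩ Z) * #(B ∩ Z) : ℝ) ≤ adjPairs G Z := by
      exact_mod_cast card_mul_card_le_adjPairs G inter_subset_right inter_subset_right
        fun a ha b hb => hAB a (mem_inter.1 ha).1 b (mem_inter.1 hb).1
    have h4 : 0 < κ * r := by positivity
    nlinarith
  rcases hsplit A hA hAc with hAX | hAY <;> rcases hsplit B hB hBc with hBX | hBY
  · exact absurd ⟨hAX, hBX⟩ (hsparse X hXs)
  · exact ⟨A ∩ X, inter_subset_right, B ∩ Y, inter_subset_right, hAX, hBY,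
      fun a ha b hb => hAB a (mem_inter.1 ha).1 b (mem_inter.1 hb).1⟩
  · exact ⟨B ∩ X, inter_subset_right, A ∩ Y, inter_subset_right, hBX, hAY,
      fun b hb a ha => (hAB a (mem_inter.1 ha).1 b (mem_inter.1 hb).1).symm⟩
  · exact absurd ⟨hAY, hBY⟩ (hsparse Y hYs)

/-- In a box with sparse sides all of whose large sub-boxes have dense pairs of sides, any
prescribed set of pairs of sides can be made complete in a large sub-box. -/
lemma exists_complete_box {ι : Type*} {g : ℝ → ℝ} (hG : HasLinearBicliques G g) {δ κ : ℝ}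
    (hδ : 0 < δ) (hκ : 0 < κ) (hκ1 : κ ≤ 1) (hκg : κ ≤ g (δ / 4) / 2) {N r₀ : ℕ} (hr₀ : 1 ≤ r₀)
    {Z : ι → Finset V} (hZ : ∀ i, #(Z i) = r₀)
    (hsparse : ∀ i, (adjPairs G (Z i) : ℝ) < (κ ^ N * r₀) ^ 2)
    (hdense : ∀ W : ι → Finset V, (∀ i, W i ⊆ Z i) → (∀ i, κ ^ N * r₀ ≤ #(W i)) →
      ∀ i j, i ≠ j → δ * (#(W i) * #(W j)) ≤ #{p ∈ W i ×ˢ W j | G.Adj p.1 p.2})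
    (P : Finset (ι × ι)) : #P ≤ N → (∀ p ∈ P, p.1 ≠ p.2) →
      ∃ (r : ℕ) (W : ι → Finset V), 1 ≤ r ∧ κ ^ #P * r₀ ≤ r ∧ (∀ i, W i ⊆ Z i) ∧
        (∀ i, #(W i) = r) ∧ ∀ p ∈ P, ∀ x ∈ W p.1, ∀ y ∈ W p.2, G.Adj x y := by
  induction P using Finset.induction_on with
  | empty => exact fun _ _ => ⟨r₀, Z, hr₀, by simp, fun i => Subset.rfl, hZ, by simp⟩
  | insert p P hp ih =>
    intro hN hne
    rw [card_insert_of_notMem hp] at hN ⊢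
    obtain ⟨r, W, hr, hrr₀, hWZ, hWr, hWP⟩ :=
      ih (by omega) fun q hq => hne q (mem_insert_of_mem hq)
    have hr0 : (0 : ℝ) < r := by exact_mod_cast hr
    have hpow : κ ^ N * r₀ ≤ κ * r := by
      calc κ ^ N * r₀ ≤ κ ^ (#P + 1) * r₀ := by
            gcongr ?_ * _
            exact pow_le_pow_of_le_one hκ.le hκ1 hN
        _ = κ * (κ ^ #P * r₀) := by ring
        _ ≤ κ * r := by gcongr
    have hκr : κ * r ≤ r := mul_le_of_le_one_left hr0.le hκ1
    have hs : ∀ i, (adjPairs G (W i) : ℝ) < (κ * r) ^ 2 := fun i =>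
      calc (adjPairs G (W i) : ℝ) ≤ adjPairs G (Z i) := by
            exact_mod_cast adjPairs_mono G (hWZ i)
        _ < (κ ^ N * r₀) ^ 2 := hsparse i
        _ ≤ (κ * r) ^ 2 := by gcongr
    have hpne := hne p (mem_insert_self _ _)
    have hd := hdense W hWZ (fun i => by rw [hWr]; exact hpow.trans hκr) p.1 p.2 hpne
    rw [hWr, hWr, ← sq] at hd
    obtain ⟨A, hA, B, hB, hAc, hBc, hAB⟩ := exists_biclique_between G hG hδ hκ hκg hr
      (hWr p.1) (hWr p.2) hd (hs _) (hs _)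
    set Q := update (update W p.1 A) p.2 B with hQ
    have hQ1 : Q p.1 = A := by rw [hQ, update_of_ne hpne, update_self]
    have hQ2 : Q p.2 = B := by rw [hQ, update_self]
    have hQ3 : ∀ i, i ≠ p.1 → i ≠ p.2 → Q i = W i := fun i h1 h2 => by
      rw [hQ, update_of_ne h2, update_of_ne h1]
    have hQW : ∀ i, Q i ⊆ W i ∧ ⌈κ * r⌉₊ ≤ #(Q i) := fun i => by
      rw [Nat.ceil_le]
      by_cases h1 : i = p.1
      · subst h1; rw [hQ1]; exact ⟨hA, hAc⟩
      by_cases h2 : i = p.2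
      · subst h2; rw [hQ2]; exact ⟨hB, hBc⟩
      · rw [hQ3 i h1 h2, hWr]; exact ⟨Subset.rfl, hκr⟩
    choose R hRQ hR using fun i => exists_subset_card_eq (hQW i).2
    have hRW : ∀ i, R i ⊆ W i := fun i => (hRQ i).trans (hQW i).1
    refine ⟨⌈κ * r⌉₊, R, Nat.one_le_ceil_iff.2 (by positivity), ?_,
      fun i => (hRW i).trans (hWZ i), hR, ?_⟩
    · calc κ ^ (#P + 1) * r₀ = κ * (κ ^ #P * r₀) := by ring
        _ ≤ κ * r := by gcongr
        _ ≤ _ := Nat.le_ceil _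
    · intro q hq x hx y hy
      rcases mem_insert.1 hq with rfl | hq
      · exact hAB x (hQ1 ▸ hRQ _ hx) y (hQ2 ▸ hRQ _ hy)
      · exact hWP q hq x (hRW _ hx) y (hRW _ hy)

end Graphs

/-- A graph with the linear biclique property and a positive density of `k`-cliques contains a
complete `k`-partite graph with parts of linear size. -/
lemma exists_linear_blowup {g : ℝ → ℝ} (hg : ∀ ε, 0 < ε → 0 < g ε) (hg1 : ∀ ε, g ε ≤ 1) (k : ℕ)
    {ε : ℝ} (hε : 0 < ε) :
    ∃ h : ℝ, 0 < h ∧ ∀ {V : Type} [Fintype V] [Nonempty V] (G : SimpleGraph V),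
      HasLinearBicliques G g →
      ε * (Fintype.card V : ℝ) ^ k ≤
        #{s : Fin k → V | ∀ i j, i ≠ j → G.Adj (s i) (s j)} →
      ∃ U : Fin k → Finset V, (∀ i, h * Fintype.card V ≤ #(U i)) ∧
        ∀ i j, i ≠ j → ∀ x ∈ U i, ∀ y ∈ U j, G.Adj x y := by
  set κ : ℝ := g (ε / 2 / 4) / 2 with hκdef
  have hκ : 0 < κ := half_pos (hg _ (by positivity))
  have hκ1 : κ ≤ 1 := by have := hg1 (ε / 2 / 4); linarith
  set N := k * k with hNdef
  set d : ℝ := κ ^ (2 * N) / 2 with hd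
  have hd0 : 0 < d := by positivity
  set γ : ℝ := g d ^ k with hγdef
  have hγ : 0 < γ := pow_pos (hg d hd0) k
  have hγ1 : γ ≤ 1 := pow_le_one₀ (hg d hd0).le (hg1 d)
  have hκN1 : κ ^ N ≤ 1 := pow_le_one₀ hκ.le hκ1
  have hμ : 0 < κ ^ N * γ := by positivity
  obtain ⟨c, hc, hreg⟩ := exists_lower_regular_box (Fin k) hε hμ (mul_le_one₀ hκN1 hγ.le hγ1)
  refine ⟨κ ^ N * γ * c, by positivity, fun {V} _ _ G hG hcount => ?_⟩
  set S : Finset (Fin k → V) := {s | ∀ i j, i ≠ j → G.Adj (s i) (s j)} with hS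
  obtain ⟨t, U, ht, htc, hU, hUreg⟩ := hreg S (by rwa [Fintype.card_fin])
  have ht0 : (0 : ℝ) < t := by exact_mod_cast ht
  have hsize : κ ^ N * γ * c * Fintype.card V ≤ κ ^ N * (γ * t) := by
    calc _ = κ ^ N * γ * (c * Fintype.card V) := by ring
      _ ≤ κ ^ N * γ * t := by gcongr
      _ = _ := by ring
  by_cases hdense : ∃ i, ∀ Y ⊆ U i, γ * #(U i) ≤ #Y → d * (#Y : ℝ) ^ 2 ≤ adjPairs G Y
  · obtain ⟨i, hi⟩ := hdense
    obtain ⟨W, -, hWc, hW⟩ := exists_blowup_of_dense G hG hd0 (hg d hd0) (hg1 d) k (U i)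
      (card_pos.1 (by rw [hU]; exact ht)) hi
    refine ⟨W, fun j => hsize.trans ((mul_le_of_le_one_left (by positivity) hκN1).trans ?_), hW⟩
    have := hWc j
    rwa [hU] at this
  push Not at hdense
  choose Y hYU hYc hYs using hdense
  have hr₀ : 1 ≤ ⌈γ * t⌉₊ := Nat.one_le_ceil_iff.2 (by positivity)
  have hr₀' : (0 : ℝ) < (⌈γ * t⌉₊ : ℕ) := by exact_mod_cast hr₀
  choose Z hZY hZc hZs using fun i => exists_sparse_subset_card_eq G hd0.le (Y i)
    (Nat.ceil_le.2 (by have := hYc i; rwa [hU] at this)) (hYs i).le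
  obtain ⟨r, W, hr, hrr₀, -, hWr, hWP⟩ := exists_complete_box G hG (half_pos hε) hκ hκ1 le_rfl
    (N := N) hr₀ hZc
    (fun i => by
      refine (hZs i).trans_lt ?_
      rw [mul_pow, ← pow_mul, mul_comm N 2]
      gcongr
      exact half_lt_self (by positivity))
    (fun W hWZ hW i j hij => by
      have hWpos : ∀ i, (0 : ℝ) < #(W i) := fun i => lt_of_lt_of_le (by positivity) (hW i)
      have h1 := hUreg W (fun i => (hWZ i).trans ((hZY i).trans (hYU i))) fun i => by
        refine le_trans ?_ (hW i)
        rw [mul_assoc]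
        gcongr
        exact Nat.le_ceil _
      have h2 : (boxCount S W : ℝ) * (#(W i) * #(W j)) ≤
          #{p ∈ W i ×ˢ W j | G.Adj p.1 p.2} * ∏ l, (#(W l) : ℝ) := by
        exact_mod_cast boxCount_mul_le G S (fun s hs => (mem_filter.1 hs).2) W hij
      have h3 : (0 : ℝ) < ∏ l, (#(W l) : ℝ) := prod_pos fun l _ => hWpos l
      refine le_of_mul_le_mul_right ?_ h3
      calc _ = (ε / 2 * ∏ l, (#(W l) : ℝ)) * (#(W i) * #(W j)) := by ring
        _ ≤ boxCount S W * (#(W i) * #(W j)) :=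
          mul_le_mul_of_nonneg_right h1 (mul_pos (hWpos i) (hWpos j)).le
        _ ≤ _ := h2)
    (univ : Finset (Fin k)).offDiag (by rw [offDiag_card, card_univ, Fintype.card_fin]; omega)
    (fun p hp => (mem_offDiag.1 hp).2.2)
  refine ⟨W, fun i => ?_, fun i j hij => hWP (i, j) (by simpa using hij)⟩
  rw [hWr]
  calc _ ≤ κ ^ N * (γ * t) := hsize
    _ ≤ κ ^ #(univ : Finset (Fin k)).offDiag * (⌈γ * t⌉₊ : ℕ) := by
        gcongr ?_ * ?_
        · refine pow_le_pow_of_le_one hκ.le hκ1 ?_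
          rw [offDiag_card, card_univ, Fintype.card_fin]
          omega
        · exact Nat.le_ceil _
    _ ≤ r := hrr₀

lemma adjPairs_le_two_mul_card_edges {n : ℕ} (G : SimpleGraph (Fin n)) (X : Finset (Fin n))
    {m : ℕ} (e : Fin m ↪o Fin n) (he : Set.range e = X) :
    adjPairs G X ≤ 2 * (G.comap e).edgeSet.ncard := by
  rw [Set.ncard_eq_toFinset_card', ← SimpleGraph.edgeFinset,
    ← SimpleGraph.dart_card_eq_twice_card_edges, ← card_univ]
  refine (card_le_card ?_).trans
    (card_image_le (f := fun x : (G.comap e).Dart => (e x.fst, e x.snd)))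
  rintro ⟨a, b⟩ hab
  simp only [mem_filter, mem_product] at hab
  obtain ⟨⟨ha, hb⟩, hab⟩ := hab
  rw [← mem_coe, ← he] at ha hb
  obtain ⟨x, rfl⟩ := ha
  obtain ⟨y, rfl⟩ := hb
  exact mem_image.2 ⟨⟨(x, y), hab⟩, mem_univ _, rfl⟩

/-- Members of a hereditary class in which dense graphs have linear bicliques have linear
bicliques in all dense induced subgraphs. -/
lemma hasLinearBicliques_of_hereditary (𝒢 : (n : ℕ) → SimpleGraph (Fin n) → Prop)
    (hclosed : ∀ (n m : ℕ) (G : SimpleGraph (Fin n)) (H : SimpleGraph (Fin m))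
      (f : Fin m ↪ Fin n), 𝒢 n G → (∀ i j, H.Adj i j ↔ G.Adj (f i) (f j)) → 𝒢 m H)
    (f : ℝ → ℝ)
    (hB2 : ∀ ε : ℝ, 0 < ε → ∀ (n : ℕ) (G : SimpleGraph (Fin n)), 𝒢 n G →
      ε * (n.choose 2 : ℝ) ≤ (G.edgeSet.ncard : ℝ) →
      ContainsBlowup G 2 ⌊f ε * (n : ℝ)⌋₊)
    {n : ℕ} {G : SimpleGraph (Fin n)} (hG : 𝒢 n G) :
    HasLinearBicliques G fun ε => min (f ε / 2) 1 := by
  intro ε hε X hX hXe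
  have hm : (0 : ℝ) < #X := by exact_mod_cast card_pos.2 hX
  have hmin : min (f ε / 2) 1 * #X ≤ f ε / 2 * #X := by
    gcongr
    exact min_le_left _ _
  rcases lt_or_ge (f ε * #X) 1 with hlt | hge
  · have hpos : (0 : ℝ) < adjPairs G X := lt_of_lt_of_le (by positivity) hXe
    obtain ⟨p, hp⟩ := card_pos.1 (Nat.cast_pos.1 hpos)
    simp only [mem_filter, mem_product] at hp
    refine ⟨{p.1}, singleton_subset_iff.2 hp.1.1, {p.2}, singleton_subset_iff.2 hp.1.2, ?_, ?_,
      fun a ha b hb => ?_⟩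
    · rw [card_singleton, Nat.cast_one]; linarith
    · rw [card_singleton, Nat.cast_one]; linarith
    · rw [mem_singleton.1 ha, mem_singleton.1 hb]; exact hp.2
  · set e := X.orderEmbOfFin rfl with he
    have hedges : (adjPairs G X : ℝ) ≤ 2 * ((G.comap e).edgeSet.ncard : ℝ) := by
      exact_mod_cast adjPairs_le_two_mul_card_edges G X e (range_orderEmbOfFin X rfl)
    obtain ⟨A, hAc, -, hA⟩ := hB2 ε hε #X (G.comap e)
      (hclosed n #X G _ e.toEmbedding hG fun i j => Iff.rfl) (by
        rw [Nat.cast_choose_two]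
        nlinarith)
    have hfloor : min (f ε / 2) 1 * #X ≤ (⌊f ε * #X⌋₊ : ℕ) := by
      have h1 := Nat.lt_floor_add_one (f ε * #X)
      have h2 : (1 : ℝ) ≤ (⌊f ε * #X⌋₊ : ℕ) := by exact_mod_cast Nat.one_le_floor_iff _ |>.2 hge
      linarith
    have hsub : ∀ i, (A i).map e.toEmbedding ⊆ X := fun i x hx => by
      obtain ⟨y, -, rfl⟩ := mem_map.1 hx
      exact orderEmbOfFin_mem X rfl y
    refine ⟨(A 0).map e.toEmbedding, hsub 0, (A 1).map e.toEmbedding, hsub 1, ?_, ?_, ?_⟩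
    · rwa [card_map, hAc]
    · rwa [card_map, hAc]
    · intro a ha b hb
      obtain ⟨x, hx, rfl⟩ := mem_map.1 ha
      obtain ⟨y, hy, rfl⟩ := mem_map.1 hb
      exact hA 0 1 (by decide) x hx y hy

lemma cliqueCount_le_card_tuples {n : ℕ} (G : SimpleGraph (Fin n)) (k : ℕ) :
    cliqueCount G k ≤ #{s : Fin k → Fin n | ∀ i j, i ≠ j → G.Adj (s i) (s j)} := by
  rw [cliqueCount, Set.ncard_eq_toFinset_card']
  refine (card_le_card fun s hs => ?_).trans (card_image_le (f := fun s : Fin k → Fin n =>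
    univ.image s))
  obtain ⟨hcard, hcl⟩ := Set.mem_toFinset.1 hs
  refine mem_image.2 ⟨s.orderEmbOfFin hcard, mem_filter.2 ⟨mem_univ _, fun i j hij => ?_⟩, ?_⟩
  · exact hcl (orderEmbOfFin_mem s hcard i) (orderEmbOfFin_mem s hcard j)
      ((s.orderEmbOfFin hcard).injective.ne hij)
  · rw [← coe_inj, coe_image, coe_univ, Set.image_univ, range_orderEmbOfFin]

lemma containsBlowup_floor {n k : ℕ} (G : SimpleGraph (Fin n)) {a : ℝ} (ha : 0 ≤ a)
    {U : Fin k → Finset (Fin n)} (hU : ∀ i, a ≤ #(U i))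
    (hadj : ∀ i j, i ≠ j → ∀ x ∈ U i, ∀ y ∈ U j, G.Adj x y) : ContainsBlowup G k ⌊a⌋₊ := by
  choose A hAU hA using fun i => exists_subset_card_eq
    (show ⌊a⌋₊ ≤ #(U i) by exact_mod_cast (Nat.floor_le ha).trans (hU i))
  have hA' : ∀ i j, i ≠ j → ∀ x ∈ A i, ∀ y ∈ A j, G.Adj x y := fun i j hij x hx y hy =>
    hadj i j hij x (hAU i hx) y (hAU j hy)
  exact ⟨A, hA, fun i j hij => disjoint_left.2 fun x hx hy =>
    G.loopless.irrefl x (hA' i j hij x hx x hy), hA'⟩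

end LinearBlowups

theorem stmt_13 (𝒢 : (n : ℕ) → SimpleGraph (Fin n) → Prop)
    (hclosed : ∀ (n m : ℕ) (G : SimpleGraph (Fin n)) (H : SimpleGraph (Fin m))
      (f : Fin m ↪ Fin n), 𝒢 n G → (∀ i j, H.Adj i j ↔ G.Adj (f i) (f j)) → 𝒢 m H)
    (f : ℝ → ℝ) (hf : ∀ ε : ℝ, 0 < ε → 0 < f ε)
    (hB2 : ∀ ε : ℝ, 0 < ε → ∀ (n : ℕ) (G : SimpleGraph (Fin n)), 𝒢 n G →
      ε * (n.choose 2 : ℝ) ≤ (G.edgeSet.ncard : ℝ) →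
      ContainsBlowup G 2 ⌊f ε * (n : ℝ)⌋₊) :
    ∀ k : ℕ, 2 ≤ k → ∃ h : ℝ → ℝ, (∀ ε : ℝ, 0 < ε → 0 < h ε) ∧
      ∀ ε : ℝ, 0 < ε → ∀ (n : ℕ) (G : SimpleGraph (Fin n)), 𝒢 n G →
        ε * (n : ℝ) ^ k ≤ (cliqueCount G k : ℝ) →
        ContainsBlowup G k ⌊h ε * (n : ℝ)⌋₊ := by
  intro k _
  have hg : ∀ ε, 0 < ε → 0 < min (f ε / 2) 1 := fun ε hε => lt_min (half_pos (hf ε hε)) one_pos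
  choose! h hpos hh using fun (ε : ℝ) (hε : 0 < ε) =>
    exists_linear_blowup hg (fun _ => min_le_right _ _) k hε
  refine ⟨h, hpos, fun ε hε n G hG hcount => ?_⟩
  rcases Nat.eq_zero_or_pos n with rfl | hn
  · simp only [Nat.cast_zero, mul_zero, Nat.floor_zero]
    exact ⟨fun _ => ∅, by simp, by simp, by simp⟩
  have : Nonempty (Fin n) := ⟨⟨0, hn⟩⟩
  obtain ⟨U, hU, hadj⟩ := hh ε hε G
    (hasLinearBicliques_of_hereditary 𝒢 hclosed f hB2 hG) (by
      rw [Fintype.card_fin]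
      exact hcount.trans (by exact_mod_cast cliqueCount_le_card_tuples G k))
  rw [Fintype.card_fin] at hU
  exact containsBlowup_floor G (mul_nonneg (hpos ε hε).le (Nat.cast_nonneg n)) hU hadj
end

section
/- For every integer d ≥ 2 and every real c > 0 there exist c' > 0 and n_0 such that the following holds for all n ≥ n_0. If G is an n-vertex graph with VC-dimension at most d and at least c·C(n,2) edges, then G contains K_2[⌈c'·n^{1/(d+1)}⌉]. -/
/-- `S` is shattered by the neighborhoods of `G`: for every `B ⊆ S` there is a
vertex `v` with `N_G(v) ∩ S = B`. -/
def GraphShatters {V : Type*} (G : SimpleGraph V) (S : Finset V) : Prop :=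
  ∀ B ⊆ S, ∃ v : V, ∀ x ∈ S, (G.Adj v x ↔ x ∈ B)

/-- The VC-dimension of the neighborhood set system of `G` is at most `d`. -/
def VCDimLE {V : Type*} (G : SimpleGraph V) (d : ℕ) : Prop :=
  ∀ S : Finset V, GraphShatters G S → S.card ≤ d

open Finset in
/-- If `f ≤ M` on `s`, the elements with `f ≥ τ` carry all of `∑ f` up to `#s * τ`. -/
lemma sum_le_card_filter_mul_add {α : Type*} (s : Finset α) (f : α → ℝ) {M τ : ℝ} (hτ : 0 ≤ τ)
    (hM : ∀ x ∈ s, f x ≤ M) :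
    ∑ x ∈ s, f x ≤ (#{x ∈ s | τ ≤ f x} : ℝ) * M + (#s : ℝ) * τ := by
  rw [← sum_filter_add_sum_filter_not s (fun x => τ ≤ f x)]
  refine add_le_add ?_ ?_
  · rw [← nsmul_eq_mul]
    exact sum_le_card_nsmul _ _ _ fun x hx => hM x (mem_filter.1 hx).1
  · calc ∑ x ∈ s with ¬ τ ≤ f x, f x ≤ #{x ∈ s | ¬ τ ≤ f x} • τ :=
          sum_le_card_nsmul _ _ _ fun x hx => (not_le.1 (mem_filter.1 hx).2).le
      _ ≤ (#s : ℝ) * τ := by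
          rw [nsmul_eq_mul]
          gcongr
          exact filter_subset _ _

open Finset in
/-- A nonempty set of size `m` has at most `(d + 1) m ^ d` subsets of size at most `d`. -/
lemma card_filter_powerset_card_le {α : Type*} (A : Finset α) (hA : A.Nonempty) (d : ℕ) :
    #{S ∈ A.powerset | #S ≤ d} ≤ (d + 1) * #A ^ d := by
  classical
  have hsub : {S ∈ A.powerset | #S ≤ d} ⊆ (range (d + 1)).biUnion fun k => A.powersetCard k := by
    intro S hS
    simp only [mem_filter, mem_powerset] at hS
    simp only [mem_biUnion, mem_range, mem_powersetCard]
    exact ⟨#S, by omega, hS.1, rfl⟩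
  refine (card_le_card hsub).trans ((card_biUnion_le_card_mul _ _ (#A ^ d) ?_).trans ?_)
  · intro k hk
    rw [card_powersetCard]
    exact (Nat.choose_le_pow _ _).trans
      (Nat.pow_le_pow_right hA.card_pos (by simpa [Nat.lt_succ_iff] using hk))
  · rw [card_range]

open Finset in
/-- Sauer–Shelah for neighborhoods: a graph of VC-dimension at most `d` has at most
`(d + 1) m ^ d` distinct neighborhood traces on a set of `m` vertices. -/
lemma VCDimLE.card_image_neighborFinset_inter_le {V : Type*} [Fintype V] [DecidableEq V]
    {G : SimpleGraph V} [DecidableRel G.Adj] {d : ℕ} (hG : VCDimLE G d)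
    (A : Finset V) (hA : A.Nonempty) :
    #(univ.image fun v => G.neighborFinset v ∩ A) ≤ (d + 1) * #A ^ d := by
  refine (card_le_card_shatterer _).trans
    ((card_le_card ?_).trans (card_filter_powerset_card_le A hA d))
  intro S hS
  rw [mem_shatterer] at hS
  have hSA : S ⊆ A := by
    obtain ⟨u, hu, hSu⟩ := hS (Subset.refl S)
    obtain ⟨v, -, rfl⟩ := mem_image.1 hu
    exact (inter_eq_left.1 hSu).trans inter_subset_right
  refine mem_filter.2 ⟨mem_powerset.2 hSA, hG S fun B hB => ?_⟩
  obtain ⟨u, hu, rfl⟩ := hS hB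
  obtain ⟨v, -, rfl⟩ := mem_image.1 hu
  exact ⟨v, fun x hx => by simp [hx, hSA hx]⟩

open Finset in
/-- Two completely joined vertex sets of size at least `t` give a copy of `K_2[t]`. -/
lemma containsBlowup_two_of_adj {V : Type*} {G : SimpleGraph V} {t : ℕ} {X Y : Finset V}
    (hX : t ≤ #X) (hY : t ≤ #Y) (h : ∀ x ∈ X, ∀ y ∈ Y, G.Adj x y) : ContainsBlowup G 2 t := by
  obtain ⟨X', hX', hXt⟩ := exists_subset_card_eq hX
  obtain ⟨Y', hY', hYt⟩ := exists_subset_card_eq hY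
  have h' : ∀ x ∈ X', ∀ y ∈ Y', G.Adj x y := fun x hx y hy => h x (hX' hx) y (hY' hy)
  have hdisj : Disjoint X' Y' :=
    disjoint_left.2 fun x hx hy => G.irrefl (h' x hx x hy)
  refine ⟨![X', Y'], ?_, ?_, ?_⟩
  · simp [Fin.forall_fin_two, hXt, hYt]
  · simp [Fin.forall_fin_two, hdisj, hdisj.symm]
  · simpa [Fin.forall_fin_two] using ⟨h', fun x hx y hy => (h' y hy x hx).symm⟩

open Finset in
/-- In a graph on `n` vertices with degree sum at least `c n (n - 1)`, there are at least
`c (n - 1) / 2` vertices of degree at least `c (n - 1) / 2`. -/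
lemma le_card_filter_degree {V : Type*} [Fintype V] {G : SimpleGraph V} [DecidableRel G.Adj]
    {c : ℝ} (hc : 0 ≤ c) {n : ℕ} (hn : 1 ≤ n) (hV : Fintype.card V = n)
    (h : c * (n * (n - 1)) ≤ ∑ v, (G.degree v : ℝ)) :
    c * (n - 1) / 2 ≤ (#{v | c * (n - 1) / 2 ≤ (G.degree v : ℝ)} : ℝ) := by
  have hn' : (1 : ℝ) ≤ n := by exact_mod_cast hn
  have key := sum_le_card_filter_mul_add univ (fun v => (G.degree v : ℝ)) (M := n)
    (τ := c * (n - 1) / 2) (by have := mul_nonneg hc (sub_nonneg.2 hn'); linarith)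
    (fun v _ => by rw [← hV]; exact_mod_cast (G.degree_lt_card_verts v).le)
  rw [card_univ, hV] at key
  refine le_of_mul_le_mul_right ?_ (lt_of_lt_of_le one_pos hn')
  linarith

open Finset in
/-- If every vertex of `A` has degree at least `δ n`, then at least `δ n / 2` vertices have at
least `δ #A / 2` neighbors in `A`. -/
lemma le_card_filter_card_neighborFinset_inter {V : Type*} [Fintype V] [DecidableEq V]
    {G : SimpleGraph V} [DecidableRel G.Adj] {δ : ℝ} (hδ : 0 ≤ δ) {A : Finset V}
    (hA : A.Nonempty) (h : ∀ a ∈ A, δ * Fintype.card V ≤ G.degree a) :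
    δ * Fintype.card V / 2 ≤ (#{v | δ * #A / 2 ≤ (#(G.neighborFinset v ∩ A) : ℝ)} : ℝ) := by
  have hA' : (0 : ℝ) < #A := by exact_mod_cast hA.card_pos
  have hsum : ∑ v, #(G.neighborFinset v ∩ A) = ∑ a ∈ A, G.degree a := by
    have := sum_card_bipartiteAbove_eq_sum_card_bipartiteBelow (s := univ) (t := A) G.Adj
    convert this using 2 with v _ a _
    · congr 1
      ext x
      simp [bipartiteAbove, and_comm]
    · rw [← G.card_neighborFinset_eq_degree]
      congr 1
      ext x
      simp [bipartiteBelow, G.adj_comm]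
  have hlow : (#A : ℝ) * (δ * Fintype.card V) ≤ ∑ v, (#(G.neighborFinset v ∩ A) : ℝ) := by
    rw [← Nat.cast_sum, hsum, Nat.cast_sum, ← nsmul_eq_mul]
    exact card_nsmul_le_sum _ _ _ h
  have key := sum_le_card_filter_mul_add univ (fun v => (#(G.neighborFinset v ∩ A) : ℝ))
    (M := #A) (τ := δ * #A / 2) (by positivity)
    (fun v _ => by exact_mod_cast card_le_card inter_subset_right)
  rw [card_univ] at key
  refine le_of_mul_le_mul_right ?_ hA'
  linarith

open Finset in
/-- A graph of VC-dimension at most `d` in which all vertices of `A` have degree at least `δ n`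
contains `K_2[⌈y⌉]` for every `y` up to `δ #A / 2` and `δ n / (2 (d + 1) #A ^ d)`. -/
lemma VCDimLE.containsBlowup_two {V : Type*} [Fintype V] [DecidableEq V]
    {G : SimpleGraph V} [DecidableRel G.Adj] {d : ℕ} (hG : VCDimLE G d) {δ : ℝ} (hδ : 0 ≤ δ)
    {A : Finset V} (hA : A.Nonempty) (h : ∀ a ∈ A, δ * Fintype.card V ≤ G.degree a)
    {y : ℝ} (h₁ : y ≤ δ * #A / 2)
    (h₂ : ((d + 1) * #A ^ d : ℝ) * y ≤ δ * Fintype.card V / 2) :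
    ContainsBlowup G 2 ⌈y⌉₊ := by
  rcases le_or_gt y 0 with hy | hy
  · rw [Nat.ceil_eq_zero.2 hy]
    exact containsBlowup_two_of_adj (X := ∅) (Y := ∅) le_rfl le_rfl (by simp)
  set W : Finset V := {v | δ * #A / 2 ≤ (#(G.neighborFinset v ∩ A) : ℝ)} with hW
  have hWcard := le_card_filter_card_neighborFinset_inter hδ hA h
  have hpos : (0 : ℝ) < (d + 1) * #A ^ d := by
    have : (0 : ℝ) < #A := by exact_mod_cast hA.card_pos
    positivity
  have hWne : W.Nonempty := by
    rw [← card_pos, ← Nat.cast_pos (α := ℝ)]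
    exact (mul_pos hpos hy).trans_le (h₂.trans hWcard)
  set T := W.image fun v => G.neighborFinset v ∩ A with hT
  have hTcard : (#T : ℝ) ≤ (d + 1) * #A ^ d := by
    exact_mod_cast (card_le_card (image_subset_image (subset_univ W))).trans
      (hG.card_image_neighborFinset_inter_le A hA)
  obtain ⟨B, hB, hBy⟩ := exists_le_card_fiber_of_nsmul_le_card_of_maps_to
    (s := W) (t := T) (f := fun v => G.neighborFinset v ∩ A) (b := y)
    (fun v hv => mem_image_of_mem _ hv) (hWne.image _) (by
      rw [nsmul_eq_mul]
      exact (mul_le_mul_of_nonneg_right hTcard hy.le).trans (h₂.trans hWcard))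
  obtain ⟨w, hw, hwB⟩ := mem_image.1 hB
  refine containsBlowup_two_of_adj (X := {v ∈ W | G.neighborFinset v ∩ A = B}) (Y := B)
    (Nat.ceil_le.2 hBy) (Nat.ceil_le.2 (h₁.trans ?_)) ?_
  · rw [← hwB]
    exact (mem_filter.1 hw).2
  · intro x hx b hb
    rw [← (mem_filter.1 hx).2] at hb
    simpa using (mem_inter.1 hb).1

theorem stmt_17 (d : ℕ) (hd : 2 ≤ d) (c : ℝ) (hc : 0 < c) :
    ∃ c' : ℝ, 0 < c' ∧ ∃ n₀ : ℕ, ∀ n : ℕ, n₀ ≤ n →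
      ∀ G : SimpleGraph (Fin n), VCDimLE G d →
        c * (n.choose 2 : ℝ) ≤ (G.edgeSet.ncard : ℝ) →
        ContainsBlowup G 2 ⌈c' * (n : ℝ) ^ ((1 : ℝ) / ((d : ℝ) + 1))⌉₊ := by
  classical
  refine ⟨c / (8 * (d + 1) * 2 ^ d), by positivity, ?_⟩
  have hlim : Filter.Tendsto (fun n : ℕ => (n : ℝ) ^ ((1 : ℝ) / ((d : ℝ) + 1)))
      Filter.atTop Filter.atTop :=
    (tendsto_rpow_atTop (by positivity)).comp tendsto_natCast_atTop_atTop
  obtain ⟨n₀, hn₀⟩ := Filter.eventually_atTop.1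
    ((hlim.eventually_ge_atTop (max 1 (8 / c))).and (Filter.eventually_ge_atTop 2))
  refine ⟨n₀, fun n hn G hG hedges => ?_⟩
  obtain ⟨hx, hn2⟩ := hn₀ n hn
  set x : ℝ := (n : ℝ) ^ ((1 : ℝ) / ((d : ℝ) + 1)) with hxdef
  have hx1 : 1 ≤ x := (le_max_left _ _).trans hx
  have hxc : 8 ≤ c * x := by
    have := (le_max_right _ _).trans hx
    rwa [div_le_iff₀' hc] at this
  have hxn : x ^ (d + 1) = n := by
    rw [hxdef, ← Real.rpow_natCast, ← Real.rpow_mul (Nat.cast_nonneg n)]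
    push_cast
    rw [one_div_mul_cancel (by positivity), Real.rpow_one]
  have hn2' : (2 : ℝ) ≤ n := by exact_mod_cast hn2
  have hdeg : c * (n * (n - 1)) ≤ ∑ v, (G.degree v : ℝ) := by
    rw [← Nat.cast_sum, G.sum_degrees_eq_twice_card_edges]
    rw [Set.ncard_eq_toFinset_card', Nat.cast_choose_two] at hedges
    push_cast
    change _ ≤ (G.edgeFinset.card : ℝ) at hedges
    linarith
  have hH := le_card_filter_degree hc.le (by omega) (Fintype.card_fin n) hdeg
  have hcn : c * n / 4 ≤ c * (n - 1) / 2 := by nlinarith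
  have hm2 : (⌈x⌉₊ : ℝ) ≤ 2 * x := by linarith [Nat.ceil_lt_add_one (zero_le_one.trans hx1)]
  have hxsq : x * x ≤ n := by
    rw [← hxn, ← sq]
    exact pow_le_pow_right₀ hx1 (by omega)
  have hmH : (⌈x⌉₊ : ℝ) ≤ c * n / 4 := by nlinarith
  obtain ⟨A, hAH, hAcard⟩ := Finset.exists_subset_card_eq
    (Nat.cast_le.1 (hmH.trans (hcn.trans hH)))
  have hxm : x ≤ (⌈x⌉₊ : ℝ) := Nat.le_ceil x
  have hA : A.Nonempty := by
    rw [← Finset.card_pos, hAcard]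
    exact Nat.ceil_pos.2 (by linarith)
  refine hG.containsBlowup_two (δ := c / 4) (by positivity) hA ?_ ?_ ?_
  · intro a ha
    rw [Fintype.card_fin]
    linarith [(Finset.mem_filter.1 (hAH ha)).2]
  · rw [hAcard]
    have hden : (1 : ℝ) ≤ (d + 1) * 2 ^ d :=
      one_le_mul_of_one_le_of_one_le (by simp) (one_le_pow₀ one_le_two)
    calc c / (8 * (d + 1) * 2 ^ d) * x ≤ c / 8 * x := by
          gcongr
          linarith
      _ ≤ c / 4 * ⌈x⌉₊ / 2 := by nlinarith
  · rw [hAcard, Fintype.card_fin, ← hxn]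
    calc ((d + 1) * (⌈x⌉₊ : ℝ) ^ d) * (c / (8 * (d + 1) * 2 ^ d) * x)
        ≤ ((d + 1) * (2 * x) ^ d) * (c / (8 * (d + 1) * 2 ^ d) * x) := by gcongr
      _ = c / 4 * x ^ (d + 1) / 2 := by
          rw [mul_pow]
          field_simp
          ring
end

section
/- For every integer k ≥ 2 and all reals η, ε > 0 there exist γ > 0 and n_0 such that the following holds for all n ≥ n_0. If G is an ordered graph on n vertices containing at least η·n^k copies of K_k, then there exist vertex sets A_1, A_2, ..., A_k with A_1 < A_2 < ... < A_k (every vertex of A_i precedes every vertex of A_j whenever i < j), |A_i| ≥ γ·n for all i, and such that for all 1 ≤ i < j ≤ k the pair (A_i, A_j) is ε-regular in G with edge density d(A_i, A_j) ≥ η/2. -/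
/-- The edge density of the pair `(X, Y)`: the number of adjacent pairs
`(x, y) ∈ X × Y` divided by `|X|·|Y|`. -/
noncomputable def pairDensity {V : Type*} (G : SimpleGraph V) (X Y : Finset V) : ℝ :=
  (Set.ncard {p : V × V | p.1 ∈ X ∧ p.2 ∈ Y ∧ G.Adj p.1 p.2} : ℝ) /
    ((X.card : ℝ) * (Y.card : ℝ))

/-- The pair `(X, Y)` is `ε`-regular in `G`. -/
def EpsRegularPair {V : Type*} (G : SimpleGraph V) (ε : ℝ) (X Y : Finset V) : Prop :=
  ∀ A ⊆ X, ∀ B ⊆ Y, ε * (X.card : ℝ) ≤ (A.card : ℝ) → ε * (Y.card : ℝ) ≤ (B.card : ℝ) →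
    |pairDensity G A B - pairDensity G X Y| ≤ ε

open Finset

lemma pairDensity_eq_edgeDensity {V : Type*} [DecidableEq V] (G : SimpleGraph V)
    [DecidableRel G.Adj] (X Y : Finset V) :
    pairDensity G X Y = (G.edgeDensity X Y : ℝ) := by
  have h : {p : V × V | p.1 ∈ X ∧ p.2 ∈ Y ∧ G.Adj p.1 p.2} = ↑(G.interedges X Y) := by
    ext ⟨x, y⟩
    simp [SimpleGraph.mem_interedges_iff]
  rw [pairDensity, h, Set.ncard_coe_finset, SimpleGraph.edgeDensity_def]
  push_cast
  rfl

/-- Large subsets of a uniform pair form a regular pair. -/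
lemma SimpleGraph.IsUniform.epsRegularPair_of_subset {V : Type*} [DecidableEq V]
    {G : SimpleGraph V} [DecidableRel G.Adj] {δ ε α : ℝ} {S T X Y : Finset V}
    (h : G.IsUniform δ S T) (hε : 0 ≤ ε) (hδα : δ ≤ α) (hδε : δ ≤ ε * α) (hδ : 2 * δ ≤ ε)
    (hXS : X ⊆ S) (hYT : Y ⊆ T) (hX : α * #S ≤ #X) (hY : α * #T ≤ #Y) :
    EpsRegularPair G ε X Y := by
  have small {S X : Finset V} (hX : α * #S ≤ #X) : (#S : ℝ) * δ ≤ #X := by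
    nlinarith [(#S).cast_nonneg (α := ℝ)]
  have smaller {S X A : Finset V} (hX : α * #S ≤ #X) (hA : ε * #X ≤ (#A : ℝ)) :
      (#S : ℝ) * δ ≤ #A := by
    nlinarith [(#S).cast_nonneg (α := ℝ)]
  intro A hA B hB hAX hBY
  have h₁ := h (hA.trans hXS) (hB.trans hYT) (smaller hX hAX) (smaller hY hBY)
  have h₂ := h hXS hYT (small hX) (small hY)
  rw [pairDensity_eq_edgeDensity, pairDensity_eq_edgeDensity]
  rw [abs_lt] at h₁ h₂
  rw [abs_le]
  constructor <;> linarith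

/-- If there are more `k`-cliques than `#B * |V| ^ (k - 2)`, one of them avoids all pairs
in `B`. -/
lemma exists_clique_avoiding_s18 {V : Type*} [Fintype V] [DecidableEq V] (G : SimpleGraph V)
    {k : ℕ} (hk : 2 ≤ k) (B : Finset (V × V))
    (h : #B * Fintype.card V ^ (k - 2) < cliqueCount G k) :
    ∃ s : Finset V, #s = k ∧ G.IsClique (s : Set V) ∧
      ∀ x ∈ s, ∀ y ∈ s, x ≠ y → (x, y) ∉ B := by
  by_contra! hcon
  refine h.not_ge ?_
  let F : Finset (Finset V) :=
    (B ×ˢ powersetCard (k - 2) univ).image fun p ↦ insert p.1.1 (insert p.1.2 p.2)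
  have hsub : {s : Finset V | #s = k ∧ G.IsClique (s : Set V)} ⊆ ↑F := by
    rintro s ⟨hs, hclique⟩
    obtain ⟨x, hx, y, hy, hxy, hB⟩ := hcon s hs hclique
    have hy' : y ∈ s.erase x := mem_erase.2 ⟨hxy.symm, hy⟩
    simp only [F, coe_image, Set.mem_image, mem_coe, mem_product, mem_powersetCard]
    refine ⟨((x, y), (s.erase x).erase y), ⟨hB, subset_univ _, ?_⟩, ?_⟩
    · rw [card_erase_of_mem hy', card_erase_of_mem hx]
      omega
    · simp only
      rw [insert_erase hy', insert_erase hx]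
  calc cliqueCount G k ≤ #F := by
        rw [cliqueCount, ← Set.ncard_coe_finset]
        exact Set.ncard_le_ncard hsub
    _ ≤ #(B ×ˢ powersetCard (k - 2) (univ : Finset V)) := card_image_le
    _ ≤ #B * Fintype.card V ^ (k - 2) := by
        rw [card_product, card_powersetCard, card_univ]
        gcongr
        exact Nat.choose_le_pow _ _

/-- For any colouring of the vertices, few edges run between colour classes of low density. -/
lemma card_adj_sparse_le {V ι : Type*} [Fintype V] [DecidableEq V] [Fintype ι] [DecidableEq ι]
    (G : SimpleGraph V) [DecidableRel G.Adj] (c : V → ι) {β : ℝ} (hβ : 0 ≤ β) :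
    (#{p : V × V | G.Adj p.1 p.2 ∧
        (G.edgeDensity {v | c v = c p.1} {v | c v = c p.2} : ℝ) < β} : ℝ) ≤
      β * Fintype.card V ^ 2 := by
  set E : Finset (V × V) := {p : V × V | G.Adj p.1 p.2 ∧
        (G.edgeDensity {v | c v = c p.1} {v | c v = c p.2} : ℝ) < β} with hE
  have hsum : ∑ a : ι, (#{v | c v = a} : ℝ) = Fintype.card V := by
    rw [← card_univ (α := V)]
    exact_mod_cast (card_eq_sum_card_fiberwise (f := c) (s := univ) (t := univ) (by simp)).symm
  have hfib (q : ι × ι) : (#{p ∈ E | (c p.1, c p.2) = q} : ℝ) ≤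
      β * (#{v | c v = q.1} * #{v | c v = q.2}) := by
    obtain ⟨a, b⟩ := q
    by_cases hd : (G.edgeDensity {v | c v = a} {v | c v = b} : ℝ) < β
    · have hsub : {p ∈ E | (c p.1, c p.2) = (a, b)} ⊆
          G.interedges {v | c v = a} {v | c v = b} := by
        rintro ⟨x, y⟩ hp
        simp only [hE, mem_filter, mem_univ, true_and, Prod.mk.injEq] at hp
        simp [SimpleGraph.mem_interedges_iff, hp]
      refine (Nat.cast_le.2 (card_le_card hsub)).trans ?_
      rw [SimpleGraph.edgeDensity_def] at hd
      push_cast at hd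
      rcases (mul_nonneg (Nat.cast_nonneg _) (Nat.cast_nonneg _) :
        (0 : ℝ) ≤ #{v | c v = a} * #{v | c v = b}).eq_or_lt with h0 | h0
      · have := G.card_interedges_le_mul {v | c v = a} {v | c v = b}
        simp only
        rw [← h0, mul_zero, h0]
        exact_mod_cast this
      · exact ((div_lt_iff₀ h0).1 hd).le
    · have : {p ∈ E | (c p.1, c p.2) = (a, b)} = ∅ := by
        refine filter_eq_empty_iff.2 ?_
        rintro ⟨x, y⟩ hp hab
        simp only [hE, mem_filter, mem_univ, true_and, Prod.mk.injEq] at hp hab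
        exact hd (by simpa [hab] using hp.2)
      rw [this]
      simp only [card_empty, Nat.cast_zero]
      positivity
  calc (#E : ℝ) = ∑ q : ι × ι, (#{p ∈ E | (c p.1, c p.2) = q} : ℝ) := by
        exact_mod_cast card_eq_sum_card_fiberwise (f := fun p : V × V ↦ (c p.1, c p.2))
          (s := E) (t := univ) (by simp)
    _ ≤ ∑ q : ι × ι, β * (#{v | c v = q.1} * #{v | c v = q.2}) := sum_le_sum fun q _ ↦ hfib q
    _ = β * Fintype.card V ^ 2 := by
        rw [← mul_sum, Fintype.sum_prod_type]
        simp only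
        rw [← Fintype.sum_mul_sum, hsum, sq]

/-- Few vertices lie in a small cell of the common refinement of a partition and a colouring. -/
lemma card_small_cell_le {V ι : Type*} [Fintype V] [DecidableEq V] [Fintype ι] [DecidableEq ι]
    (P : Finpartition (univ : Finset V)) (f : V → ι) {α : ℝ} (hα : 0 ≤ α) :
    (#{x : V | (#{y ∈ P.part x | f y = f x} : ℝ) < α * #(P.part x)} : ℝ) ≤
      α * Fintype.card ι * Fintype.card V := by
  set S : Finset V := {x : V | (#{y ∈ P.part x | f y = f x} : ℝ) < α * #(P.part x)} with hS
  have hfib : ∀ q ∈ P.parts ×ˢ (univ : Finset ι),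
      (#{x ∈ S | (P.part x, f x) = q} : ℝ) ≤ α * #q.1 := by
    rintro ⟨A, i⟩ -
    obtain h | ⟨x, hx⟩ := {x ∈ S | (P.part x, f x) = (A, i)}.eq_empty_or_nonempty
    · rw [h]
      simp only [card_empty, Nat.cast_zero]
      positivity
    · simp only [hS, mem_filter, mem_univ, true_and, Prod.mk.injEq] at hx
      obtain ⟨hx, rfl, rfl⟩ := hx
      refine le_trans (Nat.cast_le.2 (card_le_card fun y hy ↦ ?_)) hx.le
      simp only [mem_filter, Prod.mk.injEq] at hy ⊢
      exact ⟨hy.2.1 ▸ P.mem_part (mem_univ y), hy.2.2⟩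
  have hparts : ∑ A ∈ P.parts, (#A : ℝ) = Fintype.card V := by
    exact_mod_cast P.sum_card_parts
  calc (#S : ℝ) = ∑ q ∈ P.parts ×ˢ (univ : Finset ι), (#{x ∈ S | (P.part x, f x) = q} : ℝ) := by
        exact_mod_cast card_eq_sum_card_fiberwise (f := fun x : V ↦ (P.part x, f x))
          (s := S) (t := P.parts ×ˢ univ) (by intro x _; simp [P.part_mem])
    _ ≤ ∑ q ∈ P.parts ×ˢ (univ : Finset ι), α * #q.1 := sum_le_sum hfib
    _ = α * Fintype.card ι * Fintype.card V := by
        rw [sum_product]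
        simp only [sum_const, card_univ, nsmul_eq_mul]
        rw [← mul_sum, ← mul_sum, hparts]
        ring

/-- `Fin n` can be cut into `m` intervals of nearly equal length. -/
lemma exists_monotone_card_fiber_le (n : ℕ) {m : ℕ} (hm : 0 < m) :
    ∃ f : Fin n → Fin m, Monotone f ∧ ∀ i, #{x | f x = i} ≤ n / m + 1 := by
  have hn : n < m * (n / m + 1) := Nat.lt_mul_div_succ n hm
  have hL0 : 0 < n / m + 1 := Nat.succ_pos _
  generalize n / m + 1 = L at hn hL0 ⊢
  have hlt (x : Fin n) : (x : ℕ) / L < m := by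
    rw [Nat.div_lt_iff_lt_mul hL0]
    exact x.2.trans hn
  refine ⟨fun x ↦ ⟨x / L, hlt x⟩, fun x y hxy ↦ ?_, fun i ↦ ?_⟩
  · exact Nat.div_le_div_right (c := L) hxy
  · have : #(Finset.Ico ((i : ℕ) * L) (i * L + L)) = L := by simp
    refine (card_le_card_of_injOn (fun x : Fin n ↦ (x : ℕ)) (fun x hx ↦ ?_)
      Fin.val_injective.injOn).trans this.le
    simp only [coe_filter, mem_univ, true_and, Set.mem_ofPred_eq, Fin.ext_iff] at hx
    rw [Nat.div_eq_iff hL0] at hx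
    simp only [coe_Ico, Set.mem_Ico]
    omega

lemma card_same_color_le {V ι : Type*} [Fintype V] [DecidableEq V] [DecidableEq ι] (f : V → ι)
    {L : ℕ} (hL : ∀ i, #{x | f x = i} ≤ L) :
    #{p : V × V | f p.1 = f p.2} ≤ Fintype.card V * L := by
  rw [card_eq_sum_card_fiberwise (f := Prod.snd) (t := univ) (by simp), ← card_univ,
    ← smul_eq_mul]
  refine sum_le_card_nsmul _ _ _ fun y _ ↦ (card_le_card_of_injOn Prod.fst ?_ ?_).trans (hL (f y))
  · rintro ⟨a, b⟩ h
    simp only [mem_filter, mem_univ, true_and, coe_filter, Set.mem_ofPred_eq] at h ⊢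
    rw [h.1, h.2]
  · rintro ⟨a, b⟩ h ⟨a', b'⟩ h' haa'
    simp only [mem_filter, mem_univ, true_and, coe_filter, Set.mem_ofPred_eq] at h h' haa'
    simp [haa', h.2, h'.2]

/-- The parts of a bounded equipartition have linear size. -/
lemma Finpartition.IsEquipartition.le_card_part {V : Type*} [Fintype V] [DecidableEq V]
    {P : Finpartition (univ : Finset V)} (hP : P.IsEquipartition) {M : ℕ} (hM : #P.parts ≤ M)
    {A : Finset V} (hA : A ∈ P.parts) : (Fintype.card V : ℝ) / (2 * M) ≤ #A := by
  have h₁ := hP.average_le_card_part hA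
  have hpos : 0 < #P.parts := card_pos.2 ⟨A, hA⟩
  have hA1 : 1 ≤ #A := (P.nonempty_of_mem_parts hA).card_pos
  rw [div_le_iff₀ (by have := hpos.trans_le hM; positivity)]
  have h₂ : Fintype.card V < #P.parts * (#A + 1) := by
    refine (Nat.lt_mul_div_succ _ hpos).trans_le ?_
    gcongr
    simpa using h₁
  have h₃ : Fintype.card V ≤ #A * (2 * M) := by nlinarith
  exact_mod_cast h₃

/-- If vertices `x`, `y` are joined by an edge that is not exceptional, then their cells in the
common refinement of a uniform equipartition and a colouring form a dense pair of large subsets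
of a uniform pair of parts. This bounds the number of exceptional pairs. -/
lemma exists_exceptional_pairs {V ι : Type*} [Fintype V] [Nonempty V] [DecidableEq V] [Fintype ι]
    [DecidableEq ι] (G : SimpleGraph V) [DecidableRel G.Adj] (P : Finpartition (univ : Finset V))
    (f : V → ι) {δ τ α β : ℝ} {L : ℕ} (hP : P.IsEquipartition) (hPu : P.IsUniform G δ)
    (hδ : 0 < δ) (hτ : 0 < τ) (hτP : 4 / τ ≤ #P.parts) (hα : 0 ≤ α) (hβ : 0 ≤ β)
    (hL : ∀ i, #{x | f x = i} ≤ L) :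
    ∃ B : Finset (V × V),
      (#B : ℝ) ≤ Fintype.card V * L +
        (2 * (α * Fintype.card ι) + 4 * δ + τ / 2 + β) * Fintype.card V ^ 2 ∧
      ∀ x y, G.Adj x y → (x, y) ∉ B →
        f x ≠ f y ∧ α * #(P.part x) ≤ #{v ∈ P.part x | f v = f x} ∧
        α * #(P.part y) ≤ #{v ∈ P.part y | f v = f y} ∧
        G.IsUniform δ (P.part x) (P.part y) ∧
        β ≤ G.edgeDensity {v ∈ P.part x | f v = f x} {v ∈ P.part y | f v = f y} := by
  let S : Finset V := {x : V | (#{y ∈ P.part x | f y = f x} : ℝ) < α * #(P.part x)}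
  let B₁ : Finset (V × V) := {p | f p.1 = f p.2}
  let B₂ : Finset (V × V) := S ×ˢ univ ∪ univ ×ˢ S
  let B₃ : Finset (V × V) := (P.nonUniforms G δ).biUnion fun (U, W) ↦ U ×ˢ W
  let B₄ : Finset (V × V) := P.parts.biUnion offDiag
  let c : V → Finset V × ι := fun v ↦ (P.part v, f v)
  let B₅ : Finset (V × V) := {p : V × V | G.Adj p.1 p.2 ∧
        (G.edgeDensity {v | c v = c p.1} {v | c v = c p.2} : ℝ) < β}
  have hc (x : V) : ({v | c v = c x} : Finset V) = {v ∈ P.part x | f v = f x} := by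
    ext v
    simp [c, P.mem_part_iff_part_eq_part (mem_univ v) (mem_univ x)]
  refine ⟨B₁ ∪ B₂ ∪ B₃ ∪ B₄ ∪ B₅, ?_, fun x y hxy hB ↦ ?_⟩
  · have h₁ : (#B₁ : ℝ) ≤ Fintype.card V * L := by exact_mod_cast card_same_color_le f hL
    have hS : (#S : ℝ) ≤ α * Fintype.card ι * Fintype.card V := card_small_cell_le P f hα
    have h₂ : (#B₂ : ℝ) ≤ 2 * (α * Fintype.card ι) * Fintype.card V ^ 2 := by
      have : #B₂ ≤ #S * Fintype.card V + Fintype.card V * #S := by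
        simpa only [card_product, card_univ] using
          card_union_le (S ×ˢ (univ : Finset V)) (univ ×ˢ S)
      have : (#B₂ : ℝ) ≤ #S * Fintype.card V + Fintype.card V * #S := by exact_mod_cast this
      nlinarith [(Fintype.card V).cast_nonneg (α := ℝ)]
    have h₃ : (#B₃ : ℝ) < 4 * δ * #(univ : Finset V) ^ 2 :=
      hP.sum_nonUniforms_lt univ_nonempty hδ hPu
    have h₄ : (#B₄ : ℝ) ≤ τ / 2 * #(univ : Finset V) ^ 2 := hP.card_biUnion_offDiag_le hτ hτP
    have h₅ : (#B₅ : ℝ) ≤ β * Fintype.card V ^ 2 := card_adj_sparse_le G c hβ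
    rw [card_univ] at h₃ h₄
    have hU : #(B₁ ∪ B₂ ∪ B₃ ∪ B₄ ∪ B₅) ≤ #B₁ + #B₂ + #B₃ + #B₄ + #B₅ := by
      have u₁ := card_union_le (B₁ ∪ B₂ ∪ B₃ ∪ B₄) B₅
      have u₂ := card_union_le (B₁ ∪ B₂ ∪ B₃) B₄
      have u₃ := card_union_le (B₁ ∪ B₂) B₃
      have u₄ := card_union_le B₁ B₂
      omega
    have hU : (#(B₁ ∪ B₂ ∪ B₃ ∪ B₄ ∪ B₅) : ℝ) ≤ #B₁ + #B₂ + #B₃ + #B₄ + #B₅ := by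
      exact_mod_cast hU
    linarith
  · simp only [mem_union, not_or] at hB
    obtain ⟨⟨⟨⟨n₁, n₂⟩, n₃⟩, n₄⟩, n₅⟩ := hB
    have hx : P.part x ∈ P.parts := P.part_mem.2 (mem_univ x)
    have hy : P.part y ∈ P.parts := P.part_mem.2 (mem_univ y)
    have hxx : x ∈ P.part x := P.mem_part (mem_univ x)
    have hyy : y ∈ P.part y := P.mem_part (mem_univ y)
    simp only [B₂, mem_union, mem_product, mem_univ, and_true, true_and, not_or, S, mem_filter,
      not_lt] at n₂
    refine ⟨by simpa [B₁] using n₁, n₂.1, n₂.2, ?_, ?_⟩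
    · by_contra hu
      refine n₃ (mem_biUnion.2 ⟨(P.part x, P.part y), ?_, mem_product.2 ⟨hxx, hyy⟩⟩)
      rw [Finpartition.mk_mem_nonUniforms]
      refine ⟨hx, hy, fun he ↦ n₄ (mem_biUnion.2 ⟨P.part x, hx, ?_⟩), hu⟩
      exact mem_offDiag.2 ⟨hxx, he ▸ hyy, hxy.ne⟩
    · rw [← hc, ← hc]
      simpa [B₅, hxy] using n₅

theorem stmt_18 (k : ℕ) (hk : 2 ≤ k) (η ε : ℝ) (hη : 0 < η) (hε : 0 < ε) :
    ∃ γ : ℝ, 0 < γ ∧ ∃ n₀ : ℕ, ∀ n : ℕ, n₀ ≤ n →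
      ∀ G : SimpleGraph (Fin n),
        η * (n : ℝ) ^ k ≤ (cliqueCount G k : ℝ) →
        ∃ A : Fin k → Finset (Fin n),
          (∀ i j : Fin k, i < j → ∀ x ∈ A i, ∀ y ∈ A j, x < y) ∧
          (∀ i, γ * (n : ℝ) ≤ ((A i).card : ℝ)) ∧
          (∀ i j : Fin k, i < j →
            EpsRegularPair G ε (A i) (A j) ∧ η / 2 ≤ pairDensity G (A i) (A j)) := by
  classical
  obtain ⟨m, hm⟩ := exists_nat_ge (16 / η)
  have hm0 : (0 : ℝ) < m := (by positivity : (0 : ℝ) < 16 / η).trans_le hm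
  have hmη : 16 ≤ m * η := (div_le_iff₀ hη).1 hm
  obtain ⟨l, hl⟩ := exists_nat_ge (4 / (η / 8))
  obtain ⟨α, hα0, hα1, hαm⟩ : ∃ α : ℝ, 0 < α ∧ α ≤ 1 ∧ α * m ≤ η / 16 := by
    refine ⟨min 1 (η / 16 / m), by positivity, min_le_left _ _, ?_⟩
    exact (le_div_iff₀ hm0).1 (min_le_right _ _)
  obtain ⟨δ, hδ0, hδα, hδε, hδη⟩ :
      ∃ δ : ℝ, 0 < δ ∧ δ ≤ α ∧ δ ≤ ε * α / 2 ∧ δ ≤ η / 32 := by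
    refine ⟨min α (min (ε * α / 2) (η / 32)), by positivity, min_le_left _ _, ?_, ?_⟩
    · exact (min_le_right _ _).trans (min_le_left _ _)
    · exact (min_le_right _ _).trans (min_le_right _ _)
  set M := SzemerediRegularity.bound δ l
  have hM0 : 0 < M := SzemerediRegularity.bound_pos _ _
  refine ⟨α / (2 * M), by positivity, l + m + 1, fun n hn G hG ↦ ?_⟩
  have hn0 : (0 : ℝ) < n := by exact_mod_cast (by omega : 0 < n)
  have : Nonempty (Fin n) := ⟨⟨0, by omega⟩⟩
  obtain ⟨P, hP, hlP, hPM, hPu⟩ :=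
    szemeredi_regularity G hδ0 (l := l) (by rw [Fintype.card_fin]; omega)
  obtain ⟨f, hf, hfL⟩ := exists_monotone_card_fiber_le n (m := m) (by exact_mod_cast hm0)
  obtain ⟨B, hBcard, hB⟩ := exists_exceptional_pairs G P f (τ := η / 8) (α := α) (β := η / 2)
    hP hPu hδ0 (by positivity) (hl.trans (by exact_mod_cast hlP)) hα0.le (by positivity) hfL
  simp only [Fintype.card_fin] at hBcard
  have hL : ((n / m + 1 : ℕ) : ℝ) ≤ η / 8 * n := by
    have h₁ : ((n / m : ℕ) : ℝ) ≤ n / m := Nat.cast_div_le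
    have h₂ : (1 : ℝ) ≤ n / m := by
      rw [one_le_div hm0]
      exact_mod_cast (by omega : m ≤ n)
    have h₃ : (n : ℝ) / m ≤ η / 16 * n := by
      rw [div_le_iff₀ hm0]
      nlinarith
    push_cast
    linarith
  have hBlt : (#B : ℝ) < η * n ^ 2 := by
    have h₁ : (n : ℝ) * (n / m + 1 : ℕ) ≤ η / 8 * n ^ 2 := by nlinarith
    have h₂ : (2 * (α * m) + 4 * δ + η / 8 / 2 + η / 2) * (n : ℝ) ^ 2 ≤
        (13 / 16 * η) * n ^ 2 := by
      gcongr
      linarith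
    have h₃ : 0 < η * (n : ℝ) ^ 2 := by positivity
    linarith
  obtain ⟨s, hsk, hs, hsB⟩ := exists_clique_avoiding_s18 G hk B <| by
    have : (#B : ℝ) * n ^ (k - 2) < cliqueCount G k := by
      refine lt_of_lt_of_le ?_ hG
      calc (#B : ℝ) * n ^ (k - 2) < η * n ^ 2 * n ^ (k - 2) := by gcongr
        _ = η * n ^ k := by rw [mul_assoc, ← pow_add, Nat.add_sub_cancel' hk]
    rw [Fintype.card_fin]
    exact_mod_cast this
  let v := s.orderEmbOfFin hsk
  have hv (i) : v i ∈ s := s.orderEmbOfFin_mem hsk i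
  have hgood {i j : Fin k} (hij : i ≠ j) := by
    have hne : v i ≠ v j := v.injective.ne hij
    exact hB (v i) (v j) (hs (hv i) (hv j) hne) (hsB _ (hv i) _ (hv j) hne)
  refine ⟨fun i ↦ {x ∈ P.part (v i) | f x = f (v i)}, fun i j hij x hx y hy ↦ ?_, fun i ↦ ?_,
    fun i j hij ↦ ?_⟩
  · refine hf.reflect_lt ?_
    rw [(mem_filter.1 hx).2, (mem_filter.1 hy).2]
    exact (hf (v.monotone hij.le)).lt_of_ne (hgood hij.ne).1
  · have : Nontrivial (Fin k) := Fin.nontrivial_iff_two_le.2 hk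
    obtain ⟨j, hj⟩ := exists_ne i
    refine le_trans ?_ (hgood hj.symm).2.1
    have := hP.le_card_part hPM (P.part_mem.2 (mem_univ (v i)))
    rw [Fintype.card_fin] at this
    calc α / (2 * M) * n = α * (n / (2 * M)) := by ring
      _ ≤ _ := by gcongr
  · obtain ⟨-, hi, hj, hu, hd⟩ := hgood hij.ne
    refine ⟨hu.epsRegularPair_of_subset hε.le hδα ?_ ?_ (filter_subset _ _) (filter_subset _ _)
      hi hj, ?_⟩
    · nlinarith [mul_pos hε hα0]
    · nlinarith
    · rwa [pairDensity_eq_edgeDensity]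
end
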